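/- arXiv:0905.2245 — 3 statements merged into one kernel-verified Lean document; each statement's English description precedes it below -/
import Mathlib

section
/- Let R be a basic left Harada algebra with idempotent data {e_{ij}} and modules P_{ij} := rad^{j-1}(e_{i1}R) as below. Then the set { P_{ik}/P_{il} : 1 ≤ i ≤ m, 1 ≤ k < l ≤ n_i } is a complete set of representatives of the isomorphism classes of indecomposable finitely generated right R-modules whose projective dimension is exactly one; that is, each P_{ik}/P_{il} is indecomposable of projective dimension one, they are pairwise non-isomorphic, and every indecomposable finitely generated right R-module of projective dimension one is isomorphic to some P_{ik}/P_{il}. -/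
/-!
Common setup.  `K` is an algebraically closed field and `R` a finite-dimensional associative
unital `K`-algebra.  Right `R`-modules are formalized as modules over the opposite ring `Rᵐᵒᵖ`
(so that `MulOpposite.op r • x = x * r`).
-/

open MulOpposite

/-- The right ideal `xR` of a ring `R`, as a submodule of `R` over `Rᵐᵒᵖ`. -/
def rightIdeal (R : Type) [Ring R] (x : R) : Submodule Rᵐᵒᵖ R :=
  Submodule.span Rᵐᵒᵖ {x}

/-- The Jacobson radical of a submodule `N` (the intersection of the maximal submodules of the
module `N`), viewed as a submodule of the ambient module.  Iterating this operation gives the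
iterated radicals `rad^k`. -/
def radSub {A M : Type} [Ring A] [AddCommGroup M] [Module A M] (N : Submodule A M) :
    Submodule A M :=
  Submodule.map N.subtype (sInf {P : Submodule A ↥N | IsCoatom P})

/-- A module is indecomposable if it is nonzero and admits no nontrivial direct sum
decomposition. -/
def IsIndecomposableMod (A M : Type) [Ring A] [AddCommGroup M] [Module A M] : Prop :=
  Nontrivial M ∧ ∀ N N' : Submodule A M, IsCompl N N' → N = ⊥ ∨ N' = ⊥

/-- A module has projective dimension at most one iff it admits a surjection from a projective
module with projective kernel. -/
def PdLeOne (A : Type) [Ring A] (M : Type) [AddCommGroup M] [Module A M] : Prop :=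
  ∃ (P : ModuleCat.{0} A) (f : ↥P →ₗ[A] M),
    Module.Projective A ↥P ∧ Function.Surjective f ∧
      Module.Projective A ↥(LinearMap.ker f)

/-- `Ext¹_A(M,N) = 0`, expressed by the splitting of every short exact sequence
`0 → N → E → M → 0`. -/
def Ext1Zero (A : Type) [Ring A] (M N : Type) [AddCommGroup M] [Module A M]
    [AddCommGroup N] [Module A N] : Prop :=
  ∀ (E : ModuleCat.{0} A) (i : N →ₗ[A] ↥E) (p : ↥E →ₗ[A] M),
    Function.Injective i → Function.Surjective p → LinearMap.range i = LinearMap.ker p →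
    ∃ s : M →ₗ[A] ↥E, p.comp s = LinearMap.id

/-- `X ∈ add T` : `X` is a direct summand of a finite direct sum of copies of `T`. -/
def InAdd (A : Type) [Ring A] (T X : Type) [AddCommGroup T] [Module A T]
    [AddCommGroup X] [Module A X] : Prop :=
  ∃ (k : ℕ) (f : X →ₗ[A] (Fin k → T)) (g : (Fin k → T) →ₗ[A] X),
    g.comp f = LinearMap.id

/-- `T` is a (finitely generated) tilting right `R`-module: projective dimension at most one,
no self-extensions, and there is a short exact sequence `0 → R → T₀ → T₁ → 0` with
`T₀, T₁ ∈ add T`. -/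
def IsTiltingRight (R : Type) [Ring R] (T : Type) [AddCommGroup T] [Module Rᵐᵒᵖ T] : Prop :=
  Module.Finite Rᵐᵒᵖ T ∧ PdLeOne Rᵐᵒᵖ T ∧ Ext1Zero Rᵐᵒᵖ T T ∧
    ∃ (T₀ T₁ : ModuleCat.{0} Rᵐᵒᵖ) (f : R →ₗ[Rᵐᵒᵖ] ↥T₀) (g : ↥T₀ →ₗ[Rᵐᵒᵖ] ↥T₁),
      InAdd Rᵐᵒᵖ T ↥T₀ ∧ InAdd Rᵐᵒᵖ T ↥T₁ ∧
        Function.Injective f ∧ Function.Surjective g ∧ LinearMap.range f = LinearMap.ker g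

/-- `T` is basic: it is an (internal) direct sum of pairwise non-isomorphic indecomposable
submodules. -/
def IsBasicMod (A : Type) [Ring A] (T : Type) [AddCommGroup T] [Module A T] : Prop :=
  ∃ (k : ℕ) (N : Fin k → Submodule A T),
    DirectSum.IsInternal N ∧ (∀ a, IsIndecomposableMod A ↥(N a)) ∧
      ∀ a b, a ≠ b → IsEmpty (↥(N a) ≃ₗ[A] ↥(N b))

/-- The setoid identifying isomorphic modules (among those with property `P`). -/
def isoSetoid (A : Type) [Ring A] (P : ModuleCat.{0} A → Prop) :
    Setoid {M : ModuleCat.{0} A // P M} where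
  r M N := Nonempty (↥M.1 ≃ₗ[A] ↥N.1)
  iseqv := ⟨fun M => ⟨LinearEquiv.refl A ↥M.1⟩, fun ⟨e⟩ => ⟨e.symm⟩,
    fun ⟨e⟩ ⟨f⟩ => ⟨e.trans f⟩⟩

/-- The data exhibiting a ring `R` as a basic left Harada algebra:
a complete set `{e i j}` of orthogonal primitive idempotents with pairwise non-isomorphic
right ideals `(e i j)R` (`R` is basic), such that each `(e i 0)R` is an injective right
module, and `(e i j)R ≅ rad ((e i (j-1))R)` for `j ≥ 1`.  (Indices are shifted by one from
the paper: the paper's `e_{ij}` is `e i (j-1)` here.) -/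
structure HaradaData (R : Type) [Ring R] : Type where
  m : ℕ
  hm : 0 < m
  n : Fin m → ℕ
  hn : ∀ i, 0 < n i
  e : (i : Fin m) → Fin (n i) → R
  idem : ∀ i j, IsIdempotentElem (e i j)
  orth : ∀ p q : Σ i : Fin m, Fin (n i), p ≠ q → e p.1 p.2 * e q.1 q.2 = 0
  sum_eq_one : ∑ p : Σ i : Fin m, Fin (n i), e p.1 p.2 = 1
  indec : ∀ i j, IsIndecomposableMod Rᵐᵒᵖ ↥(rightIdeal R (e i j))
  basic : ∀ p q : Σ i : Fin m, Fin (n i), p ≠ q →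
    IsEmpty (↥(rightIdeal R (e p.1 p.2)) ≃ₗ[Rᵐᵒᵖ] ↥(rightIdeal R (e q.1 q.2)))
  inj : ∀ i, Module.Injective Rᵐᵒᵖ ↥(rightIdeal R (e i ⟨0, hn i⟩))
  rad_iso : ∀ (i : Fin m) (j : Fin (n i)), 0 < j.val →
    Nonempty (↥(rightIdeal R (e i j)) ≃ₗ[Rᵐᵒᵖ]
      ↥(radSub (rightIdeal R (e i ⟨j.val - 1, Nat.lt_of_le_of_lt (Nat.sub_le j.val 1) j.isLt⟩))))

variable {R : Type} [Ring R]

/-- `H.P i j = rad^j ((e i 0)R)`; this is the paper's `P_{i,j+1} = rad^j (e_{i1}R)`,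
a submodule of `R`. -/
def HaradaData.P (H : HaradaData R) (i : Fin H.m) (j : Fin (H.n i)) : Submodule Rᵐᵒᵖ R :=
  radSub^[j.val] (rightIdeal R (H.e i ⟨0, H.hn i⟩))

/-- The quotient module `P_{ik}/P_{il}` (for `l ≥ k` we have `H.P i l ≤ H.P i k`). -/
abbrev HaradaData.Quot (H : HaradaData R) (i : Fin H.m) (k l : Fin (H.n i)) : Type :=
  ↥(H.P i k) ⧸ Submodule.comap (H.P i k).subtype (H.P i l)

/-- The last index (the paper's `n_i`) in `Fin (H.n i)`. -/
def HaradaData.last (H : HaradaData R) (i : Fin H.m) : Fin (H.n i) :=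
  ⟨H.n i - 1, Nat.sub_lt (H.hn i) one_pos⟩

/-- The right ideal `I = ⊕_{i,j} rad^{n_i - j + 1}(e_{ij}R)` of the paper. -/
def HaradaData.I (H : HaradaData R) : Submodule Rᵐᵒᵖ R :=
  ⨆ p : Σ i : Fin H.m, Fin (H.n i),
    radSub^[H.n p.1 - p.2.val] (rightIdeal R (H.e p.1 p.2))

/-- The submodule `T·I` of a right module `T`, for `I` a right ideal of `R`. -/
def smulSub (I : Submodule Rᵐᵒᵖ R) (T : Type) [AddCommGroup T] [Module Rᵐᵒᵖ T] :
    Submodule Rᵐᵒᵖ T :=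
  Submodule.span Rᵐᵒᵖ {x : T | ∃ (t : T) (r : R), r ∈ I ∧ x = op r • t}


section GeneralLemmas

variable {A M N : Type} [Ring A] [AddCommGroup M] [Module A M] [AddCommGroup N] [Module A N]

/-- Fitting's lemma for indecomposable modules. -/
theorem fitting_indec [IsArtinian A M] [IsNoetherian A M] (h : IsIndecomposableMod A M)
    (φ : M →ₗ[A] M) : (∃ n : ℕ, φ ^ n = 0) ∨ Function.Bijective φ := by
  obtain ⟨k, hk⟩ := Filter.eventually_atTop.mp (φ.eventually_isCompl_ker_pow_range_pow)
  have hc := hk (k + 1) (by omega)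
  rcases h.2 _ _ hc with h1 | h1
  · right
    have h2 : LinearMap.range (φ ^ (k+1)) = ⊤ := by
      have := hc.sup_eq_top
      rwa [h1, bot_sup_eq] at this
    constructor
    · rw [← LinearMap.ker_eq_bot, eq_bot_iff, ← h1]
      intro x hx
      rw [LinearMap.mem_ker] at hx ⊢
      rw [pow_succ, Module.End.mul_apply, hx, map_zero]
    · rw [← LinearMap.range_eq_top, eq_top_iff, ← h2]
      rintro _ ⟨x, rfl⟩
      rw [pow_succ', Module.End.mul_apply]
      exact ⟨_, rfl⟩
  · left
    exact ⟨k+1, LinearMap.range_eq_bot.mp h1⟩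

/-- A retract of an indecomposable module. -/
theorem retract_bij (h : IsIndecomposableMod A M) [Nontrivial N] (a : N →ₗ[A] M) (b : M →ₗ[A] N)
    (hab : ∀ x, b (a x) = x) : Function.Bijective a ∧ Function.Bijective b := by
  have hc : IsCompl (LinearMap.range a) (LinearMap.ker b) := by
    constructor
    · rw [Submodule.disjoint_def]
      rintro _ ⟨x, rfl⟩ hx
      rw [LinearMap.mem_ker, hab] at hx
      rw [hx, map_zero]
    · rw [codisjoint_iff, eq_top_iff]
      intro x _
      rw [Submodule.mem_sup]
      refine ⟨a (b x), ⟨_, rfl⟩, x - a (b x), ?_, by abel⟩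
      rw [LinearMap.mem_ker, map_sub, hab, sub_self]
  have hb : Function.Bijective b := by
    refine ⟨?_, fun x => ⟨a x, hab x⟩⟩
    rcases h.2 _ _ hc with h1 | h1
    · exfalso
      obtain ⟨x, hx⟩ := exists_ne (0 : N)
      apply hx
      have : a x ∈ LinearMap.range a := ⟨x, rfl⟩
      rw [h1, Submodule.mem_bot] at this
      rw [← hab x, this, map_zero]
    · exact LinearMap.ker_eq_bot.mp h1
  refine ⟨⟨fun x y hxy => ?_, fun y => ⟨b y, ?_⟩⟩, hb⟩
  · rw [← hab x, hxy, hab]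
  · apply hb.1
    rw [hab]

theorem surj_proj_bij (h : IsIndecomposableMod A M) [Nontrivial N] [Module.Projective A N]
    (b : M →ₗ[A] N) (hb : Function.Surjective b) : Function.Bijective b := by
  obtain ⟨a, ha⟩ := Module.projective_lifting_property b LinearMap.id hb
  exact (retract_bij h a b (fun x => LinearMap.congr_fun ha x)).2

theorem indec_equiv (e : M ≃ₗ[A] N) (h : IsIndecomposableMod A M) : IsIndecomposableMod A N := by
  obtain ⟨h0, h1⟩ := h
  refine ⟨e.symm.toEquiv.nontrivial, fun X Y hXY => ?_⟩
  have := h1 _ _ ((Submodule.orderIsoMapComap e.symm).isCompl hXY)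
  simpa using this

/-- An indecomposable projective module of finite length is local. -/
theorem local_exists [IsArtinian A M] [IsNoetherian A M] [Module.Projective A M]
    (h : IsIndecomposableMod A M) :
    ∃ D : Submodule A M, D ≠ ⊤ ∧ ∀ L : Submodule A M, L ≠ ⊤ → L ≤ D := by
  have := h.1
  obtain ⟨D, hD⟩ := IsCoatomic.exists_coatom (Submodule A M)
  refine ⟨D, hD.1, fun L hL => ?_⟩
  by_contra hLD
  have hsup : D ⊔ L = ⊤ := hD.2 _ (by
    refine lt_of_le_of_ne le_sup_left fun he => hLD ?_
    rw [he]; exact le_sup_right)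
  have hs : Function.Surjective (D.mkQ.comp L.subtype) := by
    intro y
    obtain ⟨x, rfl⟩ := D.mkQ_surjective y
    have hx : x ∈ D ⊔ L := hsup ▸ Submodule.mem_top
    obtain ⟨d, hd, l, hl, rfl⟩ := Submodule.mem_sup.mp hx
    refine ⟨⟨l, hl⟩, ?_⟩
    simp [hd]
  obtain ⟨g, hg⟩ := Module.projective_lifting_property _ D.mkQ hs
  set φ : M →ₗ[A] M := L.subtype.comp g with hφ
  have h1 : ∀ x, D.mkQ (φ x) = D.mkQ x := fun x => LinearMap.congr_fun hg x
  rcases fitting_indec h φ with ⟨n, hn⟩ | hb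
  · have h2 : ∀ (n : ℕ) x, D.mkQ ((φ ^ n) x) = D.mkQ x := by
      intro n
      induction n with
      | zero => intro x; simp
      | succ k ih => intro x; rw [pow_succ', Module.End.mul_apply, h1, ih]
    apply hD.1
    rw [eq_top_iff]
    intro x _
    have := h2 n x
    rw [hn, LinearMap.zero_apply, map_zero] at this
    simpa using this.symm
  · apply hL
    rw [eq_top_iff]
    intro x _
    obtain ⟨y, rfl⟩ := hb.2 x
    exact (g y).2

theorem radSub_le (N : Submodule A M) : radSub N ≤ N := by
  rintro _ ⟨x, _, rfl⟩
  exact x.2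

theorem radSub_spec (N : Submodule A M) [IsArtinian A N] [IsNoetherian A N] [Module.Projective A N]
    (h : IsIndecomposableMod A N) :
    radSub N < N ∧ ∀ L ≤ N, L ≠ N → L ≤ radSub N := by
  obtain ⟨D, hD, hD'⟩ := local_exists h
  have hset : {P : Submodule A N | IsCoatom P} = {D} := by
    ext P
    simp only [Set.mem_ofPred_eq, Set.mem_singleton_iff]
    constructor
    · intro hP
      by_contra hne
      exact hD (hP.2 D (lt_of_le_of_ne (hD' P hP.1) hne))
    · rintro rfl
      refine ⟨hD, fun L hL => ?_⟩
      by_contra hne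
      exact absurd (hD' L hne) (not_le_of_gt hL)
  have hr : radSub N = D.map N.subtype := by
    unfold radSub
    rw [hset, sInf_singleton]
  refine ⟨lt_of_le_of_ne (radSub_le N) ?_, ?_⟩
  · intro he
    apply hD
    rw [eq_top_iff]
    intro x _
    have : (x : M) ∈ D.map N.subtype := by rw [← hr, he]; exact x.2
    obtain ⟨y, hy, hxy⟩ := this
    have : y = x := Subtype.ext hxy
    exact this ▸ hy
  · intro L hLN hne
    rw [hr]
    have h2 : L.comap N.subtype ≠ ⊤ := by
      intro ht
      apply hne
      apply le_antisymm hLN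
      intro x hx
      have : (⟨x, hx⟩ : N) ∈ L.comap N.subtype := by rw [ht]; trivial
      exact this
    intro x hx
    exact ⟨⟨x, hLN hx⟩, hD' _ h2 hx, rfl⟩

theorem radSub_equiv {X : Submodule A M} {Y : Submodule A N} (e : X ≃ₗ[A] Y) :
    ∃ e' : radSub X ≃ₗ[A] radSub Y, ∀ x : radSub X,
      (e' x : N) = e ⟨x, radSub_le X x.2⟩ := by
  set I := sInf {P : Submodule A X | IsCoatom P} with hI
  set J := sInf {P : Submodule A Y | IsCoatom P} with hJ
  have hIJ : I.map (e : X →ₗ[A] Y) = J := by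
    have h1 : I.map (e : X →ₗ[A] Y) = Submodule.orderIsoMapComap e I := rfl
    rw [h1, hI, hJ, OrderIso.map_sInf_eq_sInf_symm_preimage]
    congr 1
    ext P
    simp only [Set.mem_preimage, Set.mem_ofPred_eq]
    exact OrderIso.isCoatom_iff _ _
  have hmem : ∀ x : X, (x : M) ∈ radSub X ↔ (e x : N) ∈ radSub Y := by
    intro x
    have h1 : (x : M) ∈ radSub X ↔ x ∈ I := by
      constructor
      · rintro ⟨y, hy, hxy⟩
        have : y = x := Subtype.ext hxy
        exact this ▸ hy
      · intro hx; exact ⟨x, hx, rfl⟩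
    have h2 : (e x : N) ∈ radSub Y ↔ e x ∈ J := by
      constructor
      · rintro ⟨y, hy, hxy⟩
        have : y = e x := Subtype.ext hxy
        exact this ▸ hy
      · intro hx; exact ⟨_, hx, rfl⟩
    rw [h1, h2, ← hIJ]
    constructor
    · intro hx; exact ⟨x, hx, rfl⟩
    · rintro ⟨y, hy, hxy⟩
      exact (e.injective hxy) ▸ hy
  let f : radSub X →ₗ[A] radSub Y :=
    LinearMap.codRestrict _ (Y.subtype.comp ((e : X →ₗ[A] Y).comp
      (Submodule.inclusion (radSub_le X)))) (fun x => (hmem ⟨x, radSub_le X x.2⟩).mp x.2)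
  refine ⟨LinearEquiv.ofBijective f ⟨?_, ?_⟩, fun x => rfl⟩
  · intro x y hxy
    have h1 : (f x : N) = f y := by rw [hxy]
    have h2 : e ⟨x, radSub_le X x.2⟩ = e ⟨y, radSub_le X y.2⟩ := Subtype.ext h1
    have h3 := e.injective h2
    exact Subtype.ext (congrArg (fun z : X => (z : M)) h3)
  · intro y
    let z : X := e.symm ⟨y, radSub_le Y y.2⟩
    have hz : e z = ⟨y, radSub_le Y y.2⟩ := e.apply_symm_apply _
    have hz' : (z : M) ∈ radSub X := by
      rw [hmem, hz]; exact y.2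
    refine ⟨⟨z, hz'⟩, ?_⟩
    apply Subtype.ext
    change (e z : N) = y
    rw [hz]

theorem radSub_iter_le (X : Submodule A M) (j : ℕ) : radSub^[j] X ≤ X := by
  induction j with
  | zero => exact le_rfl
  | succ j ih => rw [Function.iterate_succ_apply']; exact (radSub_le _).trans ih

theorem radSub_iter_equiv {X : Submodule A M} {Y : Submodule A N} (e : X ≃ₗ[A] Y) (j : ℕ) :
    ∃ e' : ↥(radSub^[j] X) ≃ₗ[A] ↥(radSub^[j] Y), ∀ x : ↥(radSub^[j] X),
      (e' x : N) = e ⟨x, radSub_iter_le X j x.2⟩ := by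
  induction j generalizing X Y with
  | zero => exact ⟨e, fun x => rfl⟩
  | succ j ih =>
    obtain ⟨e1, h1⟩ := radSub_equiv e
    obtain ⟨e2, h2⟩ := ih e1
    exact ⟨e2, fun x => (h2 x).trans (h1 _)⟩

/-- Indecomposable injectives of finite length are uniform. -/
theorem uniform_of_injective [IsArtinian A M] [IsNoetherian A M] (hi : Module.Injective A M)
    (h : IsIndecomposableMod A M) (X Y : Submodule A M) (hXY : X ⊓ Y = ⊥) : X = ⊥ ∨ Y = ⊥ := by
  have hinj : Function.Injective (X.subtype.coprod Y.subtype) := by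
    rw [← LinearMap.ker_eq_bot, eq_bot_iff]
    rintro ⟨x, y⟩ hxy
    simp only [LinearMap.mem_ker, LinearMap.coprod_apply, Submodule.subtype_apply] at hxy
    have hx : (x : M) ∈ X ⊓ Y := by
      refine ⟨x.2, ?_⟩
      rw [eq_neg_of_add_eq_zero_left hxy]
      exact Y.neg_mem y.2
    rw [hXY, Submodule.mem_bot] at hx
    rw [hx, zero_add] at hxy
    simp only [Submodule.mem_bot, Prod.mk_eq_zero]
    exact ⟨Subtype.ext hx, Subtype.ext hxy⟩
  obtain ⟨φ, hφ⟩ := hi.out _ hinj (X.subtype.comp (LinearMap.fst A X Y))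
  have h1 : ∀ x ∈ X, φ x = x := by
    intro x hx
    simpa using hφ (⟨x, hx⟩, 0)
  have h2 : ∀ y ∈ Y, φ y = 0 := by
    intro y hy
    simpa using hφ (0, ⟨y, hy⟩)
  rcases fitting_indec h φ with ⟨n, hn⟩ | hb
  · left
    rw [eq_bot_iff]
    intro x hx
    have h3 : ∀ n : ℕ, (φ ^ n) x = x := by
      intro n
      induction n with
      | zero => simp
      | succ k ih => rw [pow_succ', Module.End.mul_apply, ih, h1 x hx]
    have := h3 n
    rw [hn] at this
    simpa using this.symm
  · right
    rw [eq_bot_iff]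
    intro y hy
    apply hb.1
    rw [h2 y hy, map_zero]

/-- Schanuel: kernels of projective covers of modules of projective dimension at most one. -/
theorem ker_projective (h : PdLeOne A M) [Module.Projective A N] (f : N →ₗ[A] M)
    (hf : Function.Surjective f) : Module.Projective A (LinearMap.ker f) := by
  obtain ⟨P, g, hP, hg, hk⟩ := h
  obtain ⟨l, hl⟩ := Module.projective_lifting_property g f hg
  obtain ⟨m, hm⟩ := Module.projective_lifting_property f g hf
  have hl' : ∀ x, g (l x) = f x := fun x => LinearMap.congr_fun hl x
  have hm' : ∀ x, f (m x) = g x := fun x => LinearMap.congr_fun hm x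
  let i : LinearMap.ker f →ₗ[A] (LinearMap.ker g × N) :=
    LinearMap.prod (LinearMap.codRestrict _ (l.comp (LinearMap.ker f).subtype)
      (fun x => by
        have := x.2
        rw [LinearMap.mem_ker] at this ⊢
        simp [hl', this])) (LinearMap.ker f).subtype
  let r : (LinearMap.ker g × N) →ₗ[A] LinearMap.ker f :=
    LinearMap.coprod (LinearMap.codRestrict _ (m.comp (LinearMap.ker g).subtype)
      (fun x => by
        have := x.2
        rw [LinearMap.mem_ker] at this ⊢
        simp [hm', this]))
      (LinearMap.codRestrict _ (LinearMap.id - m.comp l) (fun x => by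
        simp [hm', hl']))
  refine Module.Projective.of_split i r ?_
  ext x
  simp [i, r]

theorem pi_projective {ι : Type} [Fintype ι] (F : ι → Type) [∀ s, AddCommGroup (F s)]
    [∀ s, Module A (F s)] [∀ s, Module.Projective A (F s)] : Module.Projective A (∀ s, F s) := by
  classical
  exact Module.Projective.of_equiv (DirectSum.linearEquivFunOnFintype A ι F)

end GeneralLemmas

section HaradaLemmas

theorem regular_projective (R : Type) [Ring R] : Module.Projective Rᵐᵒᵖ R := by
  let e : Rᵐᵒᵖ ≃ₗ[Rᵐᵒᵖ] R :=
    { toFun := fun x => unop x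
      invFun := fun x => op x
      map_add' := fun x y => rfl
      map_smul' := fun x y => rfl
      left_inv := fun x => rfl
      right_inv := fun x => rfl }
  exact Module.Projective.of_equiv e

theorem mem_rightIdeal {R : Type} [Ring R] (x y : R) : y ∈ rightIdeal R x ↔ ∃ r, x * r = y := by
  unfold rightIdeal
  rw [Submodule.mem_span_singleton]
  constructor
  · rintro ⟨a, rfl⟩; exact ⟨unop a, rfl⟩
  · rintro ⟨r, rfl⟩; exact ⟨op r, rfl⟩

/-- Left multiplication by `x` as a map `R → xR`. -/
def toRightIdeal (R : Type) [Ring R] (x : R) : R →ₗ[Rᵐᵒᵖ] rightIdeal R x where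
  toFun r := ⟨x * r, (mem_rightIdeal x _).mpr ⟨r, rfl⟩⟩
  map_add' a b := Subtype.ext (mul_add x a b)
  map_smul' a b := Subtype.ext (mul_assoc x b (unop a)).symm

theorem rightIdeal_projective {R : Type} [Ring R] (x : R) (hx : IsIdempotentElem x) :
    Module.Projective Rᵐᵒᵖ (rightIdeal R x) := by
  have := regular_projective R
  refine Module.Projective.of_split (rightIdeal R x).subtype (toRightIdeal R x) ?_
  ext ⟨y, hy⟩
  obtain ⟨r, rfl⟩ := (mem_rightIdeal x y).mp hy
  change x * (x * r) = x * r
  rw [← mul_assoc, hx.eq]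

/-- The orbit map `r ↦ y r`. -/
def orbitMap {R M : Type} [Ring R] [AddCommGroup M] [Module Rᵐᵒᵖ M] (y : M) : R →ₗ[Rᵐᵒᵖ] M where
  toFun r := op r • y
  map_add' a b := by rw [op_add, add_smul]
  map_smul' a b := by
    change op (b * unop a) • y = a • (op b • y)
    rw [op_mul, op_unop, mul_smul]

namespace HaradaData

variable {R : Type} [Ring R] (H : HaradaData R)

/-- The zero index. -/
def z (i : Fin H.m) : Fin (H.n i) := ⟨0, H.hn i⟩

theorem P_zero (i : Fin H.m) : H.P i (H.z i) = rightIdeal R (H.e i (H.z i)) := rfl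

theorem P_succ (i : Fin H.m) (j : ℕ) (hj : j + 1 < H.n i) :
    H.P i ⟨j + 1, hj⟩ = radSub (H.P i ⟨j, by omega⟩) := by
  unfold P
  exact Function.iterate_succ_apply' _ _ _

theorem P_equiv (i : Fin H.m) (j : Fin (H.n i)) :
    Nonempty (rightIdeal R (H.e i j) ≃ₗ[Rᵐᵒᵖ] H.P i j) := by
  obtain ⟨j, hj⟩ := j
  induction j with
  | zero => exact ⟨LinearEquiv.refl _ _⟩
  | succ j ih =>
    obtain ⟨e1⟩ := H.rad_iso i ⟨j+1, hj⟩ (Nat.succ_pos j)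
    obtain ⟨e2⟩ := ih (by omega)
    obtain ⟨e3, _⟩ := radSub_equiv e2
    rw [P_succ]
    exact ⟨e1.trans e3⟩

theorem P_indec (i : Fin H.m) (j : Fin (H.n i)) : IsIndecomposableMod Rᵐᵒᵖ (H.P i j) :=
  indec_equiv (H.P_equiv i j).some (H.indec i j)

instance P_proj (i : Fin H.m) (j : Fin (H.n i)) : Module.Projective Rᵐᵒᵖ (H.P i j) := by
  have := rightIdeal_projective (H.e i j) (H.idem i j)
  exact Module.Projective.of_equiv (H.P_equiv i j).some

instance P_nontrivial (i : Fin H.m) (j : Fin (H.n i)) : Nontrivial (H.P i j) := (H.P_indec i j).1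

theorem P_inj (i : Fin H.m) : Module.Injective Rᵐᵒᵖ (H.P i (H.z i)) := H.inj i

theorem P_basic {i i' : Fin H.m} {j : Fin (H.n i)} {j' : Fin (H.n i')}
    (e : H.P i j ≃ₗ[Rᵐᵒᵖ] H.P i' j') :
    (⟨i, j⟩ : Σ i : Fin H.m, Fin (H.n i)) = ⟨i', j'⟩ := by
  by_contra hne
  exact (H.basic _ _ hne).false
    (((H.P_equiv i j).some.trans e).trans (H.P_equiv i' j').some.symm)

variable [IsArtinian Rᵐᵒᵖ R] [IsNoetherian Rᵐᵒᵖ R]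

theorem P_spec (i : Fin H.m) (j : Fin (H.n i)) :
    radSub (H.P i j) < H.P i j ∧ ∀ L ≤ H.P i j, L ≠ H.P i j → L ≤ radSub (H.P i j) :=
  radSub_spec _ (H.P_indec i j)

theorem P_strictAnti (i : Fin H.m) : StrictAnti (H.P i) := by
  have key : ∀ (d k : ℕ) (h : k + d + 1 < H.n i),
      H.P i ⟨k + d + 1, h⟩ < H.P i ⟨k, by omega⟩ := by
    intro d k
    induction d with
    | zero => intro h; rw [P_succ]; exact (H.P_spec _ _).1
    | succ d ih =>
      intro h
      rw [P_succ]
      exact (H.P_spec _ _).1.trans (ih (by omega))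
  rintro ⟨k, hk⟩ ⟨l, hl⟩ hkl
  have hkl' : k < l := hkl
  obtain ⟨d, rfl⟩ := Nat.exists_eq_add_of_lt hkl'
  exact key d k hl

theorem P_le_zero (i : Fin H.m) (j : Fin (H.n i)) : H.P i j ≤ H.P i (H.z i) :=
  radSub_iter_le _ _

theorem dichotomy (i : Fin H.m) (L : Submodule Rᵐᵒᵖ R) (hL : L ≤ H.P i (H.z i)) :
    (∃ j, L = H.P i j) ∨ ∀ j, L < H.P i j := by
  by_cases h : ∃ j, L = H.P i j
  · exact Or.inl h
  · right
    rintro ⟨j, hj⟩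
    refine lt_of_le_of_ne ?_ (fun he => h ⟨_, he⟩)
    induction j with
    | zero => exact hL
    | succ j ih =>
      rw [P_succ]
      exact (H.P_spec _ _).2 _ (ih (by omega)) (fun he => h ⟨_, he⟩)

/-- Maps from `P i 0` to `P i' 0` either have small image, or are isomorphisms
preserving the whole chain. -/
theorem map_dichotomy (i i' : Fin H.m) (φ : R →ₗ[Rᵐᵒᵖ] R)
    (hφ : (H.P i (H.z i)).map φ ≤ H.P i' (H.z i')) :
    (∀ l, (H.P i (H.z i)).map φ < H.P i' l) ∨
      (i = i' ∧ ∀ l : Fin (H.n i), (H.P i l).map φ = H.P i l) := by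
  rcases H.dichotomy i' _ hφ with ⟨j, hj⟩ | h
  · right
    let ψ : H.P i (H.z i) →ₗ[Rᵐᵒᵖ] H.P i' j :=
      LinearMap.codRestrict _ (φ.comp (H.P i (H.z i)).subtype)
        (fun x => by rw [← hj]; exact ⟨x, x.2, rfl⟩)
    have hψ : Function.Surjective ψ := by
      rintro ⟨y, hy⟩
      have hy' := hy
      rw [← hj] at hy'
      obtain ⟨x, hx, rfl⟩ := hy'
      exact ⟨⟨x, hx⟩, rfl⟩
    let e := LinearEquiv.ofBijective ψ (surj_proj_bij (H.P_indec i _) ψ hψ)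
    have hb := H.P_basic e
    have h1 : i = i' := congrArg Sigma.fst hb
    subst h1
    have h2 : H.z i = j := eq_of_heq (Sigma.mk.inj hb).2
    subst h2
    refine ⟨rfl, fun l => ?_⟩
    obtain ⟨e', he'⟩ := radSub_iter_equiv e l.val
    apply le_antisymm
    · rintro _ ⟨x, hx, rfl⟩
      have := he' ⟨x, hx⟩
      have h3 : (e' ⟨x, hx⟩ : R) = φ x := this
      rw [← h3]
      exact (e' ⟨x, hx⟩).2
    · intro y hy
      obtain ⟨⟨x, hx⟩, hxy⟩ := e'.surjective ⟨y, hy⟩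
      refine ⟨x, hx, ?_⟩
      have h3 : (e' ⟨x, hx⟩ : R) = φ x := he' ⟨x, hx⟩
      rw [← h3, hxy]
  · exact Or.inl h

/-- If `φ` is moreover injective on some `P i j`, it is an isomorphism. -/
theorem map_of_injective (i i' : Fin H.m) (φ : R →ₗ[Rᵐᵒᵖ] R)
    (hφ : (H.P i (H.z i)).map φ ≤ H.P i' (H.z i')) (j : Fin (H.n i))
    (hj : ∀ x ∈ H.P i j, φ x = 0 → x = 0) :
    i = i' ∧ ∀ l : Fin (H.n i), (H.P i l).map φ = H.P i l := by
  refine (H.map_dichotomy i i' φ hφ).resolve_left fun h => ?_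
  let ψ : H.P i (H.z i) →ₗ[Rᵐᵒᵖ] H.P i' (H.z i') :=
      LinearMap.codRestrict _ (φ.comp (H.P i (H.z i)).subtype) (fun x => hφ ⟨x, x.2, rfl⟩)
  have hψ : Function.Injective ψ := by
    rw [← LinearMap.ker_eq_bot]
    refine (uniform_of_injective (H.P_inj i) (H.P_indec i _) (LinearMap.ker ψ)
      ((H.P i j).comap (H.P i (H.z i)).subtype) ?_).resolve_right ?_
    · rw [eq_bot_iff]
      rintro x ⟨hx1, hx2⟩
      have h1 : ψ x = 0 := hx1
      have h2 : φ x = 0 := congrArg (fun y : H.P i' (H.z i') => (y : R)) h1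
      exact Subtype.ext (hj x hx2 h2)
    · intro he
      obtain ⟨x, hx⟩ := exists_ne (0 : H.P i j)
      have h1 : (⟨x, H.P_le_zero i j x.2⟩ : H.P i (H.z i)) ∈
          (H.P i j).comap (H.P i (H.z i)).subtype := x.2
      rw [he, Submodule.mem_bot] at h1
      exact hx (Subtype.ext (congrArg (fun y : H.P i (H.z i) => (y : R)) h1))
  obtain ⟨r, hr⟩ := (H.P_inj i).out ψ hψ LinearMap.id
  have hs := (retract_bij (H.P_indec i' _) ψ r hr).1.2
  refine absurd ?_ (not_le_of_gt (h (H.z i')))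
  intro y hy
  obtain ⟨x, hx⟩ := hs ⟨y, hy⟩
  exact ⟨x, x.2, congrArg (fun y : H.P i' (H.z i') => (y : R)) hx⟩

/-- Extension of maps to `R`. -/
theorem extend_map {i i' : Fin H.m} {j : Fin (H.n i)} {k : Fin (H.n i')}
    (u : H.P i j →ₗ[Rᵐᵒᵖ] H.P i' k) :
    ∃ φ : R →ₗ[Rᵐᵒᵖ] R, (∀ x : H.P i j, φ x = u x) ∧
      (H.P i (H.z i)).map φ ≤ H.P i' (H.z i') := by
  obtain ⟨h, hh⟩ := (H.P_inj i').out (H.P i j).subtype (Submodule.subtype_injective _)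
    ((Submodule.inclusion (H.P_le_zero i' k)).comp u)
  refine ⟨(H.P i' (H.z i')).subtype.comp h, fun x => ?_, ?_⟩
  · exact congrArg (fun y : H.P i' (H.z i') => (y : R)) (hh x)
  · rintro _ ⟨x, _, rfl⟩
    exact (h x).2

/-- Elements of a module are sums of images of the `P i j`. -/
theorem exists_maps {M : Type} [AddCommGroup M] [Module Rᵐᵒᵖ M] (y : M) :
    y ∈ ⨆ p : (Σ i : Fin H.m, Fin (H.n i)), ⨆ c : H.P p.1 p.2 →ₗ[Rᵐᵒᵖ] M, LinearMap.range c := by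
  have h1 : y = ∑ p : (Σ i : Fin H.m, Fin (H.n i)), op (H.e p.1 p.2) • y := by
    rw [← Finset.sum_smul, ← Finset.op_sum, H.sum_eq_one, op_one, one_smul]
  rw [h1]
  refine Submodule.sum_mem _ fun p _ => ?_
  refine Submodule.mem_iSup_of_mem p ?_
  obtain ⟨e⟩ := H.P_equiv p.1 p.2
  refine Submodule.mem_iSup_of_mem
    (((orbitMap y).comp (rightIdeal R (H.e p.1 p.2)).subtype).comp e.symm.toLinearMap) ?_
  refine ⟨e ⟨H.e p.1 p.2, (mem_rightIdeal _ _).mpr ⟨1, mul_one _⟩⟩, ?_⟩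
  simp [orbitMap]

/-- A nonzero projective module of finite length surjects onto some `P i j`. -/
theorem exists_surj {Q : Type} [AddCommGroup Q] [Module Rᵐᵒᵖ Q] [Module.Projective Rᵐᵒᵖ Q]
    [IsNoetherian Rᵐᵒᵖ Q] [Nontrivial Q] :
    ∃ (p : Σ i : Fin H.m, Fin (H.n i)) (a : Q →ₗ[Rᵐᵒᵖ] H.P p.1 p.2), Function.Surjective a := by
  obtain ⟨C, hC⟩ := IsCoatomic.exists_coatom (Submodule Rᵐᵒᵖ Q)
  have h1 : ∃ (p : Σ i : Fin H.m, Fin (H.n i)) (b : H.P p.1 p.2 →ₗ[Rᵐᵒᵖ] Q),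
      ¬ LinearMap.range b ≤ C := by
    by_contra hcon
    push Not at hcon
    apply hC.1
    rw [eq_top_iff]
    intro y _
    have := H.exists_maps y
    exact (iSup_le fun p => iSup_le fun b => hcon p b) this
  obtain ⟨p, b, hb⟩ := h1
  have hsup : C ⊔ LinearMap.range b = ⊤ := hC.2 _ (by
    refine lt_of_le_of_ne le_sup_left fun he => hb ?_
    rw [he]; exact le_sup_right)
  have hs : Function.Surjective (C.mkQ.comp b) := by
    intro y
    obtain ⟨x, rfl⟩ := C.mkQ_surjective y
    have hx : x ∈ C ⊔ LinearMap.range b := hsup ▸ Submodule.mem_top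
    obtain ⟨d, hd, _, ⟨l, rfl⟩, rfl⟩ := Submodule.mem_sup.mp hx
    refine ⟨l, ?_⟩
    simp [hd]
  obtain ⟨a, ha⟩ := Module.projective_lifting_property _ C.mkQ hs
  refine ⟨p, a, ?_⟩
  obtain ⟨D, hD, hD'⟩ := local_exists (H.P_indec p.1 p.2)
  by_contra hna
  have ha' : LinearMap.range a ≤ D := hD' _ (fun h => hna (LinearMap.range_eq_top.mp h))
  have hDC : D ≤ C.comap b := by
    by_contra hnot
    obtain ⟨d, hd, hdC⟩ := Set.not_subset.mp hnot
    have h3 : C ⊔ D.map b = ⊤ := hC.2 _ (by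
      refine lt_of_le_of_ne le_sup_left fun he => hdC ?_
      change b d ∈ C
      rw [he]
      exact Submodule.mem_sup_right ⟨d, hd, rfl⟩)
    have h4 : C.comap b ≤ D := hD' _ (fun h => hb (by
      rintro _ ⟨x, rfl⟩
      have : x ∈ C.comap b := h ▸ Submodule.mem_top
      exact this))
    apply hD
    rw [eq_top_iff]
    intro x _
    have hx : b x ∈ C ⊔ D.map b := h3 ▸ Submodule.mem_top
    obtain ⟨c, hc, _, ⟨d', hd', rfl⟩, hsum⟩ := Submodule.mem_sup.mp hx
    have h5 : x - d' ∈ C.comap b := by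
      change b (x - d') ∈ C
      rw [map_sub, ← hsum, add_sub_cancel_right]
      exact hc
    have := D.add_mem (h4 h5) hd'
    rwa [sub_add_cancel] at this
  apply hC.1
  rw [eq_top_iff]
  intro y _
  have h6 : b (a y) ∈ C := hDC (ha' ⟨y, rfl⟩)
  have h7 := LinearMap.congr_fun ha y
  simp only [LinearMap.comp_apply] at h7
  rw [← Submodule.ker_mkQ C, LinearMap.mem_ker] at h6 ⊢
  rw [← h7, h6]

/-- Uniformity of `P i j`: an injective map to a product has an injective component. -/
theorem exists_injective_component {i : Fin H.m} {j : Fin (H.n i)} {ι : Type} [Fintype ι]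
    (F : ι → Type) [∀ s, AddCommGroup (F s)] [∀ s, Module Rᵐᵒᵖ (F s)]
    (u : ∀ s, H.P i j →ₗ[Rᵐᵒᵖ] F s) (hu : ∀ x, (∀ s, u s x = 0) → x = 0) :
    ∃ s, ∀ x, u s x = 0 → x = 0 := by
  by_contra hcon
  push Not at hcon
  have h1 : (Finset.univ.inf fun s => LinearMap.ker (u s)) ≠ ⊥ := by
    refine Finset.inf_induction (p := fun X : Submodule Rᵐᵒᵖ (H.P i j) => X ≠ ⊥) ?_ ?_ ?_
    · exact top_ne_bot
    · intro X hX Y hY hXY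
      have hu := uniform_of_injective (H.P_inj i) (H.P_indec i _)
        (X.map (Submodule.inclusion (H.P_le_zero i j)))
        (Y.map (Submodule.inclusion (H.P_le_zero i j))) (by
          rw [← Submodule.map_inf _ (Submodule.inclusion_injective _), hXY, Submodule.map_bot])
      rcases hu with h | h
      · exact hX (Submodule.map_injective_of_injective (Submodule.inclusion_injective _)
          (h.trans (Submodule.map_bot _).symm))
      · exact hY (Submodule.map_injective_of_injective (Submodule.inclusion_injective _)
          (h.trans (Submodule.map_bot _).symm))
    · intro s _ h
      obtain ⟨x, hx, hx0⟩ := hcon s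
      have : x ∈ LinearMap.ker (u s) := hx
      rw [h] at this
      exact hx0 this
  apply h1
  rw [eq_bot_iff]
  intro x hx
  rw [Submodule.mem_finsetInf] at hx
  exact hu x fun s => hx s (Finset.mem_univ s)

end HaradaData

end HaradaLemmas

namespace HaradaData

variable {R : Type} [Ring R] (H : HaradaData R)

variable [IsArtinian Rᵐᵒᵖ R] [IsNoetherian Rᵐᵒᵖ R]

theorem quot_nontrivial (i : Fin H.m) (k l : Fin (H.n i)) (hkl : k < l) :
    Nontrivial (H.Quot i k l) := by
  rw [Submodule.Quotient.nontrivial_iff]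
  intro h
  refine absurd ?_ (not_le_of_gt (H.P_strictAnti i hkl))
  intro x hx
  have : (⟨x, hx⟩ : H.P i k) ∈ Submodule.comap (H.P i k).subtype (H.P i l) := h ▸ Submodule.mem_top
  exact this

/-- The kernel `P i l`, seen inside `P i k`. -/
theorem kerEquiv (i : Fin H.m) (k l : Fin (H.n i)) (hkl : k ≤ l) :
    Nonempty (H.P i l ≃ₗ[Rᵐᵒᵖ] Submodule.comap (H.P i k).subtype (H.P i l)) :=
  ⟨(Submodule.comapSubtypeEquivOfLe ((H.P_strictAnti i).antitone hkl)).symm⟩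

theorem part_one (i : Fin H.m) (k l : Fin (H.n i)) (hkl : k < l) :
    IsIndecomposableMod Rᵐᵒᵖ (H.Quot i k l) ∧ PdLeOne Rᵐᵒᵖ (H.Quot i k l) ∧
        ¬ Module.Projective Rᵐᵒᵖ (H.Quot i k l) := by
  have hnt := H.quot_nontrivial i k l hkl
  obtain ⟨e⟩ := H.kerEquiv i k l hkl.le
  refine ⟨⟨hnt, ?_⟩, ?_, ?_⟩
  · intro N N' hc
    obtain ⟨D, hD, hD'⟩ := local_exists (H.P_indec i k)
    set π := (Submodule.comap (H.P i k).subtype (H.P i l)).mkQ with hπ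
    have hsurj : Function.Surjective π := Submodule.mkQ_surjective _
    by_cases h1 : N.comap π = ⊤
    · right
      have h2 : N = ⊤ := by
        rw [eq_top_iff]
        intro y _
        obtain ⟨x, rfl⟩ := hsurj y
        have : x ∈ N.comap π := h1 ▸ Submodule.mem_top
        exact this
      have := hc.inf_eq_bot
      rwa [h2, top_inf_eq] at this
    · by_cases h2 : N'.comap π = ⊤
      · left
        have h2 : N' = ⊤ := by
          rw [eq_top_iff]
          intro y _
          obtain ⟨x, rfl⟩ := hsurj y
          have : x ∈ N'.comap π := h2 ▸ Submodule.mem_top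
          exact this
        have := hc.inf_eq_bot
        rwa [h2, inf_top_eq] at this
      · exfalso
        apply hD
        rw [eq_top_iff]
        intro x _
        have hx : π x ∈ N ⊔ N' := hc.sup_eq_top ▸ Submodule.mem_top
        obtain ⟨a, ha, b, hb, hab⟩ := Submodule.mem_sup.mp hx
        obtain ⟨a', rfl⟩ := hsurj a
        have h3 : a' ∈ D := hD' _ h1 ha
        have h4 : x - a' ∈ D := hD' _ h2 (by
          change π (x - a') ∈ N'
          rw [map_sub, ← hab, add_sub_cancel_left]
          exact hb)
        have := D.add_mem h4 h3
        rwa [sub_add_cancel] at this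
  · refine ⟨ModuleCat.of Rᵐᵒᵖ (H.P i k),
      (Submodule.comap (H.P i k).subtype (H.P i l)).mkQ, H.P_proj i k,
      Submodule.mkQ_surjective _, ?_⟩
    rw [Submodule.ker_mkQ]
    exact Module.Projective.of_equiv e
  · intro hproj
    have hb := surj_proj_bij (H.P_indec i k)
      (Submodule.comap (H.P i k).subtype (H.P i l)).mkQ (Submodule.mkQ_surjective _)
    have h1 := LinearMap.ker_eq_bot.mpr hb.1
    rw [Submodule.ker_mkQ] at h1
    obtain ⟨x, hx⟩ := exists_ne (0 : H.P i l)
    have h2 : ((e x : H.P i k)) ∈ Submodule.comap (H.P i k).subtype (H.P i l) := (e x).2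
    have h2 := h1.le h2
    rw [Submodule.mem_bot] at h2
    apply hx
    apply e.injective
    rw [map_zero]
    exact Subtype.ext h2

theorem part_two (i : Fin H.m) (k l : Fin (H.n i)) (i' : Fin H.m) (k' l' : Fin (H.n i'))
    (hkl : k < l) (hkl' : k' < l') (E : H.Quot i k l ≃ₗ[Rᵐᵒᵖ] H.Quot i' k' l') :
    i = i' ∧ k.val = k'.val ∧ l.val = l'.val := by
  set S := Submodule.comap (H.P i k).subtype (H.P i l) with hS
  set S' := Submodule.comap (H.P i' k').subtype (H.P i' l') with hS'
  obtain ⟨e⟩ := H.kerEquiv i k l hkl.le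
  obtain ⟨e'⟩ := H.kerEquiv i' k' l' hkl'.le
  obtain ⟨g, hg⟩ := Module.projective_lifting_property S'.mkQ (E.toLinearMap.comp S.mkQ)
    (Submodule.mkQ_surjective _)
  have hg' : ∀ x, S'.mkQ (g x) = E (S.mkQ x) := fun x => LinearMap.congr_fun hg x
  have hsurj : Function.Surjective g := by
    by_contra hns
    obtain ⟨D, hD, hD'⟩ := local_exists (H.P_indec i' k')
    have h1 : LinearMap.range g ≤ D := hD' _ (fun h => hns (LinearMap.range_eq_top.mp h))
    have hnt' := H.quot_nontrivial i' k' l' hkl'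
    have h2 : S' ≤ D := hD' _ (Submodule.Quotient.nontrivial_iff.mp hnt')
    apply hD
    rw [eq_top_iff]
    intro y _
    obtain ⟨z, hz⟩ := E.surjective (S'.mkQ y)
    obtain ⟨x, rfl⟩ := S.mkQ_surjective z
    rw [← hg'] at hz
    have h3 : y - g x ∈ S' := by
      rw [← Submodule.ker_mkQ S', LinearMap.mem_ker, map_sub, hz, sub_self]
    have := D.add_mem (h2 h3) (h1 ⟨x, rfl⟩)
    rwa [sub_add_cancel] at this
  have hbij := surj_proj_bij (H.P_indec i k) g hsurj
  let G := LinearEquiv.ofBijective g hbij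
  have hG : S.map (G : H.P i k →ₗ[Rᵐᵒᵖ] H.P i' k') = S' := by
    ext y
    constructor
    · rintro ⟨x, hx, rfl⟩
      change g x ∈ S'
      have hx' : S.mkQ x = 0 := by
        rw [← LinearMap.mem_ker, Submodule.ker_mkQ]; exact hx
      rw [← Submodule.ker_mkQ S', LinearMap.mem_ker, hg', hx', map_zero]
    · intro hy
      obtain ⟨x, rfl⟩ := hsurj y
      refine ⟨x, ?_, rfl⟩
      have hy' : S'.mkQ (g x) = 0 := by
        rw [← LinearMap.mem_ker, Submodule.ker_mkQ]; exact hy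
      rw [hg'] at hy'
      have := E.injective (hy'.trans (map_zero E).symm)
      change x ∈ S
      rwa [← Submodule.ker_mkQ S]
  have F : S ≃ₗ[Rᵐᵒᵖ] S' := (G.submoduleMap S).trans (LinearEquiv.ofEq _ _ hG)
  have hk := H.P_basic G
  have hl := H.P_basic ((e.trans F).trans e'.symm)
  have h1 : i = i' := congrArg Sigma.fst hk
  subst h1
  have h2 : k = k' := eq_of_heq (Sigma.mk.inj hk).2
  have h3 : l = l' := eq_of_heq (Sigma.mk.inj hl).2
  exact ⟨rfl, congrArg _ h2, congrArg _ h3⟩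

theorem P_transport {i i' : Fin H.m} (h : i = i') (j : Fin (H.n i)) :
    ∃ j' : Fin (H.n i'), H.P i j = H.P i' j' ∧ j'.val = j.val := by
  subst h
  exact ⟨j, rfl, rfl⟩

/-- A minimal generating family. -/
theorem exists_minimal_family (X : Type) [AddCommGroup X] [Module Rᵐᵒᵖ X]
    [Module.Finite Rᵐᵒᵖ X] :
    ∃ (ι : Type) (_ : Fintype ι) (σ : ι → Σ i : Fin H.m, Fin (H.n i))
      (c : ∀ s, H.P (σ s).1 (σ s).2 →ₗ[Rᵐᵒᵖ] X),
      (⨆ s, LinearMap.range (c s)) = ⊤ ∧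
      ∀ s, (⨆ t, ⨆ (_ : t ≠ s), LinearMap.range (c t)) ≠ ⊤ := by
  classical
  let I0 := Σ p : (Σ i : Fin H.m, Fin (H.n i)), (H.P p.1 p.2 →ₗ[Rᵐᵒᵖ] X)
  have h0 : (⊤ : Submodule Rᵐᵒᵖ X) ≤ ⨆ s : I0, LinearMap.range s.2 := by
    intro y _
    rw [iSup_sigma]
    exact H.exists_maps y
  have hc : IsCompactElement (⊤ : Submodule Rᵐᵒᵖ X) :=
    (Submodule.fg_iff_compact _).mp Module.Finite.fg_top
  obtain ⟨S0, hS0⟩ := CompleteLattice.IsCompactElement.exists_finset_of_le_iSup _ hc _ h0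
  obtain ⟨S, -, hS⟩ := exists_minimal_le_of_wellFoundedLT
    (fun S : Finset I0 => (⊤ : Submodule Rᵐᵒᵖ X) ≤ ⨆ s ∈ S, LinearMap.range s.2) S0 hS0
  refine ⟨S, inferInstance, fun s => s.1.1, fun s => s.1.2, ?_, ?_⟩
  · rw [eq_top_iff]
    refine hS.1.trans ?_
    refine iSup_le fun s => iSup_le fun hs => ?_
    exact le_iSup (fun s : S => LinearMap.range s.1.2) ⟨s, hs⟩
  · intro s hs
    have h1 : (⊤ : Submodule Rᵐᵒᵖ X) ≤ ⨆ t ∈ S.erase s.1, LinearMap.range t.2 := by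
      rw [← hs]
      refine iSup_le fun t => iSup_le fun ht => ?_
      have ht' : t.1 ∈ S.erase s.1 :=
        Finset.mem_erase.mpr ⟨fun h => ht (Subtype.ext h), t.2⟩
      exact le_iSup₂_of_le t.1 ht' le_rfl
    have h2 := hS.2 h1 (Finset.erase_subset _ _)
    exact Finset.notMem_erase s.1 S (h2 s.2)

theorem part_three (X : Type) [AddCommGroup X] [Module Rᵐᵒᵖ X]
    [Module.Finite Rᵐᵒᵖ X] (hX : IsIndecomposableMod Rᵐᵒᵖ X) (hpd : PdLeOne Rᵐᵒᵖ X)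
    (hnp : ¬ Module.Projective Rᵐᵒᵖ X) :
    ∃ (i : Fin H.m) (k l : Fin (H.n i)), k < l ∧ Nonempty (X ≃ₗ[Rᵐᵒᵖ] H.Quot i k l) := by
  classical
  obtain ⟨ι, _, σ, c, hctop, hcmin⟩ := H.exists_minimal_family X
  let Pr := ∀ s, H.P (σ s).1 (σ s).2
  have hPr : Module.Projective Rᵐᵒᵖ Pr := pi_projective _
  let f : Pr →ₗ[Rᵐᵒᵖ] X := ∑ s, (c s).comp (LinearMap.proj s)
  have hfapp : ∀ y : Pr, f y = ∑ s, c s (y s) := by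
    intro y; rw [LinearMap.sum_apply]; rfl
  have hfs : Function.Surjective f := by
    rw [← LinearMap.range_eq_top, eq_top_iff, ← hctop]
    refine iSup_le fun s => ?_
    rintro _ ⟨x, rfl⟩
    refine ⟨Pi.single s x, ?_⟩
    rw [hfapp, Finset.sum_eq_single s]
    · rw [Pi.single_eq_same]
    · intro t _ ht
      rw [Pi.single_eq_of_ne ht, map_zero]
    · intro h
      exact absurd (Finset.mem_univ s) h
  set Q := LinearMap.ker f with hQ
  have hQp : Module.Projective Rᵐᵒᵖ Q := ker_projective hpd f hfs
  have hQn : Nontrivial Q := by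
    rw [Submodule.nontrivial_iff_ne_bot]
    intro h
    exact hnp (Module.Projective.of_equiv
      (LinearEquiv.ofBijective f ⟨LinearMap.ker_eq_bot.mp h, hfs⟩))
  -- the images of the kernel in the components
  let im : ∀ s, Submodule Rᵐᵒᵖ R := fun s =>
    Q.map ((H.P (σ s).1 (σ s).2).subtype.comp (LinearMap.proj s))
  have him_le : ∀ s, im s ≤ H.P (σ s).1 (σ s).2 := by
    rintro s _ ⟨y, _, rfl⟩
    exact (y s).2
  have hcontains : ∀ s (j : Fin (H.n (σ s).1)), H.P (σ s).1 j ≤ im s →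
      ∃ l, im s = H.P (σ s).1 l ∧ l ≤ j ∧ (σ s).2 ≤ l := by
    intro s j hj
    rcases H.dichotomy _ (im s) ((him_le s).trans (H.P_le_zero _ _)) with ⟨l, hl⟩ | h
    · refine ⟨l, hl, ?_, ?_⟩
      · rw [hl] at hj
        exact (H.P_strictAnti _).le_iff_ge.mp hj
      · have := him_le s
        rw [hl] at this
        exact (H.P_strictAnti _).le_iff_ge.mp this
    · exact absurd hj (not_le_of_gt (h j))
  -- existence of a pivot
  have hex : ∃ d : ℕ, ∃ s, ∃ l : Fin (H.n (σ s).1), im s = H.P (σ s).1 l ∧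
      l.val = (σ s).2.val + d := by
    obtain ⟨⟨i, j⟩, a, ha⟩ := H.exists_surj (Q := Q)
    obtain ⟨u, hu⟩ := Module.projective_lifting_property a LinearMap.id ha
    have hu' : ∀ x, a (u x) = x := fun x => LinearMap.congr_fun hu x
    let us : ∀ s, H.P i j →ₗ[Rᵐᵒᵖ] H.P (σ s).1 (σ s).2 :=
      fun s => (LinearMap.proj s).comp (Q.subtype.comp u)
    obtain ⟨s, hs⟩ := H.exists_injective_component _ us (fun x hx => by
      have h1 : u x = 0 := by
        apply Subtype.ext
        funext s
        exact hx s
      rw [← hu' x, h1, map_zero])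
    obtain ⟨φ, hφ, hφ'⟩ := H.extend_map (us s)
    obtain ⟨hi, hmap⟩ := H.map_of_injective i (σ s).1 φ hφ' j (fun x hx h0 => by
      have h1 : us s ⟨x, hx⟩ = 0 := Subtype.ext ((hφ ⟨x, hx⟩).symm.trans h0)
      exact congrArg (fun y : H.P i j => (y : R)) (hs _ h1))
    subst hi
    obtain ⟨l, hl, -, hl'⟩ := hcontains s j (by
      rw [← hmap j]
      rintro _ ⟨x, hx, rfl⟩
      rw [hφ ⟨x, hx⟩]
      exact ⟨u ⟨x, hx⟩, (u ⟨x, hx⟩).2, rfl⟩)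
    exact ⟨l.val - (σ s).2.val, s, l, hl, by have : (σ s).2.val ≤ l.val := hl'; omega⟩
  obtain ⟨s0, j, hj, hd⟩ := Nat.find_spec hex
  have hdmin := fun d (h : d < Nat.find hex) => Nat.find_min hex h
  set d := Nat.find hex with hdd
  -- the pivot is proper
  have hdpos : 0 < d := by
    by_contra h0
    have h0 : d = 0 := by omega
    have hjk : j = (σ s0).2 := Fin.ext (by omega)
    apply hcmin s0
    rw [eq_top_iff]
    intro x _
    obtain ⟨y, rfl⟩ := hfs x
    have hy : ((y s0 : R)) ∈ im s0 := by
      rw [hj, hjk]; exact (y s0).2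
    obtain ⟨q, hq, hqy⟩ := hy
    have hqy' : q s0 = y s0 := Subtype.ext hqy
    have h1 : f y = f (y - q) := by
      have : f q = 0 := hq
      rw [map_sub, this, sub_zero]
    rw [h1, hfapp]
    refine Submodule.sum_mem _ fun t _ => ?_
    by_cases ht : t = s0
    · subst ht
      rw [Pi.sub_apply, hqy', sub_self, map_zero]
      exact Submodule.zero_mem _
    · exact Submodule.mem_iSup_of_mem t (Submodule.mem_iSup_of_mem ht ⟨_, rfl⟩)
  have hkj : (σ s0).2 < j := Fin.lt_def.mpr (by omega)
  refine ⟨(σ s0).1, (σ s0).2, j, hkj, ?_⟩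
  have hjk_le : H.P (σ s0).1 j ≤ H.P (σ s0).1 (σ s0).2 := (H.P_strictAnti (σ s0).1).antitone hkj.le
  -- a section of the projection of the kernel
  let w : Q →ₗ[Rᵐᵒᵖ] H.P (σ s0).1 j := LinearMap.codRestrict _
    ((H.P (σ s0).1 (σ s0).2).subtype.comp ((LinearMap.proj s0).comp Q.subtype))
    (fun q => by rw [← hj]; exact ⟨q, q.2, rfl⟩)
  have hw : Function.Surjective w := by
    rintro ⟨y, hy⟩
    have hy' := hy
    rw [← hj] at hy'
    obtain ⟨q, hq, rfl⟩ := hy'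
    exact ⟨⟨q, hq⟩, rfl⟩
  obtain ⟨u, hu⟩ := Module.projective_lifting_property w LinearMap.id hw
  have hu' : ∀ x, w (u x) = x := fun x => LinearMap.congr_fun hu x
  have hcol : ∀ s, ∃ g : H.P (σ s0).1 (σ s0).2 →ₗ[Rᵐᵒᵖ] H.P (σ s).1 (σ s).2,
      (∀ x : H.P (σ s0).1 j, g ⟨x, hjk_le x.2⟩ = (u x : Pr) s) ∧
      (s = s0 → ∀ x, (g x : R) = x) := by
    intro s
    by_cases hs : s = s0
    · subst hs
      refine ⟨LinearMap.id, fun x => ?_, fun _ x => rfl⟩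
      apply Subtype.ext
      exact (congrArg Subtype.val (hu' x)).symm
    · let us : H.P (σ s0).1 j →ₗ[Rᵐᵒᵖ] H.P (σ s).1 (σ s).2 := (LinearMap.proj s).comp (Q.subtype.comp u)
      obtain ⟨φ, hφ, hφ'⟩ := H.extend_map us
      have hφk : (H.P (σ s0).1 (σ s0).2).map φ ≤ H.P (σ s).1 (σ s).2 := by
        rcases H.map_dichotomy (σ s0).1 (σ s).1 φ hφ' with h | ⟨hii, hmap⟩
        · exact (Submodule.map_mono (H.P_le_zero (σ s0).1 (σ s0).2)).trans (h _).le
        · have hj2 : H.P (σ s0).1 j ≤ im s := by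
            rw [← hmap j]
            rintro _ ⟨x, hx, rfl⟩
            rw [hφ ⟨x, hx⟩]
            exact ⟨u ⟨x, hx⟩, (u ⟨x, hx⟩).2, rfl⟩
          rw [hmap (σ s0).2]
          have hcon : ∃ l : Fin (H.n (σ s).1), im s = H.P (σ s).1 l ∧ l.val ≤ j.val ∧
              (σ s).2.val ≤ l.val := by
            obtain ⟨j', hj', hjj⟩ := H.P_transport hii j
            rw [hj'] at hj2
            obtain ⟨l, hl1, hl2, hl3⟩ := hcontains s j' hj2
            have hl2' : l.val ≤ j'.val := hl2
            exact ⟨l, hl1, by omega, hl3⟩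
          obtain ⟨l, hl1, hl2, hl3⟩ := hcon
          obtain ⟨k', hk', hkk⟩ := H.P_transport hii (σ s0).2
          rw [hk']
          apply (H.P_strictAnti _).antitone
          have hmin := hdmin (l.val - (σ s).2.val)
          by_contra hlt
          have hlt' : k'.val < (σ s).2.val := not_le.mp hlt
          exact hmin (by omega) ⟨s, l, hl1, by omega⟩
      refine ⟨LinearMap.codRestrict _ (φ.comp (H.P (σ s0).1 (σ s0).2).subtype)
        (fun x => hφk ⟨x, x.2, rfl⟩), fun x => ?_, fun h => absurd h hs⟩
      apply Subtype.ext
      exact hφ x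
  choose g hg1 hg2 using hcol
  let W := Submodule.comap (H.P (σ s0).1 (σ s0).2).subtype (H.P (σ s0).1 j)
  let gg : H.P (σ s0).1 (σ s0).2 →ₗ[Rᵐᵒᵖ] Pr := LinearMap.pi g
  let a : (H.P (σ s0).1 (σ s0).2 ⧸ W) →ₗ[Rᵐᵒᵖ] X := W.liftQ (f.comp gg) (by
    intro x hx
    rw [LinearMap.mem_ker]
    have h1 : gg x = u ⟨x, hx⟩ := by
      funext s
      exact hg1 s ⟨x, hx⟩
    rw [LinearMap.comp_apply, h1]
    exact (u ⟨x, hx⟩).2)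
  let b : X →ₗ[Rᵐᵒᵖ] (H.P (σ s0).1 (σ s0).2 ⧸ W) :=
    (Q.liftQ (W.mkQ.comp (LinearMap.proj s0)) (by
      intro q hq
      rw [LinearMap.mem_ker, LinearMap.comp_apply, ← LinearMap.mem_ker, Submodule.ker_mkQ]
      change ((q s0 : R)) ∈ H.P (σ s0).1 j
      rw [← hj]
      exact ⟨q, hq, rfl⟩)).comp (f.quotKerEquivOfSurjective hfs).symm.toLinearMap
  have hbf : ∀ y : Pr, b (f y) = W.mkQ (y s0) := by
    intro y
    have h1 : (f.quotKerEquivOfSurjective hfs).symm (f y) = Q.mkQ y := by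
      rw [LinearEquiv.symm_apply_eq]
      rfl
    simp only [b, LinearMap.comp_apply, LinearEquiv.coe_coe, h1]
    rfl
  have hab : ∀ x, b (a x) = x := by
    intro x
    obtain ⟨x, rfl⟩ := W.mkQ_surjective x
    have h1 : a (W.mkQ x) = f (gg x) := rfl
    rw [h1, hbf]
    have h2 : gg x s0 = x := Subtype.ext (hg2 s0 rfl x)
    rw [h2]
  have hnt : Nontrivial (H.P (σ s0).1 (σ s0).2 ⧸ W) := H.quot_nontrivial (σ s0).1 (σ s0).2 j hkj
  exact ⟨LinearEquiv.ofBijective b (retract_bij hX a b hab).2⟩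

end HaradaData

/-- Theorem 1.3.  The modules `P_{ik}/P_{il}` (`1 ≤ i ≤ m`,
`1 ≤ k < l ≤ n_i`) form a complete set of representatives of the isomorphism classes of
indecomposable finitely generated right `R`-modules of projective dimension exactly one:
each of them is indecomposable of projective dimension one, they are pairwise non-isomorphic,
and every indecomposable finitely generated right `R`-module of projective dimension exactly
one is isomorphic to one of them. -/
theorem statement0 (K R : Type) [Field K] [IsAlgClosed K] [Ring R] [Algebra K R]
    [FiniteDimensional K R] (H : HaradaData R) :
    (∀ (i : Fin H.m) (k l : Fin (H.n i)), k < l →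
      IsIndecomposableMod Rᵐᵒᵖ (H.Quot i k l) ∧ PdLeOne Rᵐᵒᵖ (H.Quot i k l) ∧
        ¬ Module.Projective Rᵐᵒᵖ (H.Quot i k l)) ∧
    (∀ (i : Fin H.m) (k l : Fin (H.n i)) (i' : Fin H.m) (k' l' : Fin (H.n i')),
      k < l → k' < l' → ¬ (i = i' ∧ k.val = k'.val ∧ l.val = l'.val) →
      IsEmpty (H.Quot i k l ≃ₗ[Rᵐᵒᵖ] H.Quot i' k' l')) ∧
    (∀ X : ModuleCat.{0} Rᵐᵒᵖ, Module.Finite Rᵐᵒᵖ ↥X → IsIndecomposableMod Rᵐᵒᵖ ↥X →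
      PdLeOne Rᵐᵒᵖ ↥X → ¬ Module.Projective Rᵐᵒᵖ ↥X →
      ∃ (i : Fin H.m) (k l : Fin (H.n i)), k < l ∧
        Nonempty (↥X ≃ₗ[Rᵐᵒᵖ] H.Quot i k l)) := by
  have hfd : FiniteDimensional K Rᵐᵒᵖ := inferInstance
  have hA : IsArtinianRing Rᵐᵒᵖ := isArtinian_of_tower K inferInstance
  have hN : IsNoetherianRing Rᵐᵒᵖ := isNoetherian_of_tower K inferInstance
  have hfin : Module.Finite Rᵐᵒᵖ R := ⟨⟨{1}, by
    rw [eq_top_iff]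
    intro x _
    rw [Finset.coe_singleton, Submodule.mem_span_singleton]
    exact ⟨op x, one_mul x⟩⟩⟩
  have hA' : IsArtinian Rᵐᵒᵖ R := inferInstance
  have hN' : IsNoetherian Rᵐᵒᵖ R := inferInstance
  refine ⟨H.part_one, ?_, ?_⟩
  · intro i k l i' k' l' hkl hkl' hne
    exact ⟨fun E => hne (H.part_two i k l i' k' l' hkl hkl' E)⟩
  · intro X hX hind hpd hnp
    exact H.part_three X hind hpd hnp
end

section
/- Let R be a basic left Harada algebra with idempotent data {e_{ij}} (1 ≤ i ≤ m, 1 ≤ j ≤ n_i) as below. Then the number of isomorphism classes of basic tilting right R-modules is finite and equals the product over i = 1,…,m of the Catalan numbers (1/(n_i+1))·binomial(2n_i, n_i). -/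
/-!
Common setup.  `K` is an algebraically closed field and `R` a finite-dimensional associative
unital `K`-algebra.  Right `R`-modules are formalized as modules over the opposite ring `Rᵐᵒᵖ`
(so that `MulOpposite.op r • x = x * r`).
-/

open MulOpposite

variable {R : Type} [Ring R]

namespace Har
open LinearMap

section General
variable {A : Type} [Ring A]

/-- Schanuel-type statement. -/
theorem schanuel {P P' M : Type} [AddCommGroup P] [Module A P] [AddCommGroup P'] [Module A P']
    [AddCommGroup M] [Module A M] (p : P →ₗ[A] M) (q : P' →ₗ[A] M)
    (hp : Function.Surjective p) (hq : Function.Surjective q)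
    [Module.Projective A P] [Module.Projective A P'] [Module.Projective A (ker p)] :
    Module.Projective A (ker q) := by
  obtain ⟨σ, hσ⟩ := Module.projective_lifting_property q p hq
  obtain ⟨τ, hτ⟩ := Module.projective_lifting_property p q hp
  have hσ' : ∀ x, q (σ x) = p x := fun x => LinearMap.congr_fun hσ x
  have hτ' : ∀ x, p (τ x) = q x := fun x => LinearMap.congr_fun hτ x
  let a : ker q →ₗ[A] (P' × ker p) :=
    (ker q).subtype.prod ((-(τ ∘ₗ (ker q).subtype)).codRestrict (ker p) (by
      intro x; simp [hτ']))
  let b : (P' × ker p) →ₗ[A] ker q :=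
    (LinearMap.fst A P' (ker p) - σ ∘ₗ ((ker p).subtype ∘ₗ LinearMap.snd A P' (ker p)
      + τ ∘ₗ LinearMap.fst A P' (ker p))).codRestrict (ker q) (by
      rintro ⟨y, z, hz⟩
      have : p z = 0 := hz
      simp [hσ', hτ', this])
  refine Module.Projective.of_split a b ?_
  ext y
  change (y : P') - σ (-(τ y) + τ y) = y
  simp

theorem extend_of_ext {P M N : Type} [AddCommGroup P] [Module A P]
    [AddCommGroup M] [Module A M] [AddCommGroup N] [Module A N] (p : P →ₗ[A] M)
    (hp : Function.Surjective p) (h : Ext1Zero A M N) (f : ker p →ₗ[A] N) :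
    ∃ g : P →ₗ[A] N, ∀ x : ker p, g x = f x := by
  let D : Submodule A (P × N) := LinearMap.range ((ker p).subtype.prod (-f))
  let i : N →ₗ[A] ((P × N) ⧸ D) := D.mkQ ∘ₗ LinearMap.inr A P N
  have hD : D ≤ ker (p ∘ₗ LinearMap.fst A P N) := by
    rintro _ ⟨x, rfl⟩
    simp
  let pE : ((P × N) ⧸ D) →ₗ[A] M := D.liftQ (p ∘ₗ LinearMap.fst A P N) hD
  have hi : Function.Injective i := by
    rw [injective_iff_map_eq_zero]
    intro y hy
    have : ((0 : P), y) ∈ D := by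
      simpa [i, Submodule.Quotient.mk_eq_zero] using hy
    obtain ⟨x, hx⟩ := this
    simp only [LinearMap.prod_apply, Function.prod_apply, Prod.mk.injEq] at hx
    have hx0 : x = 0 := Subtype.ext hx.1
    rw [← hx.2, hx0]; simp
  have hpE : Function.Surjective pE := by
    intro m
    obtain ⟨x, rfl⟩ := hp m
    exact ⟨D.mkQ (x, 0), by simp [pE]⟩
  have hex : LinearMap.range i = ker pE := by
    apply le_antisymm
    · rintro _ ⟨y, rfl⟩
      simp [pE, i]
    · intro e he
      obtain ⟨⟨x, y⟩, rfl⟩ := D.mkQ_surjective e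
      have hx : p x = 0 := by simpa [pE] using he
      refine ⟨f ⟨x, hx⟩ + y, ?_⟩
      simp only [i, LinearMap.comp_apply, Submodule.mkQ_apply]
      rw [Submodule.Quotient.eq]
      refine ⟨-⟨x, hx⟩, ?_⟩
      simp
  obtain ⟨s, hs⟩ := h (ModuleCat.of A ((P × N) ⧸ D)) i pE hi hpE hex
  have hs' : ∀ m, pE (s m) = m := fun m => LinearMap.congr_fun hs m
  let d : P →ₗ[A] ((P × N) ⧸ D) := D.mkQ ∘ₗ LinearMap.inl A P N - s ∘ₗ p
  have hd : ∀ x, d x ∈ LinearMap.range i := by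
    intro x
    rw [hex]
    simp only [d, mem_ker, LinearMap.sub_apply, map_sub, LinearMap.comp_apply, hs']
    simp [pE]
  refine ⟨(LinearEquiv.ofInjective i hi).symm.toLinearMap ∘ₗ d.codRestrict _ hd, ?_⟩
  intro x
  have hx : p x = 0 := x.2
  simp only [LinearMap.comp_apply, LinearEquiv.coe_coe, LinearEquiv.symm_apply_eq]
  apply Subtype.ext
  simp only [d, codRestrict_apply, LinearMap.sub_apply, LinearMap.comp_apply, hx, map_zero, sub_zero]
  simp only [LinearEquiv.ofInjective_apply, i, LinearMap.comp_apply, Submodule.mkQ_apply]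
  rw [Submodule.Quotient.eq]
  exact ⟨x, by simp⟩

theorem ext_of_extend {P M N : Type} [AddCommGroup P] [Module A P]
    [AddCommGroup M] [Module A M] [AddCommGroup N] [Module A N] [Module.Projective A P]
    (p : P →ₗ[A] M) (hp : Function.Surjective p)
    (h : ∀ f : ker p →ₗ[A] N, ∃ g : P →ₗ[A] N, ∀ x : ker p, g x = f x) :
    Ext1Zero A M N := by
  intro E i q hi hq hex
  obtain ⟨σ, hσ⟩ := Module.projective_lifting_property q p hq
  have hσ' : ∀ x, q (σ x) = p x := fun x => LinearMap.congr_fun hσ x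
  have h1 : ∀ x : ker p, (σ ∘ₗ (ker p).subtype) x ∈ LinearMap.range i := by
    intro x
    rw [hex, mem_ker]
    simp [hσ']
  obtain ⟨g, hg⟩ := h ((LinearEquiv.ofInjective i hi).symm.toLinearMap ∘ₗ
    (σ ∘ₗ (ker p).subtype).codRestrict _ h1)
  have hg' : ∀ x : ker p, i (g x) = σ x := by
    intro x
    rw [hg]
    have := LinearEquiv.apply_symm_apply (LinearEquiv.ofInjective i hi)
      ((σ ∘ₗ (ker p).subtype).codRestrict _ h1 x)
    have := congrArg Subtype.val this
    exact this
  have hk : ker p ≤ ker (σ - i ∘ₗ g) := by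
    intro x hx
    simp [hg' ⟨x, hx⟩]
  refine ⟨((ker p).liftQ (σ - i ∘ₗ g) hk) ∘ₗ
    (p.quotKerEquivOfSurjective hp).symm.toLinearMap, ?_⟩
  ext m
  obtain ⟨x, rfl⟩ := hp m
  have : (p.quotKerEquivOfSurjective hp).symm (p x) = (ker p).mkQ x := by
    rw [LinearEquiv.symm_apply_eq]; rfl
  simp only [LinearMap.comp_apply, LinearEquiv.coe_coe, this]
  have h2 : q (i (g x)) = 0 := by
    have : i (g x) ∈ ker q := hex ▸ ⟨_, rfl⟩
    exact this
  simp [hσ', h2]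

theorem lift_of_ext {M M' N E : Type} [AddCommGroup E] [Module A E]
    [AddCommGroup M] [Module A M] [AddCommGroup N] [Module A N] [AddCommGroup M'] [Module A M']
    (h : Ext1Zero A M N) (i : N →ₗ[A] E) (p : E →ₗ[A] M') (hi : Function.Injective i)
    (hp : Function.Surjective p) (hex : LinearMap.range i = ker p) (a : M →ₗ[A] M') :
    ∃ s : M →ₗ[A] E, p ∘ₗ s = a := by
  let E' : Submodule A (E × M) := ker (p ∘ₗ LinearMap.fst A E M - a ∘ₗ LinearMap.snd A E M)
  have hpi : ∀ y, p (i y) = 0 := by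
    intro y
    have : i y ∈ ker p := hex ▸ ⟨_, rfl⟩
    exact this
  let i' : N →ₗ[A] E' := (LinearMap.inl A E M ∘ₗ i).codRestrict E' (by intro y; simp [E', hpi])
  let p' : E' →ₗ[A] M := LinearMap.snd A E M ∘ₗ E'.subtype
  have hE' : ∀ x : E', p x.1.1 = a x.1.2 := by
    rintro ⟨x, hx⟩
    have : p x.1 - a x.2 = 0 := by simpa [E'] using hx
    exact sub_eq_zero.mp this
  obtain ⟨s, hs⟩ := h (ModuleCat.of A E') i' p' (by
      intro x y hxy
      apply hi
      have := congrArg (fun z : E' => z.1.1) hxy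
      exact this) (by
      intro m
      obtain ⟨e, he⟩ := hp (a m)
      exact ⟨⟨(e, m), by simp [E', he]⟩, rfl⟩) (by
      apply le_antisymm
      · rintro _ ⟨y, rfl⟩
        rfl
      · rintro ⟨⟨e, m⟩, hx⟩ hm
        have hm0 : m = 0 := by simpa [p'] using hm
        subst hm0
        have he : p e = 0 := by simpa [E'] using hx
        have : e ∈ LinearMap.range i := hex ▸ he
        obtain ⟨y, rfl⟩ := this
        exact ⟨y, rfl⟩)
  refine ⟨LinearMap.fst A E M ∘ₗ E'.subtype ∘ₗ s, ?_⟩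
  ext m
  have h1 := hE' (s m)
  have h2 : (s m).1.2 = m := LinearMap.congr_fun hs m
  simp only [LinearMap.comp_apply, LinearMap.fst_apply, Submodule.subtype_apply]
  rw [h1, h2]

theorem ext_retract {T X N : Type} [AddCommGroup T] [Module A T]
    [AddCommGroup X] [Module A X] [AddCommGroup N] [Module A N]
    (h : Ext1Zero A T N) (a : X →ₗ[A] T) (b : T →ₗ[A] X) (hab : b ∘ₗ a = LinearMap.id) :
    Ext1Zero A X N := by
  intro E i p hi hp hex
  obtain ⟨s, hs⟩ := lift_of_ext h i p hi hp hex b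
  refine ⟨s ∘ₗ a, ?_⟩
  change p ∘ₗ (s ∘ₗ a) = _
  rw [← LinearMap.comp_assoc, hs, hab]

theorem ext_pi {α : Type} [Fintype α] (M : α → Type) {N : Type}
    [∀ s, AddCommGroup (M s)] [∀ s, Module A (M s)] [AddCommGroup N] [Module A N]
    (h : ∀ s, Ext1Zero A (M s) N) : Ext1Zero A (∀ s, M s) N := by
  classical
  intro E i p hi hp hex
  choose σ hσ using fun s => lift_of_ext (h s) i p hi hp hex (LinearMap.single A M s)
  refine ⟨∑ s, σ s ∘ₗ LinearMap.proj s, ?_⟩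
  refine LinearMap.ext fun x => ?_
  have : ∀ s y, p (σ s y) = LinearMap.single A M s y := fun s y => LinearMap.congr_fun (hσ s) y
  simp only [LinearMap.comp_apply, LinearMap.sum_apply, map_sum, LinearMap.proj_apply, this,
    LinearMap.id_apply]
  exact LinearMap.sum_single_apply M x

/-- Extending a map along an injection with cokernel `M` with `Ext¹(M,N) = 0`. -/
theorem extend_of_exact {U V M N : Type} [AddCommGroup U] [Module A U] [AddCommGroup V]
    [Module A V] [AddCommGroup M] [Module A M] [AddCommGroup N] [Module A N]
    (f : U →ₗ[A] V) (g : V →ₗ[A] M) (hf : Function.Injective f) (hg : Function.Surjective g)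
    (hex : LinearMap.range f = ker g) (h : Ext1Zero A M N) (a : U →ₗ[A] N) :
    ∃ b : V →ₗ[A] N, b ∘ₗ f = a := by
  have hm : ∀ x, f x ∈ ker g := fun x => hex ▸ ⟨x, rfl⟩
  have hbij : Function.Bijective (f.codRestrict (ker g) hm) := by
    refine ⟨?_, ?_⟩
    · intro x y hxy
      exact hf (congrArg Subtype.val hxy)
    · rintro ⟨y, hy⟩
      rw [← hex] at hy
      obtain ⟨x, rfl⟩ := hy
      exact ⟨x, rfl⟩
  let e := LinearEquiv.ofBijective _ hbij
  obtain ⟨b, hb⟩ := extend_of_ext g hg h (a ∘ₗ e.symm.toLinearMap)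
  refine ⟨b, ?_⟩
  ext x
  have := hb (e x)
  simpa [e] using this

/-! add closure -/

theorem inAdd_retract {T X Y : Type} [AddCommGroup T] [Module A T] [AddCommGroup X] [Module A X]
    [AddCommGroup Y] [Module A Y] (h : InAdd A T X) (a : Y →ₗ[A] X) (b : X →ₗ[A] Y)
    (hab : b ∘ₗ a = LinearMap.id) : InAdd A T Y := by
  obtain ⟨k, f, g, hfg⟩ := h
  refine ⟨k, f ∘ₗ a, b ∘ₗ g, ?_⟩
  refine LinearMap.ext fun y => ?_
  have h1 : g (f (a y)) = a y := LinearMap.congr_fun hfg (a y)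
  change b (g (f (a y))) = y
  rw [h1]
  exact LinearMap.congr_fun hab y

theorem inAdd_self {T : Type} [AddCommGroup T] [Module A T] : InAdd A T T :=
  ⟨1, LinearMap.pi fun _ => LinearMap.id, LinearMap.proj 0, by ext; simp⟩

theorem inAdd_fun {T : Type} [AddCommGroup T] [Module A T] {α : Type} [Fintype α] :
    InAdd A T (α → T) :=
  ⟨Fintype.card α, (LinearEquiv.funCongrLeft A T (Fintype.equivFin α).symm).toLinearMap,
    (LinearEquiv.funCongrLeft A T (Fintype.equivFin α)).toLinearMap, by ext; simp⟩

theorem inAdd_pi {T : Type} [AddCommGroup T] [Module A T] {α : Type} [Fintype α]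
    (M : α → Type) [∀ s, AddCommGroup (M s)] [∀ s, Module A (M s)]
    (h : ∀ s, InAdd A T (M s)) : InAdd A T (∀ s, M s) := by
  choose k f g hfg using h
  have hfg' : ∀ s x, g s (f s x) = x := fun s x => LinearMap.congr_fun (hfg s) x
  refine inAdd_retract (X := (Σ s, Fin (k s)) → T) inAdd_fun
    (LinearMap.pi fun p => LinearMap.proj p.2 ∘ₗ f p.1 ∘ₗ LinearMap.proj p.1)
    (LinearMap.pi fun s => g s ∘ₗ LinearMap.pi fun j => LinearMap.proj ⟨s, j⟩) ?_
  refine LinearMap.ext fun x => funext fun s => ?_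
  exact hfg' s (x s)

theorem inAdd_prod {T X Y : Type} [AddCommGroup T] [Module A T] [AddCommGroup X] [Module A X]
    [AddCommGroup Y] [Module A Y] (h : InAdd A T X) (h' : InAdd A T Y) : InAdd A T (X × Y) := by
  obtain ⟨k, f, g, hfg⟩ := h
  obtain ⟨k', f', g', hfg'⟩ := h'
  have h1 : ∀ x, g (f x) = x := fun x => LinearMap.congr_fun hfg x
  have h2 : ∀ x, g' (f' x) = x := fun x => LinearMap.congr_fun hfg' x
  refine inAdd_retract (X := (Fin k ⊕ Fin k') → T) inAdd_fun
    (LinearMap.pi fun p => Sum.elim (fun j => LinearMap.proj j ∘ₗ f ∘ₗ LinearMap.fst A X Y)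
      (fun j => LinearMap.proj j ∘ₗ f' ∘ₗ LinearMap.snd A X Y) p)
    (LinearMap.prod (g ∘ₗ LinearMap.pi fun j => LinearMap.proj (Sum.inl j))
      (g' ∘ₗ LinearMap.pi fun j => LinearMap.proj (Sum.inr j))) ?_
  refine LinearMap.ext fun x => Prod.ext ?_ ?_
  · exact h1 x.1
  · exact h2 x.2

theorem inAdd_zero {T X : Type} [AddCommGroup T] [Module A T] [AddCommGroup X] [Module A X]
    [Subsingleton X] : InAdd A T X :=
  ⟨0, 0, 0, LinearMap.ext fun _ => Subsingleton.elim _ _⟩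

theorem ext_inAdd {T U N : Type} [AddCommGroup T] [Module A T]
    [AddCommGroup U] [Module A U] [AddCommGroup N] [Module A N]
    (h : Ext1Zero A T N) (hU : InAdd A T U) : Ext1Zero A U N := by
  obtain ⟨k, f, g, hfg⟩ := hU
  exact ext_retract (ext_pi (fun _ : Fin k => T) fun _ => h) f g hfg

/-- A nonzero retract of an indecomposable module is everything. -/
theorem equiv_of_retract {M X : Type} [AddCommGroup M] [Module A M] [AddCommGroup X]
    [Module A X] [Nontrivial X] (hM : IsIndecomposableMod A M) (a : X →ₗ[A] M) (b : M →ₗ[A] X)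
    (hab : Function.Bijective (b ∘ₗ a)) : Nonempty (X ≃ₗ[A] M) := by
  have hc : IsCompl (LinearMap.range a) (ker b) := by
    constructor
    · rw [Submodule.disjoint_def]
      rintro _ ⟨x, rfl⟩ hx
      have : (b ∘ₗ a) x = (b ∘ₗ a) 0 := by simpa using hx
      rw [hab.1 this]; simp
    · rw [codisjoint_iff, eq_top_iff]
      intro m _
      obtain ⟨x, hx⟩ := hab.2 (b m)
      have hx' : b (a x) = b m := hx
      rw [Submodule.mem_sup]
      exact ⟨a x, ⟨x, rfl⟩, m - a x, by simp [hx'], by abel⟩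
  have hainj : Function.Injective a := by
    intro x y hxy
    exact hab.1 (by simp [hxy])
  rcases hM.2 _ _ hc with h | h
  · exfalso
    obtain ⟨x, hx⟩ := exists_ne (0 : X)
    apply hx
    apply hainj
    have : a x ∈ LinearMap.range a := ⟨x, rfl⟩
    rw [h] at this
    simpa using this
  · refine ⟨LinearEquiv.ofBijective a ⟨hainj, ?_⟩⟩
    rw [← LinearMap.range_eq_top]
    have := hc.sup_eq_top
    rwa [h, sup_bot_eq] at this

end General
end Har

namespace Har
open LinearMap

/-- Abstract version of the chains of projective modules in a left Harada algebra. -/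
structure Sys (A : Type) [Ring A] where
  ι : Type
  [fint : Fintype ι]
  [dece : DecidableEq ι]
  n : ι → ℕ
  npos : ∀ i, 0 < n i
  E : ι → Type
  [acg : ∀ i, AddCommGroup (E i)]
  [mod : ∀ i, Module A (E i)]
  G : ∀ i, ℕ → Submodule A (E i)
  G0 : ∀ i, G i 0 = ⊤
  anti : ∀ i, Antitone (G i)
  ne : ∀ i j, j < n i → ¬ G i j ≤ G i (j + 1)
  loc : ∀ i j, j < n i → ∀ N : Submodule A (E i), N ≤ G i j → N = G i j ∨ N ≤ G i (j + 1)
  proj : ∀ i j, j < n i → Module.Projective A (G i j)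
  finE : ∀ i, Module.Finite A (E i)
  inj : ∀ i, Module.Injective A (E i)
  dich : ∀ i k (f : E i →ₗ[A] E k), LinearMap.range f ≤ G k (n k) ∨
    (i = k ∧ Function.Bijective f ∧ ∀ j, (G i j).map f = G k j)
  gen : ∀ (M : Type) [AddCommGroup M] [Module A M] (N : Submodule A M),
    (∀ i j, j < n i → ∀ f : G i j →ₗ[A] M, LinearMap.range f ≤ N) → N = ⊤

attribute [instance] Sys.fint Sys.dece Sys.acg Sys.mod Sys.finE

namespace Sys
variable {A : Type} [Ring A] (S : Sys A)

/-- The chain of projectives, ending in zero. -/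
def F (i : S.ι) (j : ℕ) : Submodule A (S.E i) := if j < S.n i then S.G i j else ⊥

/-- The module `F_k / F_l`. -/
abbrev X (i : S.ι) (k l : ℕ) : Type := ↥(S.F i k) ⧸ (S.F i l).submoduleOf (S.F i k)

variable {S}

theorem F_lt {i : S.ι} {j : ℕ} (h : j < S.n i) : S.F i j = S.G i j := by simp [F, h]

theorem F_ge {i : S.ι} {j : ℕ} (h : S.n i ≤ j) : S.F i j = ⊥ := by
  simp [F, Nat.not_lt.mpr h]

theorem F_le_G (i : S.ι) (j : ℕ) : S.F i j ≤ S.G i j := by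
  by_cases h : j < S.n i
  · rw [F_lt h]
  · rw [F_ge (by omega)]; exact bot_le

theorem F_anti (i : S.ι) : Antitone (S.F i) := by
  intro a b hab
  by_cases h : b < S.n i
  · rw [F_lt h, F_lt (by omega)]; exact S.anti i hab
  · rw [F_ge (by omega)]; exact bot_le

theorem F_not_le {i : S.ι} {k l : ℕ} (hk : k < S.n i) (hkl : k < l) : ¬ S.F i k ≤ S.F i l := by
  intro h
  apply S.ne i k hk
  rw [← F_lt hk]
  exact h.trans ((F_le_G i l).trans (S.anti i hkl))

theorem Gn_le_F {i : S.ι} {j : ℕ} (hj : j < S.n i) : S.G i (S.n i) ≤ S.F i j := by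
  rw [F_lt hj]; exact S.anti i hj.le

instance projF (i : S.ι) (j : ℕ) : Module.Projective A (S.F i j) := by
  by_cases h : j < S.n i
  · rw [F_lt h]; exact S.proj i j h
  · rw [F_ge (by omega)]; infer_instance

variable (S) in
/-- Maps which are not isomorphisms. -/
def Small {i k : S.ι} (f : S.E i →ₗ[A] S.E k) : Prop := LinearMap.range f ≤ S.G k (S.n k)

theorem Small.apply {i k : S.ι} {f : S.E i →ₗ[A] S.E k} (h : S.Small f) (x) :
    f x ∈ S.G k (S.n k) := h ⟨x, rfl⟩

theorem Small.apply_F {i k : S.ι} {f : S.E i →ₗ[A] S.E k} (h : S.Small f) (x) {j : ℕ}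
    (hj : j < S.n k) : f x ∈ S.F k j := Gn_le_F hj (h.apply x)

theorem small_of_apply {i k : S.ι} {f : S.E i →ₗ[A] S.E k} (h : ∀ x, f x ∈ S.G k (S.n k)) :
    S.Small f := by rintro _ ⟨x, rfl⟩; exact h x

theorem not_small_id (i : S.ι) : ¬ S.Small (LinearMap.id : S.E i →ₗ[A] S.E i) := by
  intro h
  apply S.ne i 0 (S.npos i)
  intro x _
  exact S.anti i (S.npos i) (h.apply x)

theorem iso_of_not_small {i k : S.ι} {f : S.E i →ₗ[A] S.E k} (h : ¬ S.Small f) :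
    i = k ∧ Function.Bijective f ∧ (∀ j, (S.F i j).map f = S.F k j) ∧ (∀ j, (S.G i j).map f = S.G k j) := by
  rcases S.dich i k f with h' | ⟨h1, h2, h3⟩
  · exact absurd h' h
  · refine ⟨h1, h2, ?_, h3⟩
    subst h1
    intro j
    by_cases hj : j < S.n i
    · rw [F_lt hj, h3]
    · rw [F_ge (by omega)]; simp

theorem Small.comp_left {i k l : S.ι} {f : S.E i →ₗ[A] S.E k} (h : S.Small f)
    (g : S.E k →ₗ[A] S.E l) : S.Small (g ∘ₗ f) := by
  by_cases hg : S.Small g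
  · exact small_of_apply fun x => hg.apply _
  · obtain ⟨rfl, _, _, h4⟩ := iso_of_not_small hg
    refine small_of_apply fun x => ?_
    rw [← h4]
    exact ⟨_, h.apply x, rfl⟩

theorem small_sum {i k : S.ι} {α : Type} (s : Finset α) (f : α → S.E i →ₗ[A] S.E k)
    (h : ∀ a ∈ s, S.Small (f a)) : S.Small (∑ a ∈ s, f a) := by
  refine small_of_apply fun x => ?_
  rw [LinearMap.sum_apply]
  exact Submodule.sum_mem _ fun a ha => (h a ha).apply x

theorem not_small_id_sub {i : S.ι} {f : S.E i →ₗ[A] S.E i} (h : S.Small f) :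
    ¬ S.Small (LinearMap.id - f) := by
  intro h'
  apply not_small_id i
  refine small_of_apply fun x => ?_
  have := Submodule.add_mem _ (h'.apply x) (h.apply x)
  simpa using this

theorem extendE {k : S.ι} {M : Type} [AddCommGroup M] [Module A M] {N : Type} [AddCommGroup N]
    [Module A N] (u : N →ₗ[A] M) (hu : Function.Injective u) (f : N →ₗ[A] S.E k) :
    ∃ g : M →ₗ[A] S.E k, ∀ x, g (u x) = f x := by
  obtain ⟨g, hg⟩ := (S.inj k).out u hu f
  exact ⟨g, hg⟩

theorem extF {i k : S.ι} {l : ℕ} (f : S.F i l →ₗ[A] S.E k) :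
    ∃ g : S.E i →ₗ[A] S.E k, ∀ x : S.F i l, g x = f x := by
  obtain ⟨g, hg⟩ := (S.inj k).out (S.F i l).subtype Subtype.val_injective f
  exact ⟨g, hg⟩

/-- The quotient map. -/
abbrev mkX (i : S.ι) (k l : ℕ) : S.F i k →ₗ[A] S.X i k l := Submodule.mkQ _

theorem mkX_surj (i : S.ι) (k l : ℕ) : Function.Surjective (mkX i k l) :=
  Submodule.mkQ_surjective _

theorem mkX_eq_zero {i : S.ι} {k l : ℕ} (x : S.F i k) : mkX i k l x = 0 ↔ (x : S.E i) ∈ S.F i l := by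
  simp only [mkX, Submodule.mkQ_apply, Submodule.Quotient.mk_eq_zero]
  exact Iff.rfl

theorem mkX_eq {i : S.ι} {k l : ℕ} (x y : S.F i k) :
    mkX i k l x = mkX i k l y ↔ (x : S.E i) - y ∈ S.F i l := by
  rw [← sub_eq_zero, ← map_sub, mkX_eq_zero]; rfl

theorem mem_ker_mkX {i : S.ι} {k l : ℕ} (x : S.F i k) :
    x ∈ ker (mkX i k l) ↔ (x : S.E i) ∈ S.F i l := mkX_eq_zero x

theorem F_local {i : S.ι} {k : ℕ} (hk : k < S.n i) (N : Submodule A (S.F i k)) :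
    N = ⊤ ∨ ∀ x ∈ N, (x : S.E i) ∈ S.G i (k + 1) := by
  have h1 : N.map (S.F i k).subtype ≤ S.G i k := by
    rw [← F_lt hk]; exact Submodule.map_subtype_le _ _
  rcases S.loc i k hk _ h1 with h | h
  · left
    rw [eq_top_iff]
    intro x _
    have : (x : S.E i) ∈ N.map (S.F i k).subtype := by
      rw [h, ← F_lt hk]; exact x.2
    obtain ⟨y, hy, hyx⟩ := this
    have : y = x := Subtype.ext hyx
    exact this ▸ hy
  · right
    intro x hx
    exact h ⟨x, hx, rfl⟩

theorem F_gen_exists {i : S.ι} {k : ℕ} (hk : k < S.n i) : ∃ x : S.F i k, (x : S.E i) ∉ S.G i (k+1) := by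
  by_contra! h
  apply S.ne i k hk
  rw [← F_lt hk]
  intro x hx
  exact h ⟨x, hx⟩

theorem X_local {i : S.ι} {k l : ℕ} (hk : k < S.n i) (hkl : k < l) :
    ∃ W : Submodule A (S.X i k l), W ≠ ⊤ ∧ ∀ N : Submodule A (S.X i k l), N ≠ ⊤ → N ≤ W := by
  refine ⟨((S.G i (k+1)).submoduleOf (S.F i k)).map (mkX i k l), ?_, ?_⟩
  · intro h
    obtain ⟨x, hx⟩ := F_gen_exists hk
    have : mkX i k l x ∈ (⊤ : Submodule A (S.X i k l)) := trivial
    rw [← h] at this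
    obtain ⟨y, hy, hyx⟩ := this
    rw [mkX_eq] at hyx
    apply hx
    have h1 : (y : S.E i) ∈ S.G i (k+1) := hy
    have h2 : (y : S.E i) - x ∈ S.G i (k+1) := S.anti i hkl (F_le_G i l hyx)
    have := Submodule.sub_mem _ h1 h2
    simpa using this
  · intro N hN y hy
    obtain ⟨x, rfl⟩ := mkX_surj i k l y
    rcases F_local hk (N.comap (mkX i k l)) with h | h
    · exfalso
      apply hN
      rw [eq_top_iff]
      intro z _
      obtain ⟨w, rfl⟩ := mkX_surj i k l z
      have : w ∈ N.comap (mkX i k l) := by rw [h]; trivial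
      exact this
    · exact ⟨x, h x hy, rfl⟩

theorem X_nontrivial {i : S.ι} {k l : ℕ} (hk : k < S.n i) (hkl : k < l) :
    Nontrivial (S.X i k l) := by
  obtain ⟨W, hW, _⟩ := X_local hk hkl
  by_contra h
  rw [not_nontrivial_iff_subsingleton] at h
  exact hW (Subsingleton.elim _ _)

theorem X_indec {i : S.ι} {k l : ℕ} (hk : k < S.n i) (hkl : k < l) :
    IsIndecomposableMod A (S.X i k l) := by
  refine ⟨X_nontrivial hk hkl, fun N N' h => ?_⟩
  obtain ⟨W, hW, hW'⟩ := X_local hk hkl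
  by_cases h1 : N = ⊤
  · right
    subst h1
    simpa using h.inf_eq_bot
  by_cases h2 : N' = ⊤
  · left
    subst h2
    simpa using h.inf_eq_bot
  exfalso
  apply hW
  rw [eq_top_iff, ← h.sup_eq_top]
  exact sup_le (hW' _ h1) (hW' _ h2)

theorem X_exists_bij [IsNoetherianRing A] {i : S.ι} {k l : ℕ} (hk : k < S.n i) (hkl : k < l)
    {α : Type} (s : Finset α) (h : α → S.X i k l →ₗ[A] S.X i k l)
    (hs : ∑ a ∈ s, h a = LinearMap.id) : ∃ a ∈ s, Function.Bijective (h a) := by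
  obtain ⟨W, hW, hW'⟩ := X_local hk hkl
  by_contra! hcon
  apply hW
  rw [eq_top_iff]
  intro x _
  have : x = ∑ a ∈ s, h a x := by
    rw [← LinearMap.sum_apply, hs]; rfl
  rw [this]
  refine Submodule.sum_mem _ fun a ha => ?_
  refine hW' (LinearMap.range (h a)) ?_ ⟨x, rfl⟩
  intro htop
  have hsurj : Function.Surjective (h a) := LinearMap.range_eq_top.mp htop
  exact hcon a ha ⟨IsNoetherian.injective_of_surjective_endomorphism _ hsurj, hsurj⟩

/-- Nonzero surjections `X → X'` are controlled by the indices. -/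
theorem X_surj_le {i i' : S.ι} {k l k' l' : ℕ} (hk : k < S.n i) (hl : l ≤ S.n i)
    (hkl : k < l) (hl' : l' ≤ S.n i') (hk' : k' < S.n i') (hkl' : k' < l')
    (f : S.X i k l →ₗ[A] S.X i' k' l') (hf : Function.Surjective f) :
    i = i' ∧ k' ≤ k ∧ l' ≤ l := by
  obtain ⟨φ, hφ⟩ := Module.projective_lifting_property (mkX i' k' l') (f ∘ₗ mkX i k l)
    (mkX_surj _ _ _)
  have hφ' : ∀ x, mkX i' k' l' (φ x) = f (mkX i k l x) := fun x => LinearMap.congr_fun hφ x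
  obtain ⟨g, hg⟩ := extF ((S.F i' k').subtype ∘ₗ φ)
  have hg' : ∀ x : S.F i k, g (x : S.E i) = (φ x : S.E i') := hg
  have hns : ¬ S.Small g := by
    intro hs
    obtain ⟨y, hy⟩ := F_gen_exists hk'
    obtain ⟨z, hz⟩ := hf (mkX i' k' l' y)
    obtain ⟨x, rfl⟩ := mkX_surj i k l z
    rw [← hφ', mkX_eq] at hz
    apply hy
    have h1 : (φ x : S.E i') ∈ S.G i' (k'+1) := by
      rw [← hg']; exact S.anti i' hk' (hs.apply _)
    have h2 := S.anti i' hkl' (F_le_G i' l' hz)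
    have := Submodule.sub_mem _ h1 h2
    simpa using this
  obtain ⟨rfl, hbij, hF, -⟩ := iso_of_not_small hns
  refine ⟨rfl, ?_, ?_⟩
  · by_contra hlt
    push Not at hlt
    apply F_not_le hk hlt
    rw [← hF k]
    rintro _ ⟨x, hx, rfl⟩
    rw [hg' ⟨x, hx⟩]
    exact (φ ⟨x, hx⟩).2
  · by_contra hlt
    push Not at hlt
    apply F_not_le (show l < S.n i by omega) hlt
    rw [← hF l]
    rintro _ ⟨x, hx, rfl⟩
    have hx' := F_anti i hkl.le hx
    rw [hg' ⟨x, hx'⟩, ← mkX_eq_zero, hφ', (mkX_eq_zero _).mpr hx, map_zero]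

theorem X_equiv_eq {i i' : S.ι} {k l k' l' : ℕ} (hkl : k < l) (hl : l ≤ S.n i)
    (hkl' : k' < l') (hl' : l' ≤ S.n i') (e : S.X i k l ≃ₗ[A] S.X i' k' l') :
    (i, k, l) = (i', k', l') := by
  obtain ⟨rfl, h1, h2⟩ := X_surj_le (by omega) hl hkl hl' (by omega) hkl' e.toLinearMap e.surjective
  obtain ⟨_, h3, h4⟩ := X_surj_le (by omega) hl' hkl' hl (by omega) hkl e.symm.toLinearMap e.symm.surjective
  rw [show k = k' by omega, show l = l' by omega]

end Sys
end Har

namespace Har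
open LinearMap
namespace Sys
variable {A : Type} [Ring A] {S : Sys A}

theorem iso_apply {i k : S.ι} {f : S.E i →ₗ[A] S.E k} (h : ¬ S.Small f) {x : S.E i} {j : ℕ}
    (hx : x ∈ S.F i j) : f x ∈ S.F k j := by
  rw [← (iso_of_not_small h).2.2.1]
  exact ⟨x, hx, rfl⟩

theorem genF {M : Type} [AddCommGroup M] [Module A M] (N : Submodule A M)
    (h : ∀ i j, j < S.n i → ∀ f : S.F i j →ₗ[A] M, LinearMap.range f ≤ N) : N = ⊤ := by
  apply S.gen
  intro i j hj f
  rintro _ ⟨x, rfl⟩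
  exact h i j hj (f ∘ₗ (LinearEquiv.ofEq _ _ (F_lt hj)).toLinearMap)
    ⟨(LinearEquiv.ofEq _ _ (F_lt hj)).symm x, rfl⟩

/-- The inclusion `F_l → F_k`. -/
abbrev inc (i : S.ι) {k l : ℕ} (h : k ≤ l) : S.F i l →ₗ[A] S.F i k :=
  Submodule.inclusion (F_anti i h)

theorem ker_equiv (i : S.ι) {k l : ℕ} (h : k ≤ l) :
    ∃ e : S.F i l ≃ₗ[A] ker (mkX i k l), ∀ x, ((e x : S.F i k)) = inc i h x := by
  have hm : ∀ x, inc i h x ∈ ker (mkX i k l) := fun x => (mem_ker_mkX _).mpr x.2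
  refine ⟨LinearEquiv.ofBijective ((inc i h).codRestrict _ hm) ⟨?_, ?_⟩, fun x => rfl⟩
  · intro x y hxy
    have h1 := congrArg (fun z : ker (mkX i k l) => ((z : S.F i k) : S.E i)) hxy
    exact Subtype.ext h1
  · rintro ⟨y, hy⟩
    exact ⟨⟨y, (mem_ker_mkX y).mp hy⟩, rfl⟩

theorem proj_ker (i : S.ι) {k l : ℕ} (h : k ≤ l) : Module.Projective A (ker (mkX i k l)) := by
  obtain ⟨e, _⟩ := ker_equiv i h
  exact Module.Projective.of_equiv e

theorem ext_X_iff {i : S.ι} {k l : ℕ} (h : k ≤ l) {N : Type} [AddCommGroup N] [Module A N] :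
    Ext1Zero A (S.X i k l) N ↔ ∀ f : S.F i l →ₗ[A] N, ∃ g : S.F i k →ₗ[A] N, g ∘ₗ inc i h = f := by
  obtain ⟨e, he⟩ := ker_equiv i h
  constructor
  · intro hE f
    obtain ⟨g, hg⟩ := extend_of_ext (mkX i k l) (mkX_surj _ _ _) hE (f ∘ₗ e.symm.toLinearMap)
    refine ⟨g, ?_⟩
    ext x
    have := hg (e x)
    rw [he] at this
    simpa using this
  · intro hf
    apply ext_of_extend (mkX i k l) (mkX_surj _ _ _)
    intro f
    obtain ⟨g, hg⟩ := hf (f ∘ₗ e.toLinearMap)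
    refine ⟨g, fun x => ?_⟩
    obtain ⟨y, rfl⟩ := e.surjective x
    rw [he]
    exact LinearMap.congr_fun hg y

/-- Crossing of intervals. -/
def Cross (p q : ℕ × ℕ) : Prop := p.1 < q.1 ∧ q.1 ≤ p.2 ∧ p.2 < q.2

theorem ext_X_X {i i' : S.ι} {k l a b : ℕ} (hkl : k < l) (hl : l ≤ S.n i) (hab : a < b)
    (hb : b ≤ S.n i') (h : i = i' → ¬ Cross (k, l) (a, b)) :
    Ext1Zero A (S.X i k l) (S.X i' a b) := by
  rw [ext_X_iff hkl.le]
  intro f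
  obtain ⟨φ, hφ⟩ := Module.projective_lifting_property (mkX i' a b) f (mkX_surj _ _ _)
  have hφ' : ∀ x, mkX i' a b (φ x) = f x := fun x => LinearMap.congr_fun hφ x
  obtain ⟨g, hg⟩ := extF ((S.F i' a).subtype ∘ₗ φ)
  have hg' : ∀ x : S.F i l, g (x : S.E i) = (φ x : S.E i') := hg
  have key : (∀ x : S.F i k, g x ∈ S.F i' a) → ∃ g : S.F i k →ₗ[A] S.X i' a b, g ∘ₗ inc i hkl.le = f := by
    intro hk
    refine ⟨mkX i' a b ∘ₗ (g ∘ₗ (S.F i k).subtype).codRestrict _ hk, ?_⟩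
    refine LinearMap.ext fun x => ?_
    rw [← hφ']
    change mkX i' a b ⟨g x, _⟩ = _
    congr 1
    exact Subtype.ext (hg' x)
  by_cases hs : S.Small g
  · exact key fun x => hs.apply_F _ (by omega)
  · obtain ⟨rfl, hbij, hF, -⟩ := iso_of_not_small hs
    by_cases hka : a ≤ k
    · apply key
      intro x
      exact F_anti i hka (iso_apply hs x.2)
    · have h' := h rfl
      have hal : a ≤ l := by
        by_contra hlt
        apply F_not_le (show l < S.n i by omega) (show l < a by omega)
        rw [← hF l]
        rintro _ ⟨x, hx, rfl⟩
        rw [hg' ⟨x, hx⟩]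
        exact (φ _).2
      have hbl : b ≤ l := by
        by_contra hlt
        exact h' ⟨by simp only; omega, hal, by simp only; omega⟩
      refine ⟨0, ?_⟩
      refine LinearMap.ext fun x => ?_
      rw [← hφ']
      symm
      change mkX i a b (φ x) = 0
      rw [mkX_eq_zero, ← hg']
      exact F_anti i hbl (iso_apply hs x.2)

theorem not_cross_of_ext {i : S.ι} {k l a b : ℕ} (hkl : k < l) (hb : b ≤ S.n i)
    (h : Ext1Zero A (S.X i k l) (S.X i a b)) : ¬ Cross (k, l) (a, b) := by
  rintro ⟨h1, h2, h3⟩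
  simp only at h1 h2 h3
  rw [ext_X_iff hkl.le] at h
  obtain ⟨g, hg⟩ := h (mkX i a b ∘ₗ inc i h2)
  obtain ⟨φ, hφ⟩ := Module.projective_lifting_property (mkX i a b) g (mkX_surj _ _ _)
  have hφ' : ∀ x, mkX i a b (φ x) = g x := fun x => LinearMap.congr_fun hφ x
  obtain ⟨γ, hγ⟩ := extF ((S.F i a).subtype ∘ₗ φ)
  have hγ' : ∀ x : S.F i k, γ (x : S.E i) = (φ x : S.E i) := hγ
  have hs : S.Small γ := by
    by_contra hs
    obtain ⟨-, -, hF, -⟩ := iso_of_not_small hs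
    apply F_not_le (show k < S.n i by omega) h1
    rw [← hF k]
    rintro _ ⟨x, hx, rfl⟩
    rw [hγ' ⟨x, hx⟩]
    exact (φ _).2
  obtain ⟨-, -, hF, -⟩ := iso_of_not_small (not_small_id_sub hs)
  apply F_not_le (show l < S.n i by omega) h3
  rw [← hF l]
  rintro _ ⟨x, hx, rfl⟩
  have e1 : g (inc i hkl.le ⟨x, hx⟩) = mkX i a b (inc i h2 ⟨x, hx⟩) := LinearMap.congr_fun hg ⟨x, hx⟩
  rw [← hφ', eq_comm, mkX_eq, ← hγ'] at e1
  exact e1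

/-- A nonzero finitely generated projective has some `F_{ij}` as a retract. -/
theorem proj_retract [IsNoetherianRing A] (Q : Type) [AddCommGroup Q] [Module A Q]
    [Module.Finite A Q] [Module.Projective A Q] [Nontrivial Q] :
    ∃ i j, j < S.n i ∧ ∃ (v : S.F i j →ₗ[A] Q) (w : Q →ₗ[A] S.F i j),
      Function.Bijective (w ∘ₗ v) := by
  obtain ⟨C, hC, -⟩ := (eq_top_or_exists_le_coatom (⊥ : Submodule A Q)).resolve_left bot_ne_top
  have : ∃ i j, j < S.n i ∧ ∃ v : S.F i j →ₗ[A] Q, ¬ LinearMap.range v ≤ C := by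
    by_contra! hcon
    exact hC.1 (genF C hcon)
  obtain ⟨i, j, hj, v, hv⟩ := this
  refine ⟨i, j, hj, v, ?_⟩
  have hsurj : Function.Surjective (C.mkQ ∘ₗ v) := by
    have h1 : LinearMap.range v ⊔ C = ⊤ := by
      apply hC.2
      refine lt_of_le_of_ne le_sup_right ?_
      intro h
      exact hv (h ▸ le_sup_left)
    intro z
    obtain ⟨q, rfl⟩ := C.mkQ_surjective z
    have : q ∈ LinearMap.range v ⊔ C := by rw [h1]; trivial
    obtain ⟨_, ⟨x, rfl⟩, c, hc, rfl⟩ := Submodule.mem_sup.mp this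
    refine ⟨x, ?_⟩
    simp [(Submodule.Quotient.mk_eq_zero C).mpr hc]
  obtain ⟨w, hw⟩ := Module.projective_lifting_property (C.mkQ ∘ₗ v) C.mkQ hsurj
  refine ⟨w, ?_⟩
  have hsur : Function.Surjective (w ∘ₗ v) := by
    rw [← LinearMap.range_eq_top]
    rcases F_local hj (LinearMap.range (w ∘ₗ v)) with h | h
    · exact h
    · exfalso
      rcases F_local hj (ker (C.mkQ ∘ₗ v)) with h' | h'
      · apply hv
        rintro _ ⟨x, rfl⟩
        have : x ∈ ker (C.mkQ ∘ₗ v) := by rw [h']; trivial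
        simpa [Submodule.Quotient.mk_eq_zero] using this
      · obtain ⟨x, hx⟩ := F_gen_exists hj
        apply hx
        have h1 := h _ ⟨x, rfl⟩
        have h2 : (w ∘ₗ v) x - x ∈ ker (C.mkQ ∘ₗ v) := by
          have := LinearMap.congr_fun hw (v x)
          rw [LinearMap.mem_ker, map_sub, sub_eq_zero]
          exact this
        have h2 := h' _ h2
        have := Submodule.sub_mem _ h1 h2
        simpa using this
  exact ⟨IsNoetherian.injective_of_surjective_endomorphism _ hsur, hsur⟩

theorem F_equiv_X (i : S.ι) (j : ℕ) : Nonempty (S.F i j ≃ₗ[A] S.X i j (S.n i)) := by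
  refine ⟨(Submodule.quotEquivOfEqBot _ ?_).symm⟩
  rw [eq_bot_iff]
  intro x hx
  have : (x : S.E i) ∈ S.F i (S.n i) := hx
  rw [F_ge le_rfl] at this
  exact Subtype.ext this

theorem classify_proj [IsNoetherianRing A] (M : Type) [AddCommGroup M] [Module A M]
    [Module.Finite A M] [Module.Projective A M] (hM : IsIndecomposableMod A M) :
    ∃ (i : S.ι) (k l : ℕ), k < l ∧ l ≤ S.n i ∧ Nonempty (S.X i k l ≃ₗ[A] M) := by
  have := hM.1
  obtain ⟨i, j, hj, v, w, hvw⟩ := proj_retract (S := S) M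
  obtain ⟨e⟩ := F_equiv_X i j
  have : Nontrivial (S.F i j) := by
    have := X_nontrivial hj hj
    exact e.toEquiv.nontrivial
  obtain ⟨e'⟩ := equiv_of_retract hM v w hvw
  exact ⟨i, j, S.n i, hj, le_rfl, ⟨e.symm.trans e'⟩⟩

end Sys
end Har

namespace Har
open LinearMap
namespace Sys
variable {A : Type} [Ring A] {S : Sys A}

instance projPi {α : Type} [Fintype α] (P : α → Type) [∀ a, AddCommGroup (P a)]
    [∀ a, Module A (P a)] [∀ a, Module.Projective A (P a)] : Module.Projective A (∀ a, P a) := by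
  classical
  exact Module.Projective.of_equiv (DFinsupp.linearEquivFunOnFintype (R := A) (M := P))

/-- existence of a component which is not small -/
theorem exists_iso_comp [IsNoetherianRing A] {N : ℕ} (σ : Fin N → S.ι) (κ : Fin N → ℕ)
    (Q : Submodule A (∀ t, S.F (σ t) (κ t))) [Module.Projective A Q] (hQ : Q ≠ ⊥) :
    ∃ (l : ℕ) (i : S.ι), l < S.n i ∧ ∃ u : S.F i l →ₗ[A] (∀ t, S.F (σ t) (κ t)), (∀ x, u x ∈ Q) ∧
      ∃ g : ∀ t, S.E i →ₗ[A] S.E (σ t), (∀ t (x : S.F i l), g t (x : S.E i) = (u x t : S.E (σ t))) ∧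
        ∃ t, ¬ S.Small (g t) := by
  have : Nontrivial Q := (Submodule.nontrivial_iff_ne_bot).mpr hQ
  obtain ⟨i, l, hl, v, w, hvw⟩ := proj_retract (S := S) Q
  have hv : Function.Injective v := by
    intro x y hxy
    exact hvw.1 (by simp [hxy])
  let u := Q.subtype ∘ₗ v
  have hu : Function.Injective u := Subtype.val_injective.comp hv
  obtain ⟨ω, hω⟩ := (S.inj i).out u hu (S.F i l).subtype
  choose g hg using fun t => extF ((S.F (σ t) (κ t)).subtype ∘ₗ LinearMap.proj t ∘ₗ u)
  choose h hh using fun t => extF (ω ∘ₗ LinearMap.single A (fun t => S.F (σ t) (κ t)) t)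
  refine ⟨l, i, hl, u, fun x => (v x).2, g, hg, ?_⟩
  by_contra! hcon
  have hs : S.Small (∑ t, h t ∘ₗ g t) := small_sum _ _ fun t _ => (hcon t).comp_left _
  obtain ⟨-, hb, -, -⟩ := iso_of_not_small (not_small_id_sub hs)
  obtain ⟨x, hx⟩ := F_gen_exists hl
  apply hx
  have : (x : S.E i) = 0 := by
    apply hb.1
    rw [map_zero, LinearMap.sub_apply, sub_eq_zero, LinearMap.sum_apply]
    have e1 : ∀ t, (h t ∘ₗ g t) (x : S.E i) =
        ω (LinearMap.single A (fun t => S.F (σ t) (κ t)) t (u x t)) := by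
      intro t
      rw [LinearMap.comp_apply, hg]
      exact hh t (u x t)
    rw [Finset.sum_congr rfl fun t _ => e1 t, ← map_sum]
    rw [show (∑ t, LinearMap.single A (fun t => S.F (σ t) (κ t)) t (u x t)) = u x from
      LinearMap.sum_single_apply _ (u x), hω]; rfl
  rw [this]; exact Submodule.zero_mem _

theorem exists_min_nat {P : ℕ → Prop} (h : ∃ l, P l) : ∃ l, P l ∧ ∀ l', P l' → l ≤ l' := by
  classical
  exact ⟨Nat.find h, Nat.find_spec h, fun l' h' => Nat.find_min' h h'⟩

theorem classify_aux [IsNoetherianRing A] (M : Type) [AddCommGroup M] [Module A M]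
    [Module.Finite A M] (hM : IsIndecomposableMod A M) (hpd : PdLeOne A M) (N : ℕ) :
    ∀ (σ : Fin N → S.ι) (κ : Fin N → ℕ), (∀ t, κ t < S.n (σ t)) →
    ∀ (p : (∀ t, S.F (σ t) (κ t)) →ₗ[A] M), Function.Surjective p →
    ∃ (i : S.ι) (k l : ℕ), k < l ∧ l ≤ S.n i ∧ Nonempty (S.X i k l ≃ₗ[A] M) := by
  classical
  induction N with
  | zero =>
    intro σ κ _ p hp
    exfalso
    have := hM.1
    obtain ⟨a, b, hab⟩ := exists_pair_ne M
    obtain ⟨a, rfl⟩ := hp a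
    obtain ⟨b, rfl⟩ := hp b
    exact hab (congrArg p (Subsingleton.elim _ _))
  | succ N ih =>
    intro σ κ hκ p hp
    have hQproj : Module.Projective A (ker p) := by
      obtain ⟨P, f, h1, h2, h3⟩ := hpd
      exact schanuel f p h2 hp
    by_cases hQ : ker p = ⊥
    · have e : (∀ t, S.F (σ t) (κ t)) ≃ₗ[A] M :=
        LinearEquiv.ofBijective p ⟨LinearMap.ker_eq_bot.mp hQ, hp⟩
      have : Module.Projective A M := Module.Projective.of_equiv e
      exact classify_proj M hM
    have hex := exists_iso_comp σ κ (ker p) hQ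
    obtain ⟨l, ⟨i, hl, u, hu, g, hg, hgt⟩, hmin⟩ := exists_min_nat hex
    obtain ⟨t, ht, htmax⟩ := Finset.exists_max_image
      (Finset.univ.filter fun t => ¬ S.Small (g t)) κ
      (by obtain ⟨t, ht⟩ := hgt; exact ⟨t, by simpa using ht⟩)
    simp only [Finset.mem_filter, Finset.mem_univ, true_and] at ht htmax
    obtain ⟨hi, hbij, hF, -⟩ := iso_of_not_small ht
    subst hi
    let e := LinearEquiv.ofBijective (g t) hbij
    have he : ∀ {j x}, x ∈ S.F (σ t) j → e.symm x ∈ S.F (σ t) j := by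
      intro j x hx
      rw [← hF j] at hx
      obtain ⟨y, hy, rfl⟩ := hx
      have : e.symm (g t y) = y := e.symm_apply_apply y
      rw [this]; exact hy
    have hge : ∀ x, g t (e.symm x) = x := fun x => e.apply_symm_apply x
    have hkl : κ t ≤ l := by
      by_contra hlt
      apply F_not_le hl (show l < κ t by omega)
      rw [← hF l]
      rintro _ ⟨x, hx, rfl⟩
      rw [hg t ⟨x, hx⟩]
      exact (u _ t).2
    -- C2
    have hC2 : ∀ q ∈ ker p, (q t : S.E (σ t)) ∈ S.F (σ t) l := by
      have := genF (S := S) (((S.F (σ t) l).comap ((S.F (σ t) (κ t)).subtype ∘ₗ LinearMap.proj t ∘ₗ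
        (ker p).subtype)) : Submodule A (ker p)) (by
        intro i' l' hl' v
        rintro _ ⟨x, rfl⟩
        choose g' hg' using fun t => extF ((S.F (σ t) (κ t)).subtype ∘ₗ LinearMap.proj t ∘ₗ
          (ker p).subtype ∘ₗ v)
        change ((v x : ∀ t, S.F (σ t) (κ t)) t : S.E (σ t)) ∈ S.F (σ t) l
        have e1 : g' t (x : S.E i') = ((v x : ∀ t, S.F (σ t) (κ t)) t : S.E (σ t)) := hg' t x
        rw [← e1]
        by_cases hs : S.Small (g' t)
        · exact hs.apply_F _ hl
        · have : l ≤ l' := hmin l' ⟨i', hl', (ker p).subtype ∘ₗ v, fun x => (v x).2, g', hg', t, hs⟩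
          exact F_anti _ this (iso_apply hs x.2))
      intro q hq
      have h2 : (⟨q, hq⟩ : ker p) ∈ (⊤ : Submodule A (ker p)) := trivial
      rw [← this] at h2
      exact h2
    have hβm : ∀ t' (x : S.F (σ t) (κ t)),
        (g t' ∘ₗ e.symm.toLinearMap ∘ₗ (S.F (σ t) (κ t)).subtype) x ∈ S.F (σ t') (κ t') := by
      intro t' x
      change g t' (e.symm x) ∈ _
      by_cases hs : S.Small (g t')
      · exact hs.apply_F _ (hκ t')
      · exact F_anti _ (htmax t' hs) (iso_apply hs (he x.2))
    let β : S.F (σ t) (κ t) →ₗ[A] (∀ t, S.F (σ t) (κ t)) :=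
      LinearMap.pi fun t' => (g t' ∘ₗ e.symm.toLinearMap ∘ₗ
        (S.F (σ t) (κ t)).subtype).codRestrict _ (hβm t')
    have hβu : ∀ x : S.F (σ t) (κ t), ∀ hx : (x : S.E (σ t)) ∈ S.F (σ t) l,
        β x = u ⟨e.symm x, he hx⟩ := by
      intro x hx
      refine funext fun t' => Subtype.ext ?_
      rw [← hg]
      rfl
    have hβt : ∀ x, β x t = x := by
      intro x
      exact Subtype.ext (hge x)
    rcases hkl.lt_or_eq with hlt | heq
    · refine ⟨σ t, κ t, l, hlt, hl.le, ?_⟩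
      have := X_nontrivial (hκ t) hlt
      let a : S.X (σ t) (κ t) l →ₗ[A] M := Submodule.liftQ _ (p ∘ₗ β) (by
        intro x hx
        have hx' : (x : S.E (σ t)) ∈ S.F (σ t) l := hx
        rw [LinearMap.mem_ker, LinearMap.comp_apply, hβu x hx']
        exact hu _)
      let b0 : ((∀ t, S.F (σ t) (κ t)) ⧸ ker p) →ₗ[A] S.X (σ t) (κ t) l :=
        (ker p).liftQ (mkX _ _ l ∘ₗ LinearMap.proj t) (by
          intro q hq
          rw [LinearMap.mem_ker]
          exact (mkX_eq_zero _).mpr (hC2 q hq))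
      let b := b0 ∘ₗ (p.quotKerEquivOfSurjective hp).symm.toLinearMap
      have hb : ∀ z, b (p z) = mkX _ _ l (z t) := by
        intro z
        have : (p.quotKerEquivOfSurjective hp).symm (p z) = (ker p).mkQ z := by
          rw [LinearEquiv.symm_apply_eq]; rfl
        change b0 ((p.quotKerEquivOfSurjective hp).symm (p z)) = _
        rw [this]; rfl
      refine equiv_of_retract hM a b ?_
      have : b ∘ₗ a = LinearMap.id := by
        refine LinearMap.ext fun x => ?_
        obtain ⟨x, rfl⟩ := mkX_surj _ _ _ x
        change b (p (β x)) = _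
        rw [hb, hβt]; rfl
      rw [this]; exact Function.bijective_id
    · let p' : (∀ s : Fin N, S.F (σ (t.succAbove s)) (κ (t.succAbove s))) →ₗ[A] M :=
        ∑ s, p ∘ₗ LinearMap.single A (fun t => S.F (σ t) (κ t)) (t.succAbove s) ∘ₗ LinearMap.proj s
      refine ih (fun s => σ (t.succAbove s)) (fun s => κ (t.succAbove s)) (fun s => hκ _) p' ?_
      intro m
      obtain ⟨z, rfl⟩ := hp m
      have hzt : (z t : S.E (σ t)) ∈ S.F (σ t) l := by rw [← heq]; exact (z t).2
      let z' := z - β (z t)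
      have h1 : p z' = p z := by
        have : p (β (z t)) = 0 := by rw [hβu _ hzt]; exact hu _
        simp [z', this]
      have h2 : z' t = 0 := by simp [z', hβt]
      refine ⟨fun s => z' (t.succAbove s), ?_⟩
      rw [← h1]
      have h3 : z' = ∑ t', LinearMap.single A (fun t => S.F (σ t) (κ t)) t' (z' t') :=
        (LinearMap.sum_single_apply _ z').symm
      conv_rhs => rw [h3, map_sum, Fin.sum_univ_succAbove _ t, h2]
      simp only [map_zero, zero_add, p', LinearMap.sum_apply]
      rfl

theorem classify [IsNoetherianRing A] (M : Type) [AddCommGroup M] [Module A M]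
    [Module.Finite A M] (hM : IsIndecomposableMod A M) (hpd : PdLeOne A M) :
    ∃ (i : S.ι) (k l : ℕ), k < l ∧ l ≤ S.n i ∧ Nonempty (S.X i k l ≃ₗ[A] M) := by
  classical
  let I := Σ (q : {q : S.ι × ℕ // q.2 < S.n q.1}), (S.F q.1.1 q.1.2 →ₗ[A] M)
  have htop : (⨆ x : I, LinearMap.range x.2) = ⊤ := by
    apply genF (S := S)
    intro i j hj f
    exact le_iSup (fun x : I => LinearMap.range x.2) ⟨⟨(i, j), hj⟩, f⟩
  have hfg : (⊤ : Submodule A M).FG := Module.Finite.fg_top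
  obtain ⟨s, hs⟩ := CompleteLattice.IsCompactElement.exists_finset_of_le_iSup _
    ((Submodule.fg_iff_compact _).mp hfg) _ htop.ge
  let eq := s.equivFin.symm
  let p : (∀ t : Fin s.card, S.F (eq t).1.1.1.1 (eq t).1.1.1.2) →ₗ[A] M :=
    ∑ t, (eq t).1.2 ∘ₗ LinearMap.proj t
  refine classify_aux M hM hpd s.card (fun t => (eq t).1.1.1.1) (fun t => (eq t).1.1.1.2)
    (fun t => (eq t).1.1.2) p ?_
  rw [← LinearMap.range_eq_top, eq_top_iff]
  refine hs.trans (iSup₂_le fun x hx => ?_)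
  rintro _ ⟨y, rfl⟩
  obtain ⟨t, ht⟩ := eq.surjective ⟨x, hx⟩
  have hxt : x = (eq t).1 := by rw [ht]
  subst hxt
  refine ⟨LinearMap.single A (fun t => S.F (eq t).1.1.1.1 (eq t).1.1.1.2) t y, ?_⟩
  simp only [p, LinearMap.sum_apply, LinearMap.comp_apply]
  rw [Finset.sum_eq_single t]
  · simp
  · intro b _ hb
    simp [Pi.single_eq_of_ne hb]
  · simp

end Sys
end Har

namespace Har
open LinearMap

section General
variable {A : Type} [Ring A]

theorem ext_retract_right {M N N' : Type} [AddCommGroup M] [Module A M] [AddCommGroup N] [Module A N]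
    [AddCommGroup N'] [Module A N'] (h : Ext1Zero A M N) (a : N' →ₗ[A] N) (b : N →ₗ[A] N')
    (hab : b ∘ₗ a = LinearMap.id) : Ext1Zero A M N' := by
  let p : (M →₀ A) →ₗ[A] M := Finsupp.linearCombination A id
  have hp : Function.Surjective p := Finsupp.linearCombination_id_surjective A M
  refine ext_of_extend p hp fun f => ?_
  obtain ⟨g, hg⟩ := extend_of_ext p hp h (a ∘ₗ f)
  refine ⟨b ∘ₗ g, fun x => ?_⟩
  rw [LinearMap.comp_apply, hg]
  exact LinearMap.congr_fun hab (f x)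

theorem inAdd_trans {T T' X : Type} [AddCommGroup T] [Module A T] [AddCommGroup T'] [Module A T']
    [AddCommGroup X] [Module A X] (h' : InAdd A T' T) (h : InAdd A T X) : InAdd A T' X := by
  obtain ⟨k, f, g, hfg⟩ := h
  exact inAdd_retract (inAdd_pi (fun _ : Fin k => T) fun _ => h') f g hfg

theorem pd_retract {M X : Type} [AddCommGroup M] [Module A M]
    [AddCommGroup X] [Module A X] (h : PdLeOne A M) (a : X →ₗ[A] M) (b : M →ₗ[A] X)
    (hab : b ∘ₗ a = LinearMap.id) : PdLeOne A X := by
  obtain ⟨P, f, h1, h2, h3⟩ := h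
  have hab' : ∀ x, b (a x) = x := fun x => LinearMap.congr_fun hab x
  let p1 : (X →₀ A) →ₗ[A] X := Finsupp.linearCombination A id
  have hp1 : Function.Surjective p1 := Finsupp.linearCombination_id_surjective A X
  let p2 : (ker b →₀ A) →ₗ[A] ker b := Finsupp.linearCombination A id
  have hp2 : Function.Surjective p2 := Finsupp.linearCombination_id_surjective A _
  let q : ((X →₀ A) × (ker b →₀ A)) →ₗ[A] M := (a ∘ₗ p1).coprod ((ker b).subtype ∘ₗ p2)
  have hq : Function.Surjective q := by
    intro m
    obtain ⟨x, hx⟩ := hp1 (b m)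
    obtain ⟨y, hy⟩ := hp2 ⟨m - a (b m), by simp [hab']⟩
    refine ⟨(x, y), ?_⟩
    simp [q, hx, hy]
  have hbq : ∀ z, b (q z) = p1 z.1 := by
    intro z
    simp [q, hab']
  have : Module.Projective A (ker q) := schanuel f q h2 hq
  refine ⟨ModuleCat.of A (X →₀ A), p1, inferInstanceAs (Module.Projective A (X →₀ A)), hp1, ?_⟩
  refine Module.Projective.of_split (M := ker q)
    ((LinearMap.inl A (X →₀ A) (ker b →₀ A) ∘ₗ (ker p1).subtype).codRestrict (ker q) ?_)
    ((LinearMap.fst A (X →₀ A) (ker b →₀ A) ∘ₗ (ker q).subtype).codRestrict (ker p1) ?_) ?_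
  · rintro ⟨x, hx⟩
    have hx' : p1 x = 0 := hx
    simp [q, hx']
  · rintro ⟨z, hz⟩
    have hz' : q z = 0 := hz
    rw [LinearMap.mem_ker, LinearMap.comp_apply]
    change p1 z.1 = 0
    rw [← hbq, hz', map_zero]
  · refine LinearMap.ext fun x => Subtype.ext rfl

theorem indec_equiv {M N : Type} [AddCommGroup M] [Module A M] [AddCommGroup N] [Module A N]
    (e : M ≃ₗ[A] N) (h : IsIndecomposableMod A M) : IsIndecomposableMod A N := by
  have := h.1
  refine ⟨e.symm.toEquiv.nontrivial, fun P Q hPQ => ?_⟩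
  have := h.2 (P.map e.symm.toLinearMap) (Q.map e.symm.toLinearMap)
    ((Submodule.orderIsoMapComap e.symm).isCompl hPQ)
  simpa [Submodule.map_eq_bot_iff] using this

theorem basic_pi {k : ℕ} (M : Fin k → Type) [∀ a, AddCommGroup (M a)] [∀ a, Module A (M a)]
    (h : ∀ a, IsIndecomposableMod A (M a)) (h' : ∀ a b, a ≠ b → IsEmpty (M a ≃ₗ[A] M b))
    {T : Type} [AddCommGroup T] [Module A T] (e : (∀ a, M a) ≃ₗ[A] T) : IsBasicMod A T := by
  have hinj : ∀ a, Function.Injective (e.toLinearMap ∘ₗ LinearMap.single A M a) := fun a =>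
    e.injective.comp (Pi.single_injective a)
  refine ⟨k, fun a => LinearMap.range (e.toLinearMap ∘ₗ LinearMap.single A M a), ?_, ?_, ?_⟩
  · apply DirectSum.isInternal_submodule_of_iSupIndep_of_iSup_eq_top
    · intro a
      rw [Submodule.disjoint_def]
      intro x hx hx'
      have : (⨆ j, ⨆ (_ : j ≠ a), LinearMap.range (e.toLinearMap ∘ₗ LinearMap.single A M j)) ≤
          ker (LinearMap.proj a ∘ₗ e.symm.toLinearMap) := by
        refine iSup₂_le fun j hj => ?_
        rintro _ ⟨y, rfl⟩
        simp [Pi.single_eq_of_ne hj.symm]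
      have h1 := this hx'
      obtain ⟨y, rfl⟩ := hx
      have : y = 0 := by simpa using h1
      simp [this]
    · have := LinearMap.iSup_range_single A M
      simp only [LinearMap.range_comp]
      rw [← Submodule.map_iSup, this]
      simp
  · exact fun a => indec_equiv (LinearEquiv.ofInjective _ (hinj a)) (h a)
  · intro a b hab
    refine ⟨fun u => (h' a b hab).false ?_⟩
    exact (LinearEquiv.ofInjective _ (hinj a)).trans
      (u.trans (LinearEquiv.ofInjective _ (hinj b)).symm)

end General

namespace Sys
variable {A : Type} [Ring A] {S : Sys A}

variable (S) in
/-- valid triples -/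
abbrev V : Type := {p : S.ι × ℕ × ℕ // p.2.1 < p.2.2 ∧ p.2.2 ≤ S.n p.1}

abbrev XV (v : S.V) : Type := S.X v.1.1 v.1.2.1 v.1.2.2

abbrev TT (s : Finset S.V) : Type := ∀ v : s, XV v.1

def CrossV (v w : S.V) : Prop := v.1.1 = w.1.1 ∧ Cross v.1.2 w.1.2

theorem V_lt (v : S.V) : v.1.2.1 < S.n v.1.1 := lt_of_lt_of_le v.2.1 v.2.2

theorem XV_indec (v : S.V) : IsIndecomposableMod A (XV v) := X_indec (V_lt v) v.2.1

theorem XV_eq {v w : S.V} (e : XV v ≃ₗ[A] XV w) : v = w :=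
  Subtype.ext (X_equiv_eq v.2.1 v.2.2 w.2.1 w.2.2 e)

theorem ext_XV {v w : S.V} (h : ¬ CrossV v w) : Ext1Zero A (XV v) (XV w) :=
  ext_X_X v.2.1 v.2.2 w.2.1 w.2.2 fun h1 h2 => h ⟨h1, h2⟩

theorem not_cross_of_ext_XV {v w : S.V} (h : Ext1Zero A (XV v) (XV w)) : ¬ CrossV v w := by
  obtain ⟨⟨i, k, l⟩, hv⟩ := v
  obtain ⟨⟨i', k', l'⟩, hw⟩ := w
  rintro ⟨h1, h2⟩
  obtain rfl : i = i' := h1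
  exact not_cross_of_ext hv.1 hw.2 h h2

theorem ext_X_pi {i : S.ι} {k l : ℕ} (h : k ≤ l) {α : Type} (N : α → Type)
    [∀ a, AddCommGroup (N a)] [∀ a, Module A (N a)] (hN : ∀ a, Ext1Zero A (S.X i k l) (N a)) :
    Ext1Zero A (S.X i k l) (∀ a, N a) := by
  rw [ext_X_iff h]
  intro f
  choose g hg using fun a => (ext_X_iff h).mp (hN a) (LinearMap.proj a ∘ₗ f)
  refine ⟨LinearMap.pi g, ?_⟩
  refine LinearMap.ext fun x => funext fun a => ?_
  exact LinearMap.congr_fun (hg a) x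

theorem ext_XV_TT {v : S.V} {s : Finset S.V} (h : ∀ w ∈ s, ¬ CrossV v w) :
    Ext1Zero A (XV v) (TT s) := ext_X_pi v.2.1.le _ fun w => ext_XV (h w.1 w.2)

theorem ext_TT_XV {v : S.V} {s : Finset S.V} (h : ∀ w ∈ s, ¬ CrossV w v) :
    Ext1Zero A (TT s) (XV v) := ext_pi _ fun w => ext_XV (h w.1 w.2)

theorem ext_TT_TT {s : Finset S.V} (h : ∀ v ∈ s, ∀ w ∈ s, ¬ CrossV v w) :
    Ext1Zero A (TT s) (TT s) := ext_pi _ fun w => ext_XV_TT (h w.1 w.2)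

theorem not_cross_of_ext_TT {s : Finset S.V} (h : Ext1Zero A (TT s) (TT s)) :
    ∀ v ∈ s, ∀ w ∈ s, ¬ CrossV v w := by
  classical
  intro v hv w hw
  apply not_cross_of_ext_XV
  have h1 : Ext1Zero A (TT s) (XV w) := ext_retract_right h
    (LinearMap.single A (fun v : s => XV v.1) ⟨w, hw⟩) (LinearMap.proj (φ := fun v : s => XV v.1) ⟨w, hw⟩)
    (LinearMap.proj_comp_single_same _ _ _)
  exact ext_retract h1
    (LinearMap.single A (fun v : s => XV v.1) ⟨v, hv⟩) (LinearMap.proj (φ := fun v : s => XV v.1) ⟨v, hv⟩)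
    (LinearMap.proj_comp_single_same _ _ _)

theorem pd_TT (s : Finset S.V) : PdLeOne A (TT s) := by
  let q : (∀ v : s, S.F v.1.1.1 v.1.1.2.1) →ₗ[A] TT s :=
    LinearMap.pi fun v => mkX v.1.1.1 v.1.1.2.1 v.1.1.2.2 ∘ₗ LinearMap.proj v
  refine ⟨ModuleCat.of A (∀ v : s, S.F v.1.1.1 v.1.1.2.1), q,
    inferInstanceAs (Module.Projective A (∀ v : s, S.F v.1.1.1 v.1.1.2.1)), ?_, ?_⟩
  · intro x
    choose y hy using fun v : s => mkX_surj v.1.1.1 v.1.1.2.1 v.1.1.2.2 (x v)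
    exact ⟨y, funext hy⟩
  · have : ∀ v : s, Module.Projective A (ker (mkX v.1.1.1 v.1.1.2.1 v.1.1.2.2)) :=
      fun v => proj_ker _ v.1.2.1.le
    refine Module.Projective.of_split (M := ∀ v : s, ker (mkX v.1.1.1 v.1.1.2.1 v.1.1.2.2))
      (LinearMap.pi fun v => (LinearMap.proj v ∘ₗ (ker q).subtype).codRestrict _ ?_)
      ((LinearMap.pi fun v => Submodule.subtype _ ∘ₗ LinearMap.proj v).codRestrict (ker q) ?_) ?_
    · rintro ⟨x, hx⟩
      exact congrFun hx v
    · intro x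
      exact funext fun v => (x v).2
    · rfl

theorem basic_TT (s : Finset S.V) : IsBasicMod A (TT s) := by
  let e := s.equivFin.symm
  refine basic_pi (fun a => XV (e a).1) (fun a => XV_indec _) ?_
    (LinearEquiv.piCongrLeft A (fun v : s => XV v.1) e)
  intro a b hab
  exact ⟨fun u => hab (e.injective (Subtype.ext (XV_eq u)))⟩

theorem mem_of_retract [IsNoetherianRing A] {s : Finset S.V} {v : S.V} (a : XV v →ₗ[A] TT s)
    (b : TT s →ₗ[A] XV v) (h : Function.Bijective (b ∘ₗ a)) : v ∈ s := by
  classical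
  let e := LinearEquiv.ofBijective _ h
  have hs : ∑ w : s, (e.symm.toLinearMap ∘ₗ b ∘ₗ LinearMap.single A (fun v : s => XV v.1) w) ∘ₗ
      (LinearMap.proj w ∘ₗ a) = LinearMap.id := by
    refine LinearMap.ext fun x => ?_
    rw [LinearMap.sum_apply]
    change ∑ w, e.symm (b (LinearMap.single A (fun v : s => XV v.1) w (a x w))) = x
    rw [← map_sum, ← map_sum]
    rw [show (∑ t, LinearMap.single A (fun v : s => XV v.1) t (a x t)) = a x from
      LinearMap.sum_single_apply _ (a x)]
    exact e.symm_apply_apply x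
  obtain ⟨w, -, hw⟩ := X_exists_bij (V_lt v) v.2.1 _ _ hs
  have := (XV_indec v).1
  obtain ⟨u⟩ := equiv_of_retract (XV_indec w.1) _ _ hw
  rw [XV_eq u]; exact w.2

theorem TT_le [IsNoetherianRing A] {s s' : Finset S.V} (e : TT s ≃ₗ[A] TT s') : s ⊆ s' := by
  classical
  intro v hv
  refine mem_of_retract (e.toLinearMap ∘ₗ LinearMap.single A (fun v : s => XV v.1) ⟨v, hv⟩)
    (LinearMap.proj (φ := fun v : s => XV v.1) ⟨v, hv⟩ ∘ₗ e.symm.toLinearMap) ?_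
  convert Function.bijective_id
  refine funext fun x => ?_
  simp

theorem TT_eq [IsNoetherianRing A] {s s' : Finset S.V} (e : TT s ≃ₗ[A] TT s') : s = s' :=
  (TT_le e).antisymm (TT_le e.symm)

theorem exists_TT [IsNoetherianRing A] (T : Type) [AddCommGroup T] [Module A T] [Module.Finite A T]
    (hpd : PdLeOne A T) (hb : IsBasicMod A T) : ∃ s : Finset S.V, Nonempty (T ≃ₗ[A] TT s) := by
  classical
  obtain ⟨k, N, hN, hind, hiso⟩ := hb
  let e0 : (∀ a, N a) ≃ₗ[A] T := (DirectSum.linearEquivFunOnFintype A (Fin k) fun a => N a).symm.trans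
    (LinearEquiv.ofBijective (DirectSum.coeLinearMap N) hN)
  have hv : ∀ a, ∃ v : S.V, Nonempty (XV v ≃ₗ[A] N a) := by
    intro a
    have hpa : PdLeOne A (N a) := pd_retract hpd
      (e0.toLinearMap ∘ₗ LinearMap.single A (fun a => N a) a) (LinearMap.proj a ∘ₗ e0.symm.toLinearMap)
      (by refine LinearMap.ext fun x => ?_
          simp)
    obtain ⟨i, k, l, h1, h2, h3⟩ := classify (S := S) (N a) (hind a) hpa
    exact ⟨⟨(i, k, l), h1, h2⟩, h3⟩
  choose v ev using hv
  have hvinj : Function.Injective v := by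
    intro a b hab
    by_contra hne
    obtain ⟨u1⟩ := ev a
    obtain ⟨u2⟩ := ev b
    rw [← hab] at u2
    exact (hiso a b hne).false (u1.symm.trans u2)
  let s : Finset S.V := Finset.univ.image v
  let φ : Fin k ≃ s := Equiv.ofBijective (fun a => ⟨v a, by simp [s]⟩) (by
    constructor
    · intro a b hab
      exact hvinj (congrArg Subtype.val hab)
    · rintro ⟨w, hw⟩
      obtain ⟨a, -, rfl⟩ := Finset.mem_image.mp hw
      exact ⟨a, rfl⟩)
  refine ⟨s, ⟨e0.symm.trans ((LinearEquiv.piCongrRight fun a => (ev a).some.symm).trans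
    (LinearEquiv.piCongrLeft A (fun v : s => XV v.1) φ))⟩⟩

end Sys
end Har

namespace Har
open LinearMap

section General
variable {A : Type} [Ring A]

/-- a coresolution of `B` by objects in `add T`. -/
def Cores (A : Type) [Ring A] (T B : Type) [AddCommGroup T] [Module A T] [AddCommGroup B]
    [Module A B] : Prop :=
  ∃ (T₀ T₁ : ModuleCat.{0} A) (f : B →ₗ[A] ↥T₀) (g : ↥T₀ →ₗ[A] ↥T₁),
      InAdd A T ↥T₀ ∧ InAdd A T ↥T₁ ∧
        Function.Injective f ∧ Function.Surjective g ∧ LinearMap.range f = LinearMap.ker g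

/-- the evaluation map -/
noncomputable def evalMap (T Y : Type) [AddCommGroup T] [Module A T] [AddCommGroup Y] [Module A Y] :
    ((T →ₗ[A] Y) →₀ T) →ₗ[A] Y := Finsupp.lsum ℕ (fun h : T →ₗ[A] Y => h)

theorem evalMap_single {T Y : Type} [AddCommGroup T] [Module A T] [AddCommGroup Y] [Module A Y]
    (h : T →ₗ[A] Y) (t : T) : evalMap T Y (Finsupp.single h t) = h t := by
  simp [evalMap]

theorem evalMap_surj {T B Y : Type} [AddCommGroup T] [Module A T] [AddCommGroup Y] [Module A Y]
    [AddCommGroup B] [Module A B] (hB : ∀ y : Y, ∃ u : B →ₗ[A] Y, y ∈ LinearMap.range u)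
    (hc : Cores A T B) (hE : Ext1Zero A T Y) : Function.Surjective (evalMap (A := A) T Y) := by
  intro y
  obtain ⟨u, b, rfl⟩ := hB y
  obtain ⟨T₀, T₁, f, g, h0, h1, hf, hg, hex⟩ := hc
  obtain ⟨w, rfl⟩ := extend_of_exact f g hf hg hex (ext_inAdd hE h1) u
  obtain ⟨k, c, d, hcd⟩ := h0
  have e : d (c (f b)) = f b := LinearMap.congr_fun hcd (f b)
  refine ⟨∑ j : Fin k, Finsupp.single (w ∘ₗ d ∘ₗ LinearMap.single A (fun _ => T) j) (c (f b) j), ?_⟩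
  rw [map_sum]
  simp only [evalMap_single, LinearMap.comp_apply]
  rw [← map_sum, ← map_sum]
  rw [show (∑ t, LinearMap.single A (fun _ : Fin k => T) t (c (f b) t)) = c (f b) from
      LinearMap.sum_single_apply _ (c (f b)), e]

theorem finite_support {M N J : Type} [AddCommGroup M] [Module A M] [AddCommGroup N] [Module A N]
    [Module.Finite A M] (f : M →ₗ[A] (J →₀ N)) :
    ∃ s : Finset J, ∀ x, (f x).support ⊆ s := by
  classical
  obtain ⟨t, ht⟩ := (Module.Finite.fg_top : (⊤ : Submodule A M).FG)
  refine ⟨t.biUnion fun x => (f x).support, fun x => ?_⟩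
  have : x ∈ Submodule.span A (t : Set M) := by rw [ht]; trivial
  induction this using Submodule.span_induction with
  | mem x hx => exact Finset.subset_biUnion_of_mem (fun x => (f x).support) hx
  | zero => simp
  | add x y _ _ h1 h2 =>
    rw [map_add]
    exact Finsupp.support_add.trans (Finset.union_subset h1 h2)
  | smul a x _ h =>
    rw [map_smul]
    exact Finsupp.support_smul.trans h

theorem sum_of_support {N J : Type} [AddCommGroup N] (s : Finset J) (x : J →₀ N)
    (h : x.support ⊆ s) : ∑ j ∈ s, Finsupp.single j (x j) = x := by
  conv_rhs => rw [← Finsupp.sum_single x]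
  rw [Finsupp.sum_of_support_subset _ h]
  simp

end General

namespace Sys
variable {A : Type} [Ring A] {S : Sys A}

theorem ext_X_finsupp [IsNoetherianRing A] {i : S.ι} {k l : ℕ} (h : k ≤ l) {J N : Type}
    [AddCommGroup N] [Module A N] (hN : Ext1Zero A (S.X i k l) N) :
    Ext1Zero A (S.X i k l) (J →₀ N) := by
  rw [ext_X_iff h] at hN ⊢
  intro f
  obtain ⟨s, hs⟩ := finite_support f
  choose g hg using fun j => hN (Finsupp.lapply j ∘ₗ f)
  refine ⟨∑ j ∈ s, Finsupp.lsingle j ∘ₗ g j, ?_⟩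
  refine LinearMap.ext fun x => ?_
  rw [LinearMap.comp_apply, LinearMap.sum_apply]
  have : ∀ j, (Finsupp.lsingle j ∘ₗ g j : _ →ₗ[A] (J →₀ N)) (inc i h x) = Finsupp.single j (f x j) := by
    intro j
    have := LinearMap.congr_fun (hg j) x
    simp only [LinearMap.comp_apply] at this
    rw [LinearMap.comp_apply, this]; rfl
  simp only [this]
  exact sum_of_support s _ (hs x)

theorem mem_inc {i : S.ι} {k l : ℕ} (h : k ≤ l) (x : S.F i k) (hx : mkX i k l x = 0) :
    ∃ y, inc i h y = x :=
  ⟨⟨x, (mkX_eq_zero x).mp hx⟩, rfl⟩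

theorem mkX_inc {i : S.ι} {k l : ℕ} (h : k ≤ l) (y : S.F i l) : mkX i k l (inc i h y) = 0 :=
  (mkX_eq_zero _).mpr y.2

theorem exists_descend {i : S.ι} {k l : ℕ} (h : k ≤ l) {N : Type} [AddCommGroup N] [Module A N]
    (g : S.F i k →ₗ[A] N) (hg : g ∘ₗ inc i h = 0) : ∃ g' : S.X i k l →ₗ[A] N, g' ∘ₗ mkX i k l = g := by
  refine ⟨Submodule.liftQ _ g ?_, ?_⟩
  · intro x hx
    obtain ⟨y, rfl⟩ := mem_inc h x ((mkX_eq_zero x).mpr hx)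
    exact LinearMap.congr_fun hg y
  · exact LinearMap.ext fun x => rfl

/-- `Ext¹(T, ker)` vanishes for the kernel of the evaluation map. -/
theorem ext_ker_eval [IsNoetherianRing A] {s : Finset S.V} (hT : Ext1Zero A (TT s) (TT s))
    {Y : Type} [AddCommGroup Y] [Module A Y] :
    Ext1Zero A (TT s) (ker (evalMap (A := A) (TT s) Y)) := by
  classical
  refine ext_pi _ fun v => ?_
  have hv : Ext1Zero A (XV v.1) (TT s) := ext_XV_TT (not_cross_of_ext_TT hT v.1 v.2)
  have hv' := ext_X_finsupp (J := TT s →ₗ[A] Y) v.1.2.1.le hv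
  rw [ext_X_iff v.1.2.1.le] at hv' ⊢
  intro f
  obtain ⟨g, hg⟩ := hv' ((ker (evalMap (A := A) (TT s) Y)).subtype ∘ₗ f)
  obtain ⟨g', hg'⟩ := exists_descend v.1.2.1.le (evalMap (A := A) (TT s) Y ∘ₗ g) (by
    rw [LinearMap.comp_assoc, hg]
    exact LinearMap.ext fun x => (f x).2)
  let h' : TT s →ₗ[A] Y := g' ∘ₗ LinearMap.proj v
  let h : XV v.1 →ₗ[A] ((TT s →ₗ[A] Y) →₀ TT s) :=
    Finsupp.lsingle h' ∘ₗ LinearMap.single A (fun v : s => XV v.1) v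
  have hh : ∀ x, evalMap (A := A) (TT s) Y (h x) = g' x := by
    intro x
    change evalMap (A := A) (TT s) Y (Finsupp.single h' _) = _
    rw [evalMap_single]
    simp [h']
  refine ⟨(g - h ∘ₗ mkX _ _ _).codRestrict _ ?_, ?_⟩
  · intro x
    rw [LinearMap.mem_ker, LinearMap.sub_apply, map_sub, LinearMap.comp_apply, hh, sub_eq_zero]
    exact (LinearMap.congr_fun hg' x).symm
  · refine LinearMap.ext fun x => Subtype.ext ?_
    change g (inc _ _ x) - h (mkX _ _ _ (inc _ _ x)) = f x
    rw [mkX_inc, map_zero, sub_zero]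
    exact LinearMap.congr_fun hg x

theorem mem_of_tilting [IsNoetherianRing A] {s : Finset S.V} {B : Type} [AddCommGroup B] [Module A B]
    (hB : ∀ (Y : Type) [AddCommGroup Y] [Module A Y] (y : Y), ∃ u : B →ₗ[A] Y, y ∈ LinearMap.range u)
    (hT : Ext1Zero A (TT s) (TT s)) (hc : Cores A (TT s) B) (v : S.V)
    (h1 : ∀ w ∈ s, ¬ CrossV v w) (h2 : ∀ w ∈ s, ¬ CrossV w v) : v ∈ s := by
  classical
  have hvT := ext_XV_TT (A := A) h1
  have hTv := ext_TT_XV (A := A) h2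
  let π := evalMap (A := A) (TT s) (XV v)
  have hπ : Function.Surjective π := evalMap_surj (hB _) hc hTv
  let L := ker π
  let ρ := evalMap (A := A) (TT s) L
  have hρ : Function.Surjective ρ := evalMap_surj (hB _) hc (ext_ker_eval hT)
  obtain ⟨a, ha⟩ := Module.projective_lifting_property π (mkX v.1.1 v.1.2.1 v.1.2.2) hπ
  have hkl := v.2.1.le
  have haL : ∀ x, (a ∘ₗ inc v.1.1 hkl) x ∈ L := by
    intro x
    rw [LinearMap.mem_ker, LinearMap.comp_apply, ← mkX_inc hkl x]
    exact LinearMap.congr_fun ha _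
  obtain ⟨c, hc'⟩ := Module.projective_lifting_property ρ
    ((a ∘ₗ inc v.1.1 hkl).codRestrict L haL) hρ
  obtain ⟨d, hd⟩ := (ext_X_iff hkl).mp (ext_X_finsupp (J := TT s →ₗ[A] L) hkl hvT) c
  obtain ⟨σ, hσ⟩ := exists_descend hkl (a - L.subtype ∘ₗ ρ ∘ₗ d) (by
    refine LinearMap.ext fun x => ?_
    change a (inc _ _ x) - L.subtype (ρ (d (inc _ _ x))) = 0
    rw [sub_eq_zero]
    have e1 : d (inc _ hkl x) = c x := LinearMap.congr_fun hd x
    have e2 : ρ (c x) = _ := LinearMap.congr_fun hc' x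
    rw [e1, e2]; rfl)
  have hsec : ∀ x, π (σ x) = x := by
    intro x
    obtain ⟨x, rfl⟩ := mkX_surj _ _ _ x
    have e1 : σ (mkX _ _ _ x) = _ := LinearMap.congr_fun hσ x
    have e2 : π (a x) = _ := LinearMap.congr_fun ha x
    rw [e1, LinearMap.sub_apply, map_sub, e2]
    change _ - π (ρ (d x) : L) = _
    rw [(ρ (d x)).2, sub_zero]
  obtain ⟨t, ht⟩ := finite_support σ
  have hsum : ∑ j ∈ t, (π ∘ₗ Finsupp.lsingle j) ∘ₗ (Finsupp.lapply j ∘ₗ σ) = LinearMap.id := by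
    refine LinearMap.ext fun x => ?_
    rw [LinearMap.sum_apply]
    change ∑ j ∈ t, π (Finsupp.single j (σ x j)) = x
    rw [← map_sum, sum_of_support t _ (ht x), hsec]
  obtain ⟨j, -, hj⟩ := X_exists_bij (V_lt v) v.2.1 _ _ hsum
  exact mem_of_retract _ _ hj

end Sys
end Har

namespace Har
open BinaryTree

/-- The intervals attached to a binary tree (in-order labelling starting at `a`). -/
def ranges : BinaryTree Unit → ℕ → Finset (ℕ × ℕ)
  | .nil, _ => ∅
  | .node _ l r, a => insert (a, a + (l.numNodes + r.numNodes + 1))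
      (ranges l a ∪ ranges r (a + l.numNodes + 1))

theorem mem_ranges_node {u : Unit} {l r : BinaryTree Unit} {a : ℕ} {p : ℕ × ℕ} :
    p ∈ ranges (.node u l r) a ↔ p = (a, a + (l.numNodes + r.numNodes + 1)) ∨
      p ∈ ranges l a ∨ p ∈ ranges r (a + l.numNodes + 1) := by
  simp [ranges]

theorem ranges_bound {t : BinaryTree Unit} : ∀ {a : ℕ} {p : ℕ × ℕ}, p ∈ ranges t a →
    a ≤ p.1 ∧ p.1 < p.2 ∧ p.2 ≤ a + t.numNodes := by
  induction t with
  | nil => intro a p h; simp [ranges] at h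
  | node u l r ihl ihr =>
    intro a p h
    rw [mem_ranges_node] at h
    simp only [numNodes]
    rcases h with rfl | h | h
    · simp <;> omega
    · have := ihl h; omega
    · have := ihr h; omega

theorem ranges_not_cross {t : BinaryTree Unit} : ∀ {a : ℕ} {p q : ℕ × ℕ}, p ∈ ranges t a →
    q ∈ ranges t a → ¬ Sys.Cross p q := by
  induction t with
  | nil => intro a p q h; simp [ranges] at h
  | node u l r ihl ihr =>
    intro a p q hp hq
    have bp := ranges_bound hp
    have bq := ranges_bound hq
    simp only [numNodes] at bp bq
    rw [mem_ranges_node] at hp hq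
    rintro ⟨h1, h2, h3⟩
    rcases hp with rfl | hp | hp
    · simp at h3; omega
    · rcases hq with rfl | hq | hq
      · simp at h1; omega
      · exact ihl hp hq ⟨h1, h2, h3⟩
      · have := ranges_bound hp
        have := ranges_bound hq
        omega
    · rcases hq with rfl | hq | hq
      · simp at h1; omega
      · have := ranges_bound hp
        have := ranges_bound hq
        omega
      · exact ihr hp hq ⟨h1, h2, h3⟩

theorem root_mem {t : BinaryTree Unit} {a : ℕ} (h : 0 < t.numNodes) : (a, a + t.numNodes) ∈ ranges t a := by
  cases t with
  | nil => simp [numNodes] at h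
  | node u l r => rw [mem_ranges_node]; left; simp [numNodes]

theorem ranges_left_le {l r l' r' : BinaryTree Unit} {u u' : Unit} {a : ℕ}
    (hn : l.numNodes + r.numNodes = l'.numNodes + r'.numNodes)
    (h : ranges (.node u l r) a = ranges (.node u' l' r') a) : l'.numNodes ≤ l.numNodes := by
  by_contra! hlt
  have h1 : (a, a + l'.numNodes) ∈ ranges (.node u' l' r') a := by
    rw [mem_ranges_node]
    exact Or.inr (Or.inl (root_mem (by omega)))
  rw [← h, mem_ranges_node] at h1
  rcases h1 with h1 | h1 | h1
  · simp at h1; omega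
  · have := ranges_bound h1; simp at this; omega
  · have := ranges_bound h1; simp at this <;> omega

theorem ranges_inj {t : BinaryTree Unit} : ∀ {t' : BinaryTree Unit} {a : ℕ},
    t.numNodes = t'.numNodes → ranges t a = ranges t' a → t = t' := by
  induction t with
  | nil =>
    intro t' a hn h
    cases t' with
    | nil => rfl
    | node => simp [numNodes] at hn
  | node u l r ihl ihr =>
    intro t' a hn h
    cases t' with
    | nil => simp [numNodes] at hn
    | node u' l' r' =>
      simp only [numNodes] at hn
      have e1 := ranges_left_le (by omega) h
      have e2 := ranges_left_le (by omega) h.symm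
      have el : l.numNodes = l'.numNodes := by omega
      have er : r.numNodes = r'.numNodes := by omega
      have key : ∀ p, (p = (a, a + (l.numNodes + r.numNodes + 1)) ∨
          p ∈ ranges l a ∨ p ∈ ranges r (a + l.numNodes + 1)) ↔
          (p = (a, a + (l.numNodes + r.numNodes + 1)) ∨
          p ∈ ranges l' a ∨ p ∈ ranges r' (a + l.numNodes + 1)) := by
        intro p
        have := Finset.ext_iff.mp h p
        rw [mem_ranges_node, mem_ranges_node, ← el, ← er] at this
        exact this
      have hl : l = l' := by
        refine ihl el (a := a) (Finset.ext fun p => ⟨fun hp => ?_, fun hp => ?_⟩)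
        · have b1 := ranges_bound hp
          rcases (key p).mp (Or.inr (Or.inl hp)) with rfl | h | h
          · simp at b1 <;> omega
          · exact h
          · have b2 := ranges_bound h; omega
        · have b1 := ranges_bound hp
          rcases (key p).mpr (Or.inr (Or.inl hp)) with rfl | h | h
          · simp at b1; omega
          · exact h
          · have b2 := ranges_bound h; omega
      have hr : r = r' := by
        refine ihr er (a := a + l.numNodes + 1) (Finset.ext fun p => ⟨fun hp => ?_, fun hp => ?_⟩)
        · have b1 := ranges_bound hp
          rcases (key p).mp (Or.inr (Or.inr hp)) with rfl | h | h
          · simp at b1 <;> omega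
          · have b2 := ranges_bound h; omega
          · exact h
        · have b1 := ranges_bound hp
          rcases (key p).mpr (Or.inr (Or.inr hp)) with rfl | h | h
          · simp at b1 <;> omega
          · have b2 := ranges_bound h; omega
          · exact h
      rw [hl, hr]

theorem exists_tree (n : ℕ) : ∀ (a : ℕ) (I : ℕ × ℕ → Prop),
    (∀ p, I p → a ≤ p.1 ∧ p.1 < p.2 ∧ p.2 ≤ a + n) → (∀ p q, I p → I q → ¬ Sys.Cross p q) →
    ∃ t : BinaryTree Unit, t.numNodes = n ∧ ∀ p, I p → p ∈ ranges t a := by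
  classical
  induction n using Nat.strong_induction_on with
  | _ n ih =>
  intro a I hI hc
  rcases Nat.eq_zero_or_pos n with rfl | hn
  · refine ⟨.nil, rfl, fun p hp => ?_⟩
    have := hI p hp; omega
  obtain ⟨m, rfl⟩ : ∃ m, n = m + 1 := ⟨n - 1, by omega⟩
  obtain ⟨x, hx, hI0, hmax⟩ : ∃ x, x ≤ m ∧ (x = 0 ∨ I (a, a + x)) ∧
      ∀ l, I (a, a + l) → l ≤ m → l ≤ x := by
    refine ⟨Nat.findGreatest (fun x => x = 0 ∨ I (a, a + x)) m, Nat.findGreatest_le _, ?_, ?_⟩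
    · exact Nat.findGreatest_spec (P := fun x => x = 0 ∨ I (a, a + x)) (Nat.zero_le m) (Or.inl rfl)
    · intro l hl hlm
      exact Nat.le_findGreatest hlm (Or.inr hl)
  obtain ⟨l, hl, hlI⟩ := ih x (by omega) a (fun p => I p ∧ p.2 ≤ a + x)
    (fun p hp => ⟨(hI p hp.1).1, (hI p hp.1).2.1, hp.2⟩) (fun p q hp hq => hc p q hp.1 hq.1)
  obtain ⟨r, hr, hrI⟩ := ih (m - x) (by omega) (a + x + 1) (fun p => I p ∧ a + x + 1 ≤ p.1)
    (fun p hp => ⟨hp.2, (hI p hp.1).2.1, by have := hI p hp.1; omega⟩)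
    (fun p q hp hq => hc p q hp.1 hq.1)
  refine ⟨.node () l r, by simp [numNodes]; omega, fun p hp => ?_⟩
  rw [mem_ranges_node, hl, hr]
  obtain ⟨p1, p2⟩ := p
  have hb := hI _ hp
  simp only at hb
  by_cases h1 : p2 ≤ a + x
  · exact Or.inr (Or.inl (hlI _ ⟨hp, h1⟩))
  by_cases h2 : a + x + 1 ≤ p1
  · exact Or.inr (Or.inr (hrI _ ⟨hp, h2⟩))
  left
  by_cases h3 : p1 = a
  · subst h3
    by_cases h4 : p2 = p1 + (m + 1)
    · rw [h4]; congr 2; omega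
    · exfalso
      have := hmax (p2 - p1) (by rwa [show p1 + (p2 - p1) = p2 by omega]) (by omega)
      omega
  · exfalso
    rcases hI0 with rfl | hI0
    · omega
    · exact hc _ _ hI0 hp ⟨by simp; omega, by simp; omega, by simp; omega⟩

end Har

namespace Har
open LinearMap BinaryTree

section General
variable {A : Type} [Ring A]

theorem cores_zero {T B : Type} [AddCommGroup T] [Module A T] [AddCommGroup B] [Module A B]
    [Subsingleton B] : Cores A T B :=
  ⟨ModuleCat.of A PUnit, ModuleCat.of A PUnit, 0, 0, inAdd_zero (X := PUnit), inAdd_zero (X := PUnit),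
    fun _ _ _ => Subsingleton.elim _ _, fun x => ⟨0, rfl⟩,
    Submodule.ext fun x => ⟨fun _ => rfl, fun _ => ⟨0, rfl⟩⟩⟩

theorem cores_equiv {T B B' : Type} [AddCommGroup T] [Module A T] [AddCommGroup B] [Module A B]
    [AddCommGroup B'] [Module A B'] (e : B' ≃ₗ[A] B) (h : Cores A T B) : Cores A T B' := by
  obtain ⟨T₀, T₁, f, g, h0, h1, hf, hg, hex⟩ := h
  refine ⟨T₀, T₁, f ∘ₗ e.toLinearMap, g, h0, h1, hf.comp e.injective, hg, ?_⟩
  rw [← hex, LinearMap.range_comp_of_range_eq_top]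
  exact LinearEquiv.range e

theorem cores_congr {T T' B : Type} [AddCommGroup T] [Module A T] [AddCommGroup B] [Module A B]
    [AddCommGroup T'] [Module A T'] (e : T ≃ₗ[A] T') (h : Cores A T B) : Cores A T' B := by
  obtain ⟨T₀, T₁, f, g, h0, h1, hr⟩ := h
  have hT : InAdd A T' T := inAdd_retract inAdd_self e.toLinearMap e.symm.toLinearMap
    (LinearMap.ext fun x => e.symm_apply_apply x)
  exact ⟨T₀, T₁, f, g, inAdd_trans hT h0, inAdd_trans hT h1, hr⟩

theorem cores_pi {T : Type} [AddCommGroup T] [Module A T] {α : Type} [Fintype α] (B : α → Type)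
    [∀ a, AddCommGroup (B a)] [∀ a, Module A (B a)] (h : ∀ a, Cores A T (B a)) :
    Cores A T (∀ a, B a) := by
  choose T₀ T₁ f g h0 h1 hf hg hex using h
  refine ⟨ModuleCat.of A (∀ a, T₀ a), ModuleCat.of A (∀ a, T₁ a),
    LinearMap.pi fun a => f a ∘ₗ LinearMap.proj a, LinearMap.pi fun a => g a ∘ₗ LinearMap.proj a,
    inAdd_pi _ h0, inAdd_pi _ h1, ?_, ?_, ?_⟩
  · intro x y hxy
    exact funext fun a => hf a (congrFun hxy a)
  · intro y
    choose x hx using fun a => hg a (y a)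
    exact ⟨x, funext hx⟩
  · ext x
    constructor
    · rintro ⟨y, rfl⟩
      refine funext fun a => ?_
      have : f a (y a) ∈ ker (g a) := by rw [← hex]; exact ⟨_, rfl⟩
      exact this
    · intro hx
      have : ∀ a, ∃ y, f a y = x a := by
        intro a
        have : x a ∈ ker (g a) := congrFun hx a
        rw [← hex] at this
        exact this
      choose y hy using this
      exact ⟨y, funext hy⟩

theorem ext_zero_right {M N : Type} [AddCommGroup M] [Module A M] [AddCommGroup N] [Module A N]
    [Subsingleton N] : Ext1Zero A M N :=
  ext_of_extend _ (Finsupp.linearCombination_id_surjective A M) fun _ =>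
    ⟨0, fun _ => Subsingleton.elim _ _⟩

end General

namespace Sys
variable {A : Type} [Ring A] {S : Sys A}

/-- transition maps -/
def tr (i : S.ι) {k k' l l' : ℕ} (h : k' ≤ k) (h' : l' ≤ l) : S.X i k l →ₗ[A] S.X i k' l' :=
  Submodule.mapQ _ _ (inc i h) fun _ hx => F_anti i h' hx

theorem tr_mk (i : S.ι) {k k' l l' : ℕ} (h : k' ≤ k) (h' : l' ≤ l) (x : S.F i k) :
    tr i h h' (mkX i k l x) = mkX i k' l' (inc i h x) := rfl

theorem X_subsingleton (i : S.ι) (k : ℕ) : Subsingleton (S.X i k k) := by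
  refine ⟨fun x y => ?_⟩
  obtain ⟨x, rfl⟩ := mkX_surj _ _ _ x
  obtain ⟨y, rfl⟩ := mkX_surj _ _ _ y
  rw [mkX_eq]
  exact (x - y).2

theorem cores_step {T : Type} [AddCommGroup T] [Module A T] {i : S.ι} {a j ρ b : ℕ} (haj : a ≤ j)
    (hjρ : j ≤ ρ) (hρb : ρ ≤ b) (h0 : Cores A T (S.X i j ρ)) (h1 : InAdd A T (S.X i a b))
    (h2 : InAdd A T (S.X i a ρ)) (h3 : Ext1Zero A T (S.X i a ρ)) : Cores A T (S.X i j b) := by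
  obtain ⟨U₀, U₁, f, q, hU0, hU1, hf, hq, hex⟩ := h0
  obtain ⟨h, hh⟩ := extend_of_exact f q hf hq hex (ext_inAdd h3 hU1)
    (tr i haj le_rfl : S.X i j ρ →ₗ[A] S.X i a ρ)
  let π : S.X i j b →ₗ[A] S.X i j ρ := tr i le_rfl hρb
  let π' : S.X i a b →ₗ[A] S.X i a ρ := tr i le_rfl hρb
  let ε : S.X i j b →ₗ[A] S.X i a b := tr i haj le_rfl
  refine ⟨ModuleCat.of A (U₀ × S.X i a b), ModuleCat.of A (U₁ × S.X i a ρ),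
    (f ∘ₗ π).prod ε,
    (q ∘ₗ LinearMap.fst A U₀ (S.X i a b)).prod
      (h ∘ₗ LinearMap.fst A U₀ (S.X i a b) - π' ∘ₗ LinearMap.snd A U₀ (S.X i a b)),
    inAdd_prod hU0 h1, inAdd_prod hU1 h2, ?_, ?_, ?_⟩
  · intro x y hxy
    have : ε x = ε y := congrArg Prod.snd hxy
    obtain ⟨x, rfl⟩ := mkX_surj _ _ _ x
    obtain ⟨y, rfl⟩ := mkX_surj _ _ _ y
    simp only [ε, tr_mk] at this
    rw [mkX_eq] at this ⊢
    exact this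
  · rintro ⟨u1, z⟩
    obtain ⟨u, rfl⟩ := hq u1
    obtain ⟨y, hy⟩ := mkX_surj _ _ _ (h u - z)
    refine ⟨(u, mkX i a b y), ?_⟩
    refine Prod.ext rfl ?_
    change h u - π' (mkX i a b y) = z
    have : π' (mkX i a b y) = h u - z := hy
    rw [this]; abel
  · ext ⟨u, y⟩
    constructor
    · rintro ⟨x, hx⟩
      obtain ⟨x, rfl⟩ := mkX_surj _ _ _ x
      have hu : f (mkX i j ρ x) = u := congrArg Prod.fst hx
      have hy : mkX i a b (inc i haj x) = y := congrArg Prod.snd hx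
      subst hu hy
      refine Prod.ext ?_ ?_
      · have : f (mkX i j ρ x) ∈ ker q := by rw [← hex]; exact ⟨_, rfl⟩
        exact this
      · change h (f (mkX i j ρ x)) - π' (mkX i a b (inc i haj x)) = 0
        have e1 : h (f (mkX i j ρ x)) = _ := LinearMap.congr_fun hh (mkX i j ρ x)
        rw [e1, tr_mk, sub_eq_zero]; rfl
    · intro hk
      have h1 : q u = 0 := congrArg Prod.fst hk
      have h2 : h u - π' y = 0 := congrArg Prod.snd hk
      have : u ∈ range f := by rw [hex]; exact h1
      obtain ⟨w, rfl⟩ := this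
      obtain ⟨x0, rfl⟩ := mkX_surj _ _ _ w
      obtain ⟨y0, rfl⟩ := mkX_surj _ _ _ y
      have e1 : h (f (mkX i j ρ x0)) = _ := LinearMap.congr_fun hh (mkX i j ρ x0)
      rw [e1, tr_mk, sub_eq_zero] at h2
      have h3 : mkX i a ρ (inc i haj x0) = mkX i a ρ y0 := h2
      rw [mkX_eq] at h3
      have h4 : (x0 : S.E i) - y0 ∈ S.F i ρ := h3
      have hy0 : (y0 : S.E i) ∈ S.F i j := by
        have := (S.F i j).sub_mem x0.2 (F_anti i hjρ h4)
        simpa using this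
      refine ⟨mkX i j b ⟨y0, hy0⟩, Prod.ext ?_ ?_⟩
      · change f (mkX i j ρ ⟨y0, hy0⟩) = f (mkX i j ρ x0)
        congr 1
        rw [mkX_eq]
        have := (S.F i ρ).neg_mem h4
        simpa using this
      · rfl

theorem cores_tree {T : Type} [AddCommGroup T] [Module A T] {i : S.ι} (t : BinaryTree Unit) :
    ∀ a : ℕ, (∀ p ∈ ranges t a, InAdd A T (S.X i p.1 p.2)) →
    (∀ p ∈ ranges t a, Ext1Zero A T (S.X i p.1 p.2)) →
    ∀ j, a ≤ j → j ≤ a + t.numNodes → Cores A T (S.X i j (a + t.numNodes)) := by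
  induction t with
  | nil =>
    intro a _ _ j h1 h2
    have : j = a + nil.numNodes (α := Unit) := by
      simp only [numNodes] at h2 ⊢; omega
    rw [← this]
    have := X_subsingleton i j
    exact cores_zero
  | node u l r ihl ihr =>
    intro a hA hE j h1 h2
    simp only [mem_ranges_node] at hA hE
    simp only [numNodes] at h2 ⊢
    by_cases hj : j ≤ a + l.numNodes
    · have hl := ihl a (fun p hp => hA p (Or.inr (Or.inl hp))) (fun p hp => hE p (Or.inr (Or.inl hp)))
        j h1 hj
      have hh : InAdd A T (S.X i a (a + l.numNodes)) ∧ Ext1Zero A T (S.X i a (a + l.numNodes)) := by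
        rcases Nat.eq_zero_or_pos l.numNodes with h0 | h0
        · rw [h0]
          have := X_subsingleton i a
          exact ⟨inAdd_zero, ext_zero_right⟩
        · exact ⟨hA (a, a + l.numNodes) (Or.inr (Or.inl (root_mem h0))),
            hE (a, a + l.numNodes) (Or.inr (Or.inl (root_mem h0)))⟩
      exact cores_step h1 hj (by omega) hl (hA _ (Or.inl rfl)) hh.1 hh.2
    · have := ihr (a + l.numNodes + 1) (fun p hp => hA p (Or.inr (Or.inr hp)))
        (fun p hp => hE p (Or.inr (Or.inr hp))) j (by omega) (by omega)
      rwa [show a + l.numNodes + 1 + r.numNodes = a + (l.numNodes + r.numNodes + 1) by omega] at this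

/-- the set of triples attached to a family of trees -/
def fam (t : S.ι → BinaryTree Unit) (ht : ∀ i, (t i).numNodes = S.n i) : Finset S.V :=
  Finset.univ.biUnion fun i => (ranges (t i) 0).attach.image fun p =>
    ⟨(i, p.1), (ranges_bound p.2).2.1, by have := (ranges_bound p.2).2.2; rw [ht] at this; change p.1.2 ≤ S.n i; omega⟩

theorem mem_fam {t : S.ι → BinaryTree Unit} {ht : ∀ i, (t i).numNodes = S.n i} {v : S.V} :
    v ∈ fam t ht ↔ v.1.2 ∈ ranges (t v.1.1) 0 := by
  simp only [fam, Finset.mem_biUnion, Finset.mem_univ, true_and, Finset.mem_image]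
  constructor
  · rintro ⟨i, p, -, rfl⟩
    exact p.2
  · intro h
    exact ⟨v.1.1, ⟨v.1.2, h⟩, by simp, rfl⟩

theorem fam_not_cross (t : S.ι → BinaryTree Unit) (ht : ∀ i, (t i).numNodes = S.n i) :
    ∀ v ∈ fam t ht, ∀ w ∈ fam t ht, ¬ CrossV v w := by
  rintro v hv w hw ⟨h1, h2⟩
  rw [mem_fam] at hv hw
  rw [← h1] at hw
  exact ranges_not_cross hv hw h2

theorem fam_inj {t t' : S.ι → BinaryTree Unit} {ht : ∀ i, (t i).numNodes = S.n i}
    {ht' : ∀ i, (t' i).numNodes = S.n i} (h : fam t ht = fam t' ht') : t = t' := by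
  funext i
  refine ranges_inj (a := 0) ((ht i).trans (ht' i).symm) (Finset.ext fun p => ?_)
  constructor
  · intro hp
    have hb := ranges_bound hp
    rw [ht] at hb
    exact mem_fam.mp (h ▸ mem_fam.mpr hp : (⟨(i, p), hb.2.1, by change p.2 ≤ S.n i; omega⟩ : S.V) ∈ fam t' ht')
  · intro hp
    have hb := ranges_bound hp
    rw [ht'] at hb
    exact mem_fam.mp (h.symm ▸ mem_fam.mpr hp : (⟨(i, p), hb.2.1, by change p.2 ≤ S.n i; omega⟩ : S.V) ∈ fam t ht)

theorem exists_fam (s : Finset S.V) (hs : ∀ v ∈ s, ∀ w ∈ s, ¬ CrossV v w) :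
    ∃ (t : S.ι → BinaryTree Unit) (ht : ∀ i, (t i).numNodes = S.n i), s ⊆ fam t ht := by
  choose t ht h using fun i : S.ι => exists_tree (S.n i) 0 (fun p => ∃ v ∈ s, v.1 = (i, p))
    (by
      rintro p ⟨v, _, hv⟩
      have := v.2
      rw [hv] at this
      simp only at this
      omega)
    (by
      rintro p q ⟨v, hv, hv'⟩ ⟨w, hw, hw'⟩ hc
      refine hs v hv w hw ⟨by rw [hv', hw'], by rw [hv', hw']; exact hc⟩)
  refine ⟨t, ht, fun v hv => mem_fam.mpr (h _ _ ⟨v, hv, rfl⟩)⟩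

theorem inAdd_TT {s : Finset S.V} {v : S.V} (h : v ∈ s) : InAdd A (TT s) (XV v) := by
  classical
  exact inAdd_retract inAdd_self (LinearMap.single A (fun v : s => XV v.1) ⟨v, h⟩)
    (LinearMap.proj (φ := fun v : s => XV v.1) ⟨v, h⟩)
    (LinearMap.proj_comp_single_same _ _ _)

theorem cores_fam (t : S.ι → BinaryTree Unit) (ht : ∀ i, (t i).numNodes = S.n i) {B : Type}
    [AddCommGroup B] [Module A B] {α : Type} [Fintype α] (σ : α → S.ι) (κ : α → ℕ)
    (hκ : ∀ a, κ a < S.n (σ a)) (e : B ≃ₗ[A] ∀ a, S.F (σ a) (κ a)) :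
    Cores A (TT (fam t ht)) B := by
  refine cores_equiv e (cores_pi _ fun a => ?_)
  obtain ⟨u⟩ := F_equiv_X (σ a) (κ a)
  refine cores_equiv u ?_
  have hm : ∀ p ∈ ranges (t (σ a)) 0, ∃ v ∈ fam t ht, v.1 = (σ a, p) := by
    intro p hp
    have hb := ranges_bound hp
    rw [ht] at hb
    exact ⟨⟨(σ a, p), hb.2.1, by change p.2 ≤ S.n (σ a); omega⟩, mem_fam.mpr hp, rfl⟩
  have := cores_tree (A := A) (T := TT (fam t ht)) (i := σ a) (t (σ a)) 0 (by
    intro p hp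
    obtain ⟨⟨_, h⟩, hv, rfl⟩ := hm p hp
    exact inAdd_TT hv) (by
    intro p hp
    obtain ⟨⟨_, h⟩, hv, rfl⟩ := hm p hp
    exact ext_TT_XV fun w hw => fam_not_cross t ht _ hw _ hv) (κ a) (Nat.zero_le _)
    (by rw [ht]; have := hκ a; omega)
  rw [ht, Nat.zero_add] at this
  exact this

end Sys
end Har

namespace Har
open LinearMap

section General
variable {A : Type} [Ring A]

theorem local_of_indec [IsArtinianRing A] {M : Type} [AddCommGroup M] [Module A M] [Module.Finite A M]
    [Module.Projective A M] (hM : IsIndecomposableMod A M) (N N' : Submodule A M)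
    (h : N ⊔ N' = ⊤) : N = ⊤ ∨ N' = ⊤ := by
  have hs : Function.Surjective (N.subtype.coprod N'.subtype) := by
    rw [← LinearMap.range_eq_top, LinearMap.range_coprod]
    simpa using h
  obtain ⟨u, hu⟩ := Module.projective_lifting_property _ (LinearMap.id : M →ₗ[A] M) hs
  let f : Module.End A M := N.subtype ∘ₗ LinearMap.fst A N N' ∘ₗ u
  have hf : ∀ x, f x ∈ N := fun x => (u x).1.2
  have hg : ∀ x, (1 - f) x ∈ N' := by
    intro x
    have h1 : ((u x).1 : M) + ((u x).2 : M) = x := LinearMap.congr_fun hu x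
    have h2 : (1 - f) x = ((u x).2 : M) := by
      change x - ((u x).1 : M) = _
      rw [sub_eq_iff_eq_add, add_comm]; exact h1.symm
    rw [h2]; exact (u x).2.2
  obtain ⟨n, hn⟩ := (LinearMap.eventually_isCompl_ker_pow_range_pow f).and
    (Filter.eventually_ge_atTop 1) |>.exists
  rcases hM.2 _ _ hn.1 with h1 | h1
  · left
    have hinj : Function.Injective f := by
      intro x y hxy
      have : Function.Injective (f ^ n) := LinearMap.ker_eq_bot.mp h1
      apply this
      obtain ⟨m, rfl⟩ : ∃ m, n = m + 1 := ⟨n - 1, by omega⟩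
      rw [pow_succ]
      change (f ^ m) (f x) = (f ^ m) (f y)
      rw [hxy]
    rw [eq_top_iff]
    intro x _
    obtain ⟨y, rfl⟩ := IsArtinian.surjective_of_injective_endomorphism f hinj x
    exact hf y
  · right
    have hnil : IsNilpotent f := ⟨n, LinearMap.range_eq_bot.mp h1⟩
    obtain ⟨v, hv⟩ := hnil.isUnit_one_sub
    rw [eq_top_iff]
    intro x _
    have : (1 - f) ((↑(v⁻¹) : Module.End A M) x) = x := by
      rw [← hv]
      change ((v : Module.End A M) * (↑(v⁻¹) : Module.End A M)) x = x
      rw [Units.mul_inv]; rfl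
    rw [← this]; exact hg _

/-- the Jacobson radical -/
def jac (A M : Type) [Ring A] [AddCommGroup M] [Module A M] : Submodule A M :=
  sInf {P : Submodule A M | IsCoatom P}

theorem jac_map_le {M M' : Type} [AddCommGroup M] [Module A M] [AddCommGroup M'] [Module A M']
    (e : M ≃ₗ[A] M') : (jac A M).map e.toLinearMap ≤ jac A M' := by
  refine le_sInf fun P hP => ?_
  rw [Submodule.map_le_iff_le_comap]
  refine sInf_le ?_
  have := ((Submodule.orderIsoMapComap e).symm.isCoatom_iff P).mpr hP
  exact this

theorem radSub_equiv {M M' : Type} [AddCommGroup M] [Module A M] [AddCommGroup M'] [Module A M']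
    {N : Submodule A M} {N' : Submodule A M'} (e : N ≃ₗ[A] N') :
    Nonempty (radSub N ≃ₗ[A] radSub N') := by
  have h1 : (jac A N).map e.toLinearMap = jac A N' := by
    refine le_antisymm (jac_map_le e) fun x hx => ?_
    have := jac_map_le e.symm (Submodule.mem_map_of_mem hx)
    exact ⟨e.symm x, this, e.apply_symm_apply x⟩
  exact ⟨((jac A N).equivMapOfInjective N.subtype Subtype.val_injective).symm.trans
    ((e.submoduleMap (jac A N)).trans ((LinearEquiv.ofEq _ _ h1).trans
      ((jac A N').equivMapOfInjective N'.subtype Subtype.val_injective)))⟩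

theorem radSub_le {M : Type} [AddCommGroup M] [Module A M] (N : Submodule A M) : radSub N ≤ N := by
  rintro _ ⟨x, -, rfl⟩
  exact x.2

theorem radSub_local [IsArtinianRing A] {M : Type} [AddCommGroup M] [Module A M]
    (N : Submodule A M) [Module.Finite A N] [Module.Projective A N] (hN : IsIndecomposableMod A N) :
    ¬ N ≤ radSub N ∧ ∀ N' ≤ N, N' = N ∨ N' ≤ radSub N := by
  have := hN.1
  constructor
  · intro h
    obtain ⟨C, hC⟩ := IsCoatomic.exists_coatom (Submodule A N)
    apply hC.1
    rw [eq_top_iff]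
    intro x _
    obtain ⟨y, hy, hyx⟩ := h x.2
    obtain rfl : y = x := Subtype.ext hyx
    exact (Submodule.mem_sInf.mp hy) C hC
  · intro N' hN'
    by_cases h : N'.submoduleOf N = ⊤
    · left
      refine le_antisymm hN' fun x hx => ?_
      have : (⟨x, hx⟩ : N) ∈ N'.submoduleOf N := by rw [h]; trivial
      exact this
    · right
      intro x hx
      refine ⟨⟨x, hN' hx⟩, ?_, rfl⟩
      refine Submodule.mem_sInf.mpr fun C hC => ?_
      have hle : N'.submoduleOf N ≤ C := by
        by_contra hle
        rcases local_of_indec hN _ C (hC.2 _ (right_lt_sup.mpr hle)) with h1 | h1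
        · exact h h1
        · exact hC.1 h1
      exact hle hx

end General

section Concrete
variable {R : Type} [Ring R]
open MulOpposite

instance finReg : Module.Finite Rᵐᵒᵖ R :=
  Module.Finite.equiv (MulOpposite.opLinearEquiv (M := R) Rᵐᵒᵖ).symm

instance projReg : Module.Projective Rᵐᵒᵖ R :=
  Module.Projective.of_equiv (MulOpposite.opLinearEquiv (M := R) Rᵐᵒᵖ).symm

theorem mem_rightIdeal {e x : R} (he : IsIdempotentElem e) : x ∈ rightIdeal R e ↔ e * x = x := by
  rw [rightIdeal, Submodule.mem_span_singleton]
  constructor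
  · rintro ⟨a, rfl⟩
    obtain ⟨a, rfl⟩ := op_surjective a
    rw [op_smul_eq_mul, ← mul_assoc, he.eq]
  · intro h
    exact ⟨op x, by rw [op_smul_eq_mul, h]⟩

/-- projection to a right ideal -/
def toIdeal (e : R) : R →ₗ[Rᵐᵒᵖ] rightIdeal R e :=
  (LinearMap.mulLeft Rᵐᵒᵖ e).codRestrict _ fun x => by
    rw [rightIdeal, Submodule.mem_span_singleton]
    exact ⟨op x, by rw [op_smul_eq_mul]; rfl⟩

theorem toIdeal_coe (e x : R) : (toIdeal e x : R) = e * x := rfl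

theorem proj_rightIdeal {e : R} (he : IsIdempotentElem e) :
    Module.Projective Rᵐᵒᵖ (rightIdeal R e) :=
  Module.Projective.of_split (rightIdeal R e).subtype (toIdeal e)
    (LinearMap.ext fun x => Subtype.ext ((mem_rightIdeal he).mp x.2))

instance fin_rightIdeal (e : R) : Module.Finite Rᵐᵒᵖ (rightIdeal R e) :=
  Module.Finite.span_of_finite Rᵐᵒᵖ (Set.finite_singleton e)

variable (H : HaradaData R)

theorem e_mem (p : Σ i : Fin H.m, Fin (H.n i)) : H.e p.1 p.2 ∈ rightIdeal R (H.e p.1 p.2) :=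
  Submodule.subset_span rfl

/-- the map from the regular module to the product -/
def regMap :
    R →ₗ[Rᵐᵒᵖ] ∀ p : Σ i : Fin H.m, Fin (H.n i), rightIdeal R (H.e p.1 p.2) where
  toFun x p := toIdeal (H.e p.1 p.2) x
  map_add' x y := funext fun p => (toIdeal (H.e p.1 p.2)).map_add x y
  map_smul' a x := funext fun p => (toIdeal (H.e p.1 p.2)).map_smul a x

/-- the regular module as a product -/
noncomputable def regEquiv :
    R ≃ₗ[Rᵐᵒᵖ] ∀ p : Σ i : Fin H.m, Fin (H.n i), rightIdeal R (H.e p.1 p.2) :=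
  LinearEquiv.ofBijective (regMap H) (by
    constructor
    · intro x y hxy
      have h : ∀ p : Σ i : Fin H.m, Fin (H.n i), H.e p.1 p.2 * x = H.e p.1 p.2 * y :=
        fun p => congrArg Subtype.val (congrFun hxy p)
      rw [← one_mul x, ← one_mul y, ← H.sum_eq_one, Finset.sum_mul, Finset.sum_mul]
      exact Finset.sum_congr rfl fun p _ => h p
    · intro x
      refine ⟨∑ p, (x p : R), funext fun p => Subtype.ext ?_⟩
      change H.e p.1 p.2 * (∑ p, (x p : R)) = x p
      rw [Finset.mul_sum, Finset.sum_eq_single p]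
      · exact (mem_rightIdeal (H.idem _ _)).mp (x p).2
      · intro q _ hq
        rw [← (mem_rightIdeal (H.idem _ _)).mp (x q).2, ← mul_assoc, H.orth p q hq.symm, zero_mul]
      · simp)

/-- the injective projective modules -/
abbrev EE (i : Fin H.m) : Type := rightIdeal R (H.e i ⟨0, H.hn i⟩)

/-- radical filtration, truncated. -/
def GG (i : Fin H.m) (j : ℕ) : Submodule Rᵐᵒᵖ (EE H i) := radSub^[min j (H.n i)] ⊤

theorem GG_zero (i : Fin H.m) : GG H i 0 = ⊤ := by simp [GG]

theorem GG_succ (i : Fin H.m) {j : ℕ} (hj : j < H.n i) : GG H i (j + 1) = radSub (GG H i j) := by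
  rw [GG, GG, min_eq_left hj, min_eq_left hj.le, Function.iterate_succ_apply']

theorem GG_equiv (i : Fin H.m) (j : ℕ) : ∀ hj : j < H.n i,
    Nonempty (GG H i j ≃ₗ[Rᵐᵒᵖ] rightIdeal R (H.e i ⟨j, hj⟩)) := by
  induction j with
  | zero => intro hj; rw [GG_zero]; exact ⟨Submodule.topEquiv⟩
  | succ j ih =>
    intro hj
    obtain ⟨u⟩ := ih (by omega)
    obtain ⟨v⟩ := H.rad_iso i ⟨j + 1, hj⟩ (by simp)
    rw [GG_succ H i (by omega)]
    obtain ⟨w⟩ := radSub_equiv u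
    exact ⟨w.trans v.symm⟩

theorem GG_anti (i : Fin H.m) : Antitone (GG H i) := by
  refine antitone_nat_of_succ_le fun j => ?_
  by_cases hj : j < H.n i
  · rw [GG_succ H i hj]; exact radSub_le _
  · rw [GG, GG, min_eq_right (by omega), min_eq_right (by omega)]

theorem GG_proj (i : Fin H.m) (j : ℕ) (hj : j < H.n i) : Module.Projective Rᵐᵒᵖ (GG H i j) := by
  obtain ⟨u⟩ := GG_equiv H i j hj
  have := proj_rightIdeal (H.idem i ⟨j, hj⟩)
  exact Module.Projective.of_equiv u.symm

theorem GG_local [IsArtinianRing Rᵐᵒᵖ] (i : Fin H.m) (j : ℕ) (hj : j < H.n i) :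
    ¬ GG H i j ≤ GG H i (j + 1) ∧ ∀ N ≤ GG H i j, N = GG H i j ∨ N ≤ GG H i (j + 1) := by
  obtain ⟨u⟩ := GG_equiv H i j hj
  have := GG_proj H i j hj
  rw [GG_succ H i hj]
  exact radSub_local _ (indec_equiv u.symm (H.indec _ _))

theorem GG_dich [IsArtinianRing Rᵐᵒᵖ] (i k : Fin H.m) (f : EE H i →ₗ[Rᵐᵒᵖ] EE H k) :
    LinearMap.range f ≤ GG H k (H.n k) ∨ (i = k ∧ Function.Bijective f ∧
      ∀ j, (GG H i j).map f = GG H k j) := by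
  classical
  by_cases hr : LinearMap.range f ≤ GG H k (H.n k)
  · exact Or.inl hr
  right
  obtain ⟨j, hj, hmin⟩ := Sys.exists_min_nat
    (P := fun j => ¬ LinearMap.range f ≤ GG H k j) ⟨_, hr⟩
  have hj0 : j ≠ 0 := by
    rintro rfl
    apply hj
    rw [GG_zero]; exact le_top
  obtain ⟨j, rfl⟩ : ∃ j', j = j' + 1 := ⟨j - 1, by omega⟩
  have hjn : j < H.n k := hmin _ hr
  have hle : LinearMap.range f ≤ GG H k j := by
    by_contra h
    have := hmin _ h
    omega
  have heq : LinearMap.range f = GG H k j := ((GG_local H k j hjn).2 _ hle).resolve_right hj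
  have := GG_proj H k j hjn
  let f' : EE H i →ₗ[Rᵐᵒᵖ] GG H k j := f.codRestrict _ fun x => hle ⟨x, rfl⟩
  have hf' : Function.Surjective f' := by
    intro y
    have : (y : EE H k) ∈ LinearMap.range f := by rw [heq]; exact y.2
    obtain ⟨x, hx⟩ := this
    exact ⟨x, Subtype.ext hx⟩
  obtain ⟨s, hs⟩ := Module.projective_lifting_property f' LinearMap.id hf'
  obtain ⟨u⟩ := GG_equiv H k j hjn
  have : Nontrivial (GG H k j) := (indec_equiv u.symm (H.indec _ _)).1
  obtain ⟨w⟩ := equiv_of_retract (A := Rᵐᵒᵖ) (M := EE H i) (X := GG H k j)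
    (H.indec i ⟨0, H.hn i⟩) s f' (by
    rw [hs]; exact Function.bijective_id)
  have hpq : (⟨k, ⟨j, hjn⟩⟩ : Σ i : Fin H.m, Fin (H.n i)) = ⟨i, ⟨0, H.hn i⟩⟩ := by
    by_contra hne
    exact (H.basic _ _ hne).false (u.symm.trans w)
  obtain rfl : k = i := congrArg Sigma.fst hpq
  obtain rfl : j = 0 := by
    have := eq_of_heq (Sigma.mk.inj hpq).2
    exact congrArg Fin.val this
  have hsurj : Function.Surjective f := by
    rw [← LinearMap.range_eq_top, heq, GG_zero]
  have hbij : Function.Bijective f :=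
    ⟨IsNoetherian.injective_of_surjective_endomorphism f hsurj, hsurj⟩
  refine ⟨rfl, hbij, ?_⟩
  let ε := LinearEquiv.ofBijective f hbij
  have key : ∀ j, j ≤ H.n k → (GG H k j).map f = GG H k j := by
    intro j
    induction j with
    | zero => intro _; rw [GG_zero, Submodule.map_top, LinearMap.range_eq_top.mpr hsurj]
    | succ j ih =>
      intro hj
      have ih := ih (by omega)
      obtain ⟨h1, h2⟩ := GG_local H k j (by omega)
      have hanti := GG_anti H k (Nat.le_succ j)
      have hcomap : (GG H k j).comap f = GG H k j := by
        conv_lhs => rw [← ih]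
        exact Submodule.comap_map_eq_of_injective hbij.1 _
      apply le_antisymm
      · rcases h2 ((GG H k (j + 1)).map f) (by
          conv_rhs => rw [← ih]
          exact Submodule.map_mono hanti) with h | h
        · exfalso
          apply h1
          conv_lhs at h => skip
          rw [← ih] at h
          exact (Submodule.map_injective_of_injective hbij.1 h).ge
        · exact h
      · rcases h2 ((GG H k (j + 1)).comap f) (by
          conv_rhs => rw [← hcomap]
          exact Submodule.comap_mono hanti) with h | h
        · exfalso
          apply h1
          have h3 := Submodule.map_comap_eq_of_surjective hsurj (GG H k (j + 1))
          rw [h, ih] at h3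
          exact h3.le
        · have := Submodule.map_mono (f := f) h
          rwa [Submodule.map_comap_eq_of_surjective hsurj] at this
  intro j
  by_cases hj : j ≤ H.n k
  · exact key j hj
  · have : GG H k j = GG H k (H.n k) := by
      rw [GG, GG, min_eq_right (by omega), min_self]
    rw [this]; exact key _ le_rfl

theorem GG_gen (M : Type) [AddCommGroup M] [Module Rᵐᵒᵖ M] (N : Submodule Rᵐᵒᵖ M)
    (h : ∀ i j, j < H.n i → ∀ f : GG H i j →ₗ[Rᵐᵒᵖ] M, LinearMap.range f ≤ N) : N = ⊤ := by
  rw [eq_top_iff]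
  intro m _
  let φ : R →ₗ[Rᵐᵒᵖ] M := LinearMap.toSpanSingleton Rᵐᵒᵖ M m ∘ₗ
    (MulOpposite.opLinearEquiv (M := R) Rᵐᵒᵖ).toLinearMap
  have h1 : φ 1 = m := by
    change op (1 : R) • m = m
    simp
  rw [← h1, ← H.sum_eq_one, map_sum]
  refine Submodule.sum_mem _ fun p _ => ?_
  obtain ⟨u⟩ := GG_equiv H p.1 p.2.1 p.2.2
  refine h p.1 p.2.1 p.2.2 (φ ∘ₗ (rightIdeal R (H.e p.1 p.2)).subtype ∘ₗ u.toLinearMap) ?_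
  refine ⟨u.symm ⟨_, e_mem H p⟩, ?_⟩
  change φ (u (u.symm ⟨_, e_mem H p⟩)) = _
  rw [u.apply_symm_apply]

/-- the abstract system attached to a left Harada algebra -/
def sys [IsArtinianRing Rᵐᵒᵖ] : Sys Rᵐᵒᵖ where
  ι := Fin H.m
  n := H.n
  npos := H.hn
  E := EE H
  G := GG H
  G0 := GG_zero H
  anti := GG_anti H
  ne i j hj := (GG_local H i j hj).1
  loc i j hj := (GG_local H i j hj).2
  proj := GG_proj H
  finE _ := inferInstance
  inj := H.inj
  dich := GG_dich H
  gen := GG_gen H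

theorem reg_cores_equiv [IsArtinianRing Rᵐᵒᵖ] :
    Nonempty (R ≃ₗ[Rᵐᵒᵖ] ∀ p : Σ i : Fin H.m, Fin (H.n i), (sys H).F p.1 p.2.1) := by
  refine ⟨(regEquiv H).trans (LinearEquiv.piCongrRight fun p => ?_)⟩
  exact (GG_equiv H p.1 p.2.1 p.2.2).some.symm.trans
    (LinearEquiv.ofEq _ _ (Sys.F_lt (S := sys H) p.2.2).symm)

end Concrete
end Har

namespace Har
open LinearMap

section Final
variable {R : Type} [Ring R]

theorem reg_gen (Y : Type) [AddCommGroup Y] [Module Rᵐᵒᵖ Y] (y : Y) :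
    ∃ u : R →ₗ[Rᵐᵒᵖ] Y, y ∈ LinearMap.range u := by
  refine ⟨LinearMap.toSpanSingleton Rᵐᵒᵖ Y y ∘ₗ
    (MulOpposite.opLinearEquiv (M := R) Rᵐᵒᵖ).toLinearMap, 1, ?_⟩
  change MulOpposite.op (1 : R) • y = y
  simp

theorem sys_tilting (H : HaradaData R) [IsArtinianRing Rᵐᵒᵖ]
    (t : Fin H.m → BinaryTree Unit) (ht : ∀ i, (t i).numNodes = H.n i) :
    IsTiltingRight R (Sys.TT (S := sys H) (Sys.fam (S := sys H) t ht)) := by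
  obtain ⟨e⟩ := reg_cores_equiv H
  refine ⟨inferInstance, Sys.pd_TT _, Sys.ext_TT_TT (Sys.fam_not_cross (S := sys H) t ht), ?_⟩
  exact Sys.cores_fam (S := sys H) t ht (B := R) (α := Σ i : Fin H.m, Fin (H.n i))
    Sigma.fst (fun p => p.2.1) (fun p => p.2.2) e

theorem sys_exists (H : HaradaData R) [IsArtinianRing Rᵐᵒᵖ] (T : Type) [AddCommGroup T]
    [Module Rᵐᵒᵖ T] (hT : IsTiltingRight R T) (hb : IsBasicMod Rᵐᵒᵖ T) :
    ∃ (t : Fin H.m → BinaryTree Unit) (ht : ∀ i, (t i).numNodes = H.n i),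
      Nonempty (Sys.TT (S := sys H) (Sys.fam (S := sys H) t ht) ≃ₗ[Rᵐᵒᵖ] T) := by
  obtain ⟨hfin, hpd, hext, hc⟩ := hT
  obtain ⟨s, ⟨e⟩⟩ := Sys.exists_TT (S := sys H) T hpd hb
  have h1 : Ext1Zero Rᵐᵒᵖ (Sys.TT s) T := ext_retract hext e.symm.toLinearMap e.toLinearMap
    (LinearMap.ext fun x => e.apply_symm_apply x)
  have h2 : Ext1Zero Rᵐᵒᵖ (Sys.TT s) (Sys.TT s) := ext_retract_right h1 e.symm.toLinearMap
    e.toLinearMap (LinearMap.ext fun x => e.apply_symm_apply x)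
  have h3 : Cores Rᵐᵒᵖ (Sys.TT s) R := cores_congr e hc
  obtain ⟨t, ht, hst⟩ := Sys.exists_fam s (Sys.not_cross_of_ext_TT h2)
  have hnc := Sys.fam_not_cross (S := sys H) t ht
  have hs : s = Sys.fam (S := sys H) t ht := by
    refine Finset.Subset.antisymm hst fun v hv => ?_
    exact Sys.mem_of_tilting reg_gen h2 h3 v (fun w hw => hnc v hv w (hst hw))
      (fun w hw => hnc w (hst hw) v hv)
  subst hs
  exact ⟨t, ht, ⟨e.symm⟩⟩

theorem catalan_form (n : ℕ) :
    (BinaryTree.treesOfNumNodesEq n).card = (2 * n).choose n / (n + 1) := by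
  rw [BinaryTree.treesOfNumNodesEq_card_eq_catalan, catalan_eq_centralBinom_div,
    Nat.centralBinom_eq_two_mul_choose]

theorem main (H : HaradaData R) [IsArtinianRing Rᵐᵒᵖ] :
    Finite (Quotient (isoSetoid Rᵐᵒᵖ
        fun M => IsTiltingRight R ↥M ∧ IsBasicMod Rᵐᵒᵖ ↥M)) ∧
    Nat.card (Quotient (isoSetoid Rᵐᵒᵖ
        fun M => IsTiltingRight R ↥M ∧ IsBasicMod Rᵐᵒᵖ ↥M))
      = ∏ i : Fin H.m, (2 * H.n i).choose (H.n i) / (H.n i + 1) := by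
  let D := ∀ i : Fin H.m, {x // x ∈ BinaryTree.treesOfNumNodesEq (H.n i)}
  have hD : ∀ (d : D) (i : Fin H.m), (d i).1.numNodes = H.n i := fun d i =>
    BinaryTree.mem_treesOfNumNodesEq.mp (d i).2
  let Φ : D → Quotient (isoSetoid Rᵐᵒᵖ
        fun M => IsTiltingRight R ↥M ∧ IsBasicMod Rᵐᵒᵖ ↥M) := fun d =>
    Quotient.mk _ ⟨ModuleCat.of Rᵐᵒᵖ (Sys.TT (S := sys H)
      (Sys.fam (S := sys H) (fun i => (d i).1) (hD d))),
      sys_tilting H (fun i => (d i).1) (hD d), Sys.basic_TT _⟩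
  have hinj : Function.Injective Φ := by
    intro d d' h
    obtain ⟨e⟩ := Quotient.exact h
    have h1 := Sys.fam_inj (Sys.TT_eq (S := sys H) e)
    funext i
    exact Subtype.ext (congrFun h1 i)
  have hsurj : Function.Surjective Φ := by
    intro q
    induction q using Quotient.inductionOn with
    | h M =>
      obtain ⟨M, hM, hb⟩ := M
      obtain ⟨t, ht, ⟨e⟩⟩ := sys_exists H M hM hb
      exact ⟨fun i => ⟨t i, BinaryTree.mem_treesOfNumNodesEq.mpr (ht i)⟩, Quotient.sound ⟨e⟩⟩
  refine ⟨Finite.of_surjective Φ hsurj, ?_⟩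
  rw [← Nat.card_congr (Equiv.ofBijective Φ ⟨hinj, hsurj⟩), Nat.card_pi]
  refine Finset.prod_congr rfl fun i _ => ?_
  rw [Nat.card_eq_fintype_card, Fintype.card_coe, catalan_form]

end Final
end Har

/-- Corollary 1.5.  The number of isomorphism classes of basic tilting right
modules over a basic left Harada algebra is finite and equals
`∏_{i=1}^m (1/(n_i+1))·binom(2 n_i, n_i)`, the product of Catalan numbers. -/
theorem statement1 (K R : Type) [Field K] [IsAlgClosed K] [Ring R] [Algebra K R]
    [FiniteDimensional K R] (H : HaradaData R) :
    Finite (Quotient (isoSetoid Rᵐᵒᵖ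
        fun M => IsTiltingRight R ↥M ∧ IsBasicMod Rᵐᵒᵖ ↥M)) ∧
    Nat.card (Quotient (isoSetoid Rᵐᵒᵖ
        fun M => IsTiltingRight R ↥M ∧ IsBasicMod Rᵐᵒᵖ ↥M))
      = ∏ i : Fin H.m, (2 * H.n i).choose (H.n i) / (H.n i + 1) := by
  have : IsArtinianRing Rᵐᵒᵖ := IsArtinianRing.of_finite K _
  exact Har.main H
end

section
/- Let R be a basic left Harada algebra with modules P_{ij} := rad^{j-1}(e_{i1}R) as below. If a submodule N of P_{i1} is not contained in rad(P_{i n_i}), then N = P_{ij} for some 1 ≤ j ≤ n_i. -/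
/-!
Common setup.  `K` is an algebraically closed field and `R` a finite-dimensional associative
unital `K`-algebra.  Right `R`-modules are formalized as modules over the opposite ring `Rᵐᵒᵖ`
(so that `MulOpposite.op r • x = x * r`).
-/

open MulOpposite

variable {R : Type} [Ring R]

/-- A projective indecomposable module of finite length is local. -/
theorem le_jacobson_of_ne_top {A L : Type} [Ring A] [AddCommGroup L] [Module A L]
    [IsNoetherian A L] [IsArtinian A L] [Module.Projective A L]
    (hL : IsIndecomposableMod A L) (N : Submodule A L) (hN : N ≠ ⊤) :
    N ≤ Module.jacobson A L := by
  refine le_sInf fun M (hM : IsCoatom M) => ?_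
  by_contra hle
  have hsup : M ⊔ N = ⊤ := hM.2 _ (by
    refine lt_of_le_of_ne le_sup_left fun h => hle ?_
    rw [h]; exact le_sup_right)
  have hsurj : Function.Surjective (M.mkQ.comp N.subtype) := by
    intro q
    obtain ⟨x, rfl⟩ := M.mkQ_surjective q
    have hx : x ∈ M ⊔ N := by rw [hsup]; trivial
    obtain ⟨a, ha, b, hb, rfl⟩ := Submodule.mem_sup.1 hx
    refine ⟨⟨b, hb⟩, ?_⟩
    simp [ha]
  obtain ⟨g, hg⟩ := Module.projective_lifting_property (M.mkQ.comp N.subtype) M.mkQ hsurj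
  let f : Module.End A L := N.subtype.comp g
  have hf : ∀ x, f x - x ∈ M := by
    intro x
    have := LinearMap.congr_fun hg x
    exact (Submodule.Quotient.eq M).1 this
  have hfk : ∀ (k : ℕ) x, (f ^ k) x - x ∈ M := by
    intro k
    induction k with
    | zero => intro x; simp
    | succ k ih =>
      intro x
      have h1 := hf ((f ^ k) x)
      have h2 := M.add_mem h1 (ih x)
      rw [pow_succ', Module.End.mul_apply]
      simpa using h2
  obtain ⟨k, hk⟩ := (f.eventually_isCompl_ker_pow_range_pow.and
    (Filter.eventually_ge_atTop 1)).exists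
  obtain ⟨hk, hk1⟩ := hk
  rcases hL.2 _ _ hk with h | h
  · rw [h] at hk
    have htop : LinearMap.range (f ^ k) = ⊤ := by
      simpa using hk.sup_eq_top
    apply hN
    rw [eq_top_iff, ← htop]
    rintro _ ⟨x, rfl⟩
    obtain ⟨k, rfl⟩ := Nat.exists_eq_add_of_le' hk1
    rw [pow_succ', Module.End.mul_apply]
    exact (g _).2
  · rw [LinearMap.range_eq_bot] at h
    apply hM.1
    rw [eq_top_iff]
    intro x _
    have := hfk k x
    rw [h] at this
    simpa using this

theorem radSub_eq {A M : Type} [Ring A] [AddCommGroup M] [Module A M] (N : Submodule A M) :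
    radSub N = Submodule.map N.subtype (Module.jacobson A N) := rfl

theorem radSub_equiv_s2 {A M : Type} [Ring A] [AddCommGroup M] [Module A M]
    {N N' : Submodule A M} (h : Nonempty (N ≃ₗ[A] N')) :
    Nonempty (radSub N ≃ₗ[A] radSub N') := by
  obtain ⟨φ⟩ := h
  have h1 : Submodule.map φ.toLinearMap (Module.jacobson A N) = Module.jacobson A N' :=
    Module.map_jacobson_of_bijective φ.bijective
  exact ⟨(Submodule.equivMapOfInjective N.subtype N.injective_subtype _).symm.trans
    ((φ.submoduleMap (Module.jacobson A N)).trans ((LinearEquiv.ofEq _ _ h1).trans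
    (Submodule.equivMapOfInjective N'.subtype N'.injective_subtype _)))⟩

theorem projective_rightIdeal (R : Type) [Ring R] (e : R) (he : IsIdempotentElem e) :
    Module.Projective Rᵐᵒᵖ (rightIdeal R e) := by
  have hfree : Module.Projective Rᵐᵒᵖ R :=
    Module.Projective.of_equiv
      ({ MulOpposite.opAddEquiv.symm with
         map_smul' := fun a b => by simp } : Rᵐᵒᵖ ≃ₗ[Rᵐᵒᵖ] R)
  let s : R →ₗ[Rᵐᵒᵖ] rightIdeal R e :=
    { toFun := fun x => ⟨e * x, Submodule.mem_span_singleton.2 ⟨op x, rfl⟩⟩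
      map_add' := fun x y => Subtype.ext (mul_add e x y)
      map_smul' := fun a x => Subtype.ext (by simp [mul_assoc]) }
  refine Module.Projective.of_split (rightIdeal R e).subtype s ?_
  ext ⟨x, hx⟩
  obtain ⟨a, rfl⟩ := Submodule.mem_span_singleton.1 hx
  show e * (e * a.unop) = e * a.unop
  rw [← mul_assoc, he.eq]

theorem HaradaData.P_equiv_s2 (H : HaradaData R) (i : Fin H.m) :
    ∀ (j : ℕ) (hj : j < H.n i),
      Nonempty (↥(H.P i ⟨j, hj⟩) ≃ₗ[Rᵐᵒᵖ] ↥(rightIdeal R (H.e i ⟨j, hj⟩))) := by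
  intro j
  induction j with
  | zero => intro hj; exact ⟨LinearEquiv.refl _ _⟩
  | succ j ih =>
    intro hj
    obtain ⟨φ⟩ := radSub_equiv_s2 (ih (by omega))
    obtain ⟨ψ⟩ := H.rad_iso i ⟨j + 1, hj⟩ (Nat.succ_pos j)
    have h : H.P i ⟨j + 1, hj⟩ = radSub (H.P i ⟨j, by omega⟩) :=
      Function.iterate_succ_apply' _ _ _
    exact ⟨(LinearEquiv.ofEq _ _ h).trans (φ.trans ψ.symm)⟩

theorem HaradaData.eq_or_le (K R : Type) [Field K] [Ring R] [Algebra K R]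
    [FiniteDimensional K R] (H : HaradaData R) (i : Fin H.m) (j : Fin (H.n i))
    (N : Submodule Rᵐᵒᵖ R) (hN : N ≤ H.P i j) :
    N = H.P i j ∨ N ≤ radSub (H.P i j) := by
  haveI : IsNoetherian Rᵐᵒᵖ R := isNoetherian_of_tower K inferInstance
  haveI : IsArtinian Rᵐᵒᵖ R := isArtinian_of_tower K inferInstance
  haveI := projective_rightIdeal R (H.e i j) (H.idem i j)
  obtain ⟨φ⟩ := H.P_equiv_s2 i j.1 j.2
  let N1 : Submodule Rᵐᵒᵖ (H.P i j) := N.comap (H.P i j).subtype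
  have hmap : N1.map (H.P i j).subtype = N := by
    rw [Submodule.map_comap_subtype, inf_eq_right.2 hN]
  by_cases h : N1 = ⊤
  · left
    rw [← hmap, h, Submodule.map_top, Submodule.range_subtype]
  · right
    have h2 := le_jacobson_of_ne_top (H.indec i j) (N1.map φ.toLinearMap) (by
      intro h3
      apply h
      apply Submodule.map_injective_of_injective (f := φ.toLinearMap) φ.injective
      rw [h3, Submodule.map_top, LinearEquiv.range])
    have h1 : Submodule.map φ.toLinearMap (Module.jacobson Rᵐᵒᵖ (H.P i j)) = 
      Module.jacobson Rᵐᵒᵖ _ := Module.map_jacobson_of_bijective φ.bijective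
    rw [← h1, Submodule.map_le_map_iff_of_injective φ.injective] at h2
    rw [← hmap, radSub_eq]
    exact Submodule.map_mono h2

/-- Lemma 2.1 of the paper.  If a submodule of `P_{i1}` is not contained in
`rad(P_{i n_i})`, then it is `P_{ij}` for some `1 ≤ j ≤ n_i`. -/
theorem statement2 (K R : Type) [Field K] [IsAlgClosed K] [Ring R] [Algebra K R]
    [FiniteDimensional K R] (H : HaradaData R) (i : Fin H.m)
    (N : Submodule Rᵐᵒᵖ R) (hN : N ≤ H.P i ⟨0, H.hn i⟩)
    (hrad : ¬ N ≤ radSub (H.P i (H.last i))) :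
    ∃ j : Fin (H.n i), N = H.P i j := by
  by_contra hcon
  push Not at hcon
  have key : ∀ (j : ℕ) (hj : j < H.n i), N ≤ H.P i ⟨j, hj⟩ := by
    intro j
    induction j with
    | zero => intro hj; exact hN
    | succ j ih =>
      intro hj
      have h : H.P i ⟨j + 1, hj⟩ = radSub (H.P i ⟨j, by omega⟩) :=
        Function.iterate_succ_apply' _ _ _
      rw [h]
      exact (H.eq_or_le K R i _ N (ih (by omega))).resolve_left (hcon _)
  exact hrad ((H.eq_or_le K R i _ N (key _ (H.last i).2)).resolve_left (hcon _))
end
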